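/- arXiv:0903.4826 — 6 statements merged into one kernel-verified Lean document; each statement's English description precedes it below -/
import Mathlib

section
/- Let R = 𝔽_2[x]/(x^47 − 1), f_1 = x^23 + x^22 + x^21 + x^20 + x^18 + x^17 + x^16 + x^14 + x^13 + x^11 + x^10 + x^9 + x^5 + x^4 + 1, f_2 = (x^47 − 1)/(x + 1), and g = x^20 + x^19 + x^13 + x^12 + x^11 + x^9 + x^7 + x^4 + x^3 + x^2 + 1, all regarded in R. Let C = {(c_1, c_1·g + c_2) : c_1 ∈ (f_1), c_2 ∈ (f_2)} ⊆ R^2, where (f_i) denotes the ideal of R generated by f_i. Then, under the coefficient identification R^2 ≅ 𝔽_2^{94}, C is an 𝔽_2-linear code of length 94 and dimension 25 in which every nonzero codeword has Hamming weight at least 27. -/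
open Polynomial

/-- `R = F[x]/(x^m - 1)` -/
abbrev Rng (F : Type*) [Field F] (m : ℕ) : Type _ := AdjoinRoot (X ^ m - 1 : F[X])

theorem monicXm {F : Type*} [Field F] {m : ℕ} (hm : m ≠ 0) :
    (X ^ m - 1 : F[X]).Monic := by
  simpa using Polynomial.monic_X_pow_sub_C (1 : F) hm

/-- Hamming weight of an element of `R` under the coefficient identification
`R ≅ F^m`: the number of nonzero coefficients of the canonical representative
of degree `< m`. -/
noncomputable def wt {F : Type*} [Field F] {m : ℕ} (hm : m ≠ 0) (r : Rng F m) : ℕ :=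
  (AdjoinRoot.modByMonicHom (monicXm hm) r).support.card

/-- `R`-Hamming weight of a vector over `R`: the number of nonzero coordinates. -/
noncomputable def rwt {R : Type*} [Zero R] {l : ℕ} (v : Fin l → R) : ℕ :=
  Nat.card {j // v j ≠ 0}

noncomputable def f₁ : Rng (ZMod 2) 47 :=
  AdjoinRoot.mk _ (X ^ 23 + X ^ 22 + X ^ 21 + X ^ 20 + X ^ 18 + X ^ 17 + X ^ 16 +
    X ^ 14 + X ^ 13 + X ^ 11 + X ^ 10 + X ^ 9 + X ^ 5 + X ^ 4 + 1)

noncomputable def f₂ : Rng (ZMod 2) 47 :=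
  AdjoinRoot.mk _ ((X ^ 47 - 1) /ₘ (X + 1))

noncomputable def g : Rng (ZMod 2) 47 :=
  AdjoinRoot.mk _ (X ^ 20 + X ^ 19 + X ^ 13 + X ^ 12 + X ^ 11 + X ^ 9 + X ^ 7 +
    X ^ 4 + X ^ 3 + X ^ 2 + 1)

/-- the 24 rows `x^k f₁`, `x^k f₁ g`, `x^k f₁ h` as bit strings -/
def tab : List (ℕ × ℕ × ℕ) :=
  [(16215601, 9733138319085, 82054833000098),
   (32431202, 19466276638170, 23372177644869),
   (64862404, 38932553276340, 46744355289738),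
   (129724808, 77865106552680, 93488710579476),
   (259449616, 14992724750033, 46239932803625),
   (518899232, 29985449500066, 92479865607250),
   (1037798464, 59970899000132, 44222242859173),
   (2075596928, 119941798000264, 88444485718346),
   (4151193856, 99146107645201, 36151483081365),
   (8302387712, 57554726935075, 72302966162730),
   (16604775424, 115109453870150, 3868443970133),
   (33209550848, 89481419384973, 7736887940266),
   (66419101696, 38225350414619, 15473775880532),
   (132838203392, 76450700829238, 30947551761064),
   (265676406784, 12163913303149, 61895103522128),
   (531352813568, 24327826606298, 123790207044256),
   (1062705627136, 48655653212596, 106842925733185),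
   (2125411254272, 97311306425192, 72948363111043),
   (4250822508544, 53885124495057, 5159237866759),
   (8501645017088, 107770248990114, 10318475733518),
   (17003290034176, 74803009624901, 20636951467036),
   (34006580068352, 8868530894475, 41273902934072),
   (68013160136704, 17737061788950, 82547805868144),
   (136026320273408, 35474123577900, 24358123380961)]

/-- bit `k` of `n`, as a number -/
def bitN (n k : ℕ) : ℕ := Nat.mod (Nat.shiftRight n k) 2

/-- naive popcount of the lowest `k` bits -/
def pcN (n : ℕ) : ℕ → ℕ :=
  Nat.rec 0 (fun k r => Nat.add r (bitN n k))

/-- check on a complete word -/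
def okN (w m : ℕ) : Bool :=
  and (Nat.ble 27 (Nat.add w m)) (Nat.ble m (Nat.add 20 w))

def leafN (n m₁ m₂ cnt : ℕ) : Bool :=
  or (Nat.beq n 0) (and (okN cnt (pcN m₁ 47)) (okN cnt (pcN m₂ 47)))

/-- walk through the remaining `fuel` bits -/
def tailN (n m₁ m₂ : ℕ) : ℕ → ℕ → ℕ → Bool :=
  Nat.rec (fun _ cnt => leafN n m₁ m₂ cnt)
    (fun _ ih k cnt =>
      cond (Nat.ble (Nat.mul 47 (Nat.add cnt (bitN n k))) (Nat.mul 13 (Nat.add k 1)))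
        (ih (Nat.add k 1) (Nat.add cnt (bitN n k))) true)

/-- depth first search over all codewords satisfying the prefix condition -/
def dfsN : List (ℕ × ℕ × ℕ) → ℕ → ℕ → ℕ → ℕ → ℕ → Bool :=
  List.rec (fun k cnt n m₁ m₂ => tailN n m₁ m₂ 23 k cnt)
    (fun t _ ih k cnt n m₁ m₂ =>
      and
        (cond (Nat.ble (Nat.mul 47 (Nat.add cnt (bitN n k))) (Nat.mul 13 (Nat.add k 1)))
          (ih (Nat.add k 1) (Nat.add cnt (bitN n k)) n m₁ m₂) true)
        (cond (Nat.ble (Nat.mul 47 (Nat.add cnt (bitN (Nat.xor n t.1) k)))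
            (Nat.mul 13 (Nat.add k 1)))
          (ih (Nat.add k 1) (Nat.add cnt (bitN (Nat.xor n t.1) k))
            (Nat.xor n t.1) (Nat.xor m₁ t.2.1) (Nat.xor m₂ t.2.2)) true))

/-! ### Bits -/

theorem bitN_eq (n k : ℕ) : bitN n k = (n.testBit k).toNat := by
  rw [Nat.toNat_testBit, ← Nat.shiftRight_eq_div_pow]; rfl

theorem pcN_zero (n : ℕ) : pcN n 0 = 0 := rfl
theorem pcN_succ (n k : ℕ) : pcN n (k + 1) = pcN n k + bitN n k := rfl

theorem pcN_eq_sum (n k : ℕ) : pcN n k = ∑ i ∈ Finset.range k, bitN n i := by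
  induction k with
  | zero => rfl
  | succ k ih => rw [Finset.sum_range_succ, pcN_succ, ih]

/-- rotation of a 47 bit word -/
def rotN (n : ℕ) : ℕ := ((n <<< 1) % 2 ^ 47) ^^^ ((n >>> 46) % 2)

theorem testBit_rotN_zero (n : ℕ) : (rotN n).testBit 0 = n.testBit 46 := by
  have : (n >>> 46 % 2) = (n >>> 46 % 2 ^ 1) := rfl
  rw [rotN, this, Nat.testBit_xor, Nat.testBit_mod_two_pow, Nat.testBit_mod_two_pow]
  simp

theorem testBit_rotN_succ (n i : ℕ) (hi : i < 46) :
    (rotN n).testBit (i + 1) = n.testBit i := by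
  have : (n >>> 46 % 2) = (n >>> 46 % 2 ^ 1) := rfl
  rw [rotN, this, Nat.testBit_xor, Nat.testBit_mod_two_pow, Nat.testBit_mod_two_pow]
  simp
  omega

/-- product of a word with a sum of powers of `x` -/
def mulN (n : ℕ) (L : List ℕ) : ℕ := L.foldr (fun j r => r ^^^ (rotN^[j] n)) 0

/-! ### The search -/

theorem tailN_zero (n m₁ m₂ k cnt : ℕ) : tailN n m₁ m₂ 0 k cnt = leafN n m₁ m₂ cnt := rfl
theorem tailN_succ (n m₁ m₂ f k cnt : ℕ) : tailN n m₁ m₂ (f + 1) k cnt =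
   cond (Nat.ble (47 * (cnt + bitN n k)) (13 * (k + 1)))
        (tailN n m₁ m₂ f (k + 1) (cnt + bitN n k)) true := rfl
theorem dfsN_nil (n m₁ m₂ k cnt : ℕ) : dfsN [] k cnt n m₁ m₂ = tailN n m₁ m₂ 23 k cnt := rfl
theorem dfsN_cons (t : ℕ × ℕ × ℕ) (L : List (ℕ × ℕ × ℕ)) (n m₁ m₂ k cnt : ℕ) :
    dfsN (t :: L) k cnt n m₁ m₂ =
     ((cond (Nat.ble (47 * (cnt + bitN n k)) (13 * (k + 1)))
          (dfsN L (k + 1) (cnt + bitN n k) n m₁ m₂) true) &&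
        (cond (Nat.ble (47 * (cnt + bitN (n ^^^ t.1) k)) (13 * (k + 1)))
          (dfsN L (k + 1) (cnt + bitN (n ^^^ t.1) k)
            (n ^^^ t.1) (m₁ ^^^ t.2.1) (m₂ ^^^ t.2.2)) true)) := rfl

/-- the states of the search at depth `d` -/
def frontN : ℕ → List (ℕ × ℕ × ℕ) → ℕ → ℕ → ℕ → ℕ → ℕ → List (ℕ × ℕ × ℕ × ℕ × ℕ)
  | 0, _, k, cnt, n, m₁, m₂ => [(k, cnt, n, m₁, m₂)]
  | _ + 1, [], k, cnt, n, m₁, m₂ => [(k, cnt, n, m₁, m₂)]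
  | d + 1, t :: L, k, cnt, n, m₁, m₂ =>
    (if 47 * (cnt + bitN n k) ≤ 13 * (k + 1) then
      frontN d L (k + 1) (cnt + bitN n k) n m₁ m₂ else []) ++
    (if 47 * (cnt + bitN (n ^^^ t.1) k) ≤ 13 * (k + 1) then
      frontN d L (k + 1) (cnt + bitN (n ^^^ t.1) k)
        (n ^^^ t.1) (m₁ ^^^ t.2.1) (m₂ ^^^ t.2.2) else [])

theorem cond_ble (a b : ℕ) (u : Bool) (h : a ≤ b → u = true) :
    cond (Nat.ble a b) u true = true := by
  by_cases hab : a ≤ b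
  · rw [Nat.ble_eq.mpr hab, cond_true, h hab]
  · rw [Bool.eq_false_iff.mpr (fun h => hab (Nat.ble_eq.mp h)), cond_false]

theorem dfsN_front (d : ℕ) : ∀ (L : List (ℕ × ℕ × ℕ)) (k cnt n m₁ m₂ : ℕ),
    (∀ s ∈ frontN d L k cnt n m₁ m₂,
      dfsN (L.drop d) s.1 s.2.1 s.2.2.1 s.2.2.2.1 s.2.2.2.2 = true) →
    dfsN L k cnt n m₁ m₂ = true := by
  induction d with
  | zero => intro L k cnt n m₁ m₂ h; exact h (k, cnt, n, m₁, m₂) (by simp [frontN])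
  | succ d ih =>
    intro L k cnt n m₁ m₂ h
    cases L with
    | nil => exact h (k, cnt, n, m₁, m₂) (by simp [frontN])
    | cons t L =>
      rw [dfsN_cons, Bool.and_eq_true]
      constructor
      · refine cond_ble _ _ _ fun hab => ih _ _ _ _ _ _ fun s hs => h s ?_
        rw [frontN, if_pos hab]
        exact List.mem_append_left _ hs
      · refine cond_ble _ _ _ fun hab => ih _ _ _ _ _ _ fun s hs => h s ?_
        rw [frontN, if_pos hab]
        exact List.mem_append_right _ hs

def runN (s : ℕ × ℕ × ℕ × ℕ × ℕ) : Bool :=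
  dfsN (tab.drop 10) s.1 s.2.1 s.2.2.1 s.2.2.2.1 s.2.2.2.2

def statesN : List (ℕ × ℕ × ℕ × ℕ × ℕ) := frontN 10 tab 0 0 0 0 0

theorem run_0 : (statesN.take 1).all runN = true := by decide +kernel
theorem run_1 : ((statesN.drop 1).take 3).all runN = true := by decide +kernel
theorem run_2 : ((statesN.drop 4).take 4).all runN = true := by decide +kernel
theorem run_3 : ((statesN.drop 8).take 5).all runN = true := by decide +kernel
theorem run_4 : ((statesN.drop 13).take 5).all runN = true := by decide +kernel
theorem run_5 : (statesN.drop 18).all runN = true := by decide +kernel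

theorem states_split : statesN = statesN.take 1 ++ ((statesN.drop 1).take 3 ++
    ((statesN.drop 4).take 4 ++ ((statesN.drop 8).take 5 ++
      ((statesN.drop 13).take 5 ++ statesN.drop 18)))) := by decide +kernel

theorem dfs_tab : dfsN tab 0 0 0 0 0 = true := by
  have h : statesN.all runN = true := by
    rw [states_split]
    simp only [List.all_append, run_0, run_1, run_2, run_3, run_4, run_5, Bool.and_self]
  exact dfsN_front 10 tab 0 0 0 0 0 (fun s hs => List.all_eq_true.mp h s hs)

theorem tailN_sound (n m₁ m₂ : ℕ) : ∀ f k : ℕ, tailN n m₁ m₂ f k (pcN n k) = true →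
    (∀ j, j ≤ k + f → 47 * pcN n j ≤ 13 * j) → leafN n m₁ m₂ (pcN n (k + f)) = true := by
  intro f
  induction f with
  | zero => intro k h _; exact h
  | succ f ih =>
    intro k h hp
    rw [tailN_succ, ← pcN_succ] at h
    have h1 : Nat.ble (47 * pcN n (k + 1)) (13 * (k + 1)) = true :=
      Nat.ble_eq.mpr (hp (k + 1) (by omega))
    rw [h1, cond_true] at h
    have := ih (k + 1) h (fun j hj => hp j (by omega))
    rwa [show k + (f + 1) = k + 1 + f by omega]

/-- sum of the rows selected by `bs` -/
def selN : List ℕ → List Bool → ℕ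
  | a :: L, b :: bs => (if b then a else 0) ^^^ selN L bs
  | _, _ => 0

theorem selN_testBit (L : List ℕ) : ∀ (bs : List Bool) (k : ℕ),
    (∀ a ∈ L, ∀ i < k, a.testBit i = false) → ∀ i < k, (selN L bs).testBit i = false := by
  induction L with
  | nil => intro bs k _ i _; simp [selN]
  | cons a L ih =>
    intro bs k h i hi
    cases bs with
    | nil => simp [selN]
    | cons b bs =>
      rw [selN, Nat.testBit_xor, ih bs k (fun a ha => h a (List.mem_cons_of_mem _ ha)) i hi]
      cases b
      · simp
      · simp [h a List.mem_cons_self i hi]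

theorem pcN_congr (n m k : ℕ) (h : ∀ i < k, n.testBit i = m.testBit i) :
    pcN n k = pcN m k := by
  rw [pcN_eq_sum, pcN_eq_sum]
  refine Finset.sum_congr rfl fun i hi => ?_
  rw [bitN_eq, bitN_eq, h i (Finset.mem_range.mp hi)]

theorem dfsN_sound (L : List (ℕ × ℕ × ℕ)) : ∀ (bs : List Bool) (k n m₁ m₂ : ℕ),
    bs.length = L.length →
    dfsN L k (pcN n k) n m₁ m₂ = true →
    (∀ j (hj : j < L.length), ∀ i < k + j, (L[j].1).testBit i = false) →
    (∀ j, j ≤ k + L.length + 23 → 47 * pcN (n ^^^ selN (L.map (·.1)) bs) j ≤ 13 * j) →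
    leafN (n ^^^ selN (L.map (·.1)) bs) (m₁ ^^^ selN (L.map (·.2.1)) bs)
      (m₂ ^^^ selN (L.map (·.2.2)) bs)
      (pcN (n ^^^ selN (L.map (·.1)) bs) (k + L.length + 23)) = true := by
  induction L with
  | nil =>
    intro bs k n m₁ m₂ hl h _ hp
    simp only [List.map_nil, selN, Nat.xor_zero, List.length_nil, Nat.add_zero] at *
    exact tailN_sound n m₁ m₂ 23 k h hp
  | cons t L ih =>
    intro bs k n m₁ m₂ hl h hz hp
    cases bs with
    | nil => simp at hl
    | cons b bs =>
      simp only [List.length_cons, Nat.add_right_cancel_iff] at hl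
      have hz' : ∀ j (hj : j < L.length), ∀ i < (k + 1) + j, (L[j].1).testBit i = false := by
        intro j hj i hi
        have := hz (j + 1) (by simpa using hj) i (by omega)
        simpa using this
      have hL : ∀ a ∈ L.map (·.1), ∀ i < k + 1, a.testBit i = false := by
        intro a ha i hi
        obtain ⟨t, ht, rfl⟩ := List.mem_map.mp ha
        obtain ⟨j, hj, rfl⟩ := List.mem_iff_getElem.mp ht
        exact hz' j hj i (by omega)
      have hS := selN_testBit (L.map (·.1)) bs (k + 1) hL
      have ht : ∀ i < k, t.1.testBit i = false := by
        intro i hi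
        exact hz 0 (by simp) i (by omega)
      rw [dfsN_cons, Bool.and_eq_true] at h
      cases b with
      | false =>
        simp only [List.map_cons, selN, Bool.false_eq_true, if_false, Nat.zero_xor,
          List.length_cons] at hp ⊢
        have e : pcN (n ^^^ selN (L.map (·.1)) bs) (k + 1) = pcN n (k + 1) :=
          pcN_congr _ _ _ fun i hi => by rw [Nat.testBit_xor, hS i hi, Bool.xor_false]
        have h1 := h.1
        rw [← pcN_succ, Nat.ble_eq.mpr (by rw [← e]; exact hp (k + 1) (by omega)),
          cond_true] at h1
        have := ih bs (k + 1) n m₁ m₂ hl h1 hz' (fun j hj => hp j (by omega))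
        rwa [show k + (L.length + 1) + 23 = k + 1 + L.length + 23 by omega]
      | true =>
        simp only [List.map_cons, selN, if_true, ← Nat.xor_assoc,
          List.length_cons] at hp ⊢
        have e0 : pcN n k = pcN (n ^^^ t.1) k :=
          pcN_congr _ _ _ fun i hi => by rw [Nat.testBit_xor, ht i hi, Bool.xor_false]
        have e : pcN (n ^^^ t.1 ^^^ selN (L.map (·.1)) bs) (k + 1) = pcN (n ^^^ t.1) (k + 1) :=
          pcN_congr _ _ _ fun i hi => by
            rw [Nat.testBit_xor (n ^^^ t.1), hS i hi, Bool.xor_false]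
        have h1 := h.2
        rw [e0, ← pcN_succ, Nat.ble_eq.mpr (by rw [← e]; exact hp (k + 1) (by omega)),
          cond_true] at h1
        have := ih bs (k + 1) _ _ _ hl h1 hz' (fun j hj => hp j (by omega))
        rwa [show k + (L.length + 1) + 23 = k + 1 + L.length + 23 by omega]

/-! ### The cycle lemma -/

theorem cycle (b : ℕ → ℕ) (hb : ∀ i, b (i + 47) = b i) (w : ℕ)
    (hw : ∑ i ∈ Finset.range 47, b i = w) :
    ∃ t < 47, ∀ k ≤ 47, 47 * ∑ i ∈ Finset.range k, b (t + i) ≤ w * k := by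
  let S : ℕ → ℤ := fun m => ((∑ i ∈ Finset.range m, b i : ℕ) : ℤ)
  have hS : ∀ m, S (m + 47) = S m + w := by
    intro m
    simp only [S]
    rw [add_comm m 47, Finset.sum_range_add, hw]
    have : ∑ x ∈ Finset.range m, b (47 + x) = ∑ x ∈ Finset.range m, b x :=
      Finset.sum_congr rfl fun i _ => by rw [add_comm, hb]
    rw [this]; push_cast; ring
  obtain ⟨t, ht, hmin⟩ := Finset.exists_min_image (Finset.range 47)
    (fun t => (w : ℤ) * t - 47 * S t) ⟨0, by simp⟩
  refine ⟨t, Finset.mem_range.mp ht, fun k hk => ?_⟩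
  have hlt := Finset.mem_range.mp ht
  have e : S (t + k) = S t + ((∑ i ∈ Finset.range k, b (t + i) : ℕ) : ℤ) := by
    simp only [S]; rw [Finset.sum_range_add]; push_cast; ring
  have key : (w : ℤ) * t - 47 * S t ≤ w * ((t + k : ℕ) : ℤ) - 47 * S (t + k) := by
    by_cases h : t + k < 47
    · exact hmin (t + k) (Finset.mem_range.mpr h)
    · have := hmin (t + k - 47) (Finset.mem_range.mpr (by omega))
      have h2 := hS (t + k - 47)
      rw [show t + k - 47 + 47 = t + k by omega] at h2
      rw [h2]
      have h3 : ((t + k - 47 : ℕ) : ℤ) = ((t + k : ℕ) : ℤ) - 47 := by omega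
      rw [h3] at this
      linarith
  rw [e] at key
  push_cast at key
  zify
  linarith

theorem testBit_rotN_iter (n s : ℕ) : ∀ i < 47,
    (rotN^[s] n).testBit ((i + s) % 47) = n.testBit i := by
  induction s with
  | zero => intro i hi; simp [Nat.mod_eq_of_lt hi]
  | succ s ih =>
    intro i hi
    rw [Function.iterate_succ_apply', ← ih i hi]
    have hm : (i + s) % 47 < 47 := Nat.mod_lt _ (by norm_num)
    by_cases h : (i + s) % 47 = 46
    · rw [show (i + (s + 1)) % 47 = 0 by omega, h, testBit_rotN_zero]
    · rw [show (i + (s + 1)) % 47 = (i + s) % 47 + 1 by omega, testBit_rotN_succ _ _ (by omega)]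

theorem exists_rot (n : ℕ) (hn : pcN n 47 ≤ 13) :
    ∃ s, ∀ k ≤ 47, 47 * pcN (rotN^[s] n) k ≤ 13 * k := by
  obtain ⟨t, ht, h⟩ := cycle (fun i => bitN n (i % 47)) (fun i => by simp) (pcN n 47) (by
    rw [pcN_eq_sum]
    exact Finset.sum_congr rfl fun i hi => by rw [Nat.mod_eq_of_lt (Finset.mem_range.mp hi)])
  refine ⟨47 - t, fun k hk => ?_⟩
  refine le_trans ?_ ((h k hk).trans (Nat.mul_le_mul_right _ hn))
  rw [pcN_eq_sum]
  refine le_of_eq (congrArg _ (Finset.sum_congr rfl fun i hi => ?_))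
  have hi' := Finset.mem_range.mp hi
  rw [bitN_eq, bitN_eq, ← testBit_rotN_iter n (47 - t) ((t + i) % 47) (Nat.mod_lt _ (by norm_num))]
  congr 2
  omega

theorem pcN_rotN (n : ℕ) : pcN (rotN n) 47 = pcN n 47 := by
  rw [pcN_eq_sum, pcN_eq_sum, Finset.sum_range_succ', Finset.sum_range_succ (fun i => bitN n i)]
  refine congrArg₂ (· + ·) ?_ ?_
  · refine Finset.sum_congr rfl fun i hi => ?_
    rw [bitN_eq, bitN_eq, testBit_rotN_succ _ _ (Finset.mem_range.mp hi)]
  · rw [bitN_eq, bitN_eq, testBit_rotN_zero]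

/-! ### Words as ring elements -/

abbrev RR := Rng (ZMod 2) 47

noncomputable def xR : RR := AdjoinRoot.root _

theorem xR_pow : xR ^ 47 = 1 := by
  have h : AdjoinRoot.mk (X ^ 47 - 1 : (ZMod 2)[X]) (X ^ 47 - 1) = 0 := AdjoinRoot.mk_self
  rw [map_sub, map_pow, AdjoinRoot.mk_X, map_one, sub_eq_zero] at h
  exact h

theorem two_RR (r : RR) : r + r = 0 := by
  rw [← two_smul (ZMod 2) r, show (2 : ZMod 2) = 0 from rfl, zero_smul]

noncomputable def toR (n : ℕ) : RR :=
  ∑ i ∈ Finset.range 47, if n.testBit i then xR ^ i else 0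

noncomputable def toP (n : ℕ) : (ZMod 2)[X] :=
  ∑ i ∈ Finset.range 47, if n.testBit i then X ^ i else 0

theorem mk_toP (n : ℕ) : AdjoinRoot.mk _ (toP n) = toR n := by
  rw [toP, toR, map_sum]
  refine Finset.sum_congr rfl fun i _ => ?_
  split_ifs
  · rw [map_pow, AdjoinRoot.mk_X]; rfl
  · exact map_zero _

theorem coeff_toP (n j : ℕ) :
    (toP n).coeff j = if j < 47 ∧ n.testBit j then 1 else 0 := by
  rw [toP, finsetSum_coeff]
  have : ∀ i ∈ Finset.range 47, (if n.testBit i then (X ^ i : (ZMod 2)[X]) else 0).coeff j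
      = if i = j then (if n.testBit j then 1 else 0) else 0 := by
    intro i _
    by_cases hij : i = j
    · subst hij; rw [if_pos rfl]; split_ifs <;> simp
    · rw [if_neg hij]; split_ifs
      · rw [coeff_X_pow, if_neg (Ne.symm hij)]
      · simp
  rw [Finset.sum_congr rfl this, Finset.sum_ite_eq' (Finset.range 47) j]
  simp only [Finset.mem_range]
  by_cases h1 : j < 47 <;> simp [h1]

theorem deg47 : (X ^ 47 - 1 : (ZMod 2)[X]).degree = 47 := by
  have := degree_X_pow_sub_C (n := 47) (by norm_num) (1 : ZMod 2)
  simpa using this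

theorem toP_degree (n : ℕ) : (toP n).degree < 47 := by
  have : (toP n).degree < ((47 : ℕ) : WithBot ℕ) := by
    rw [degree_lt_iff_coeff_zero]
    intro m hm
    rw [coeff_toP, if_neg (by omega)]
  exact this

theorem modBy_toR (n : ℕ) (h : (47 : ℕ) ≠ 0) :
    AdjoinRoot.modByMonicHom (monicXm h) (toR n) = toP n := by
  rw [← mk_toP, AdjoinRoot.modByMonicHom_mk (monicXm h)]
  exact (modByMonic_eq_self_iff (monicXm h)).mpr (by rw [deg47]; exact toP_degree n)

theorem wt_toR (n : ℕ) (h : (47 : ℕ) ≠ 0) : wt h (toR n) = pcN n 47 := by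
  rw [wt, modBy_toR n h, pcN_eq_sum]
  have : (toP n).support = (Finset.range 47).filter (fun i => n.testBit i = true) := by
    ext i
    rw [mem_support_iff, coeff_toP]
    simp
  rw [this, Finset.card_filter]
  refine Finset.sum_congr rfl fun i _ => ?_
  rw [bitN_eq]
  cases n.testBit i <;> rfl

theorem toR_xor (a b : ℕ) : toR (a ^^^ b) = toR a + toR b := by
  rw [toR, toR, toR, ← Finset.sum_add_distrib]
  refine Finset.sum_congr rfl fun i _ => ?_
  rw [Nat.testBit_xor]
  cases a.testBit i <;> cases b.testBit i <;> simp [two_RR]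

theorem toR_zero : toR 0 = 0 := by simp [toR]

theorem toR_rotN (n : ℕ) : toR (rotN n) = xR * toR n := by
  have h46 : xR * xR ^ 46 = 1 := (pow_succ' xR 46).symm.trans xR_pow
  rw [toR, toR, Finset.sum_range_succ', Finset.sum_range_succ (fun i => if n.testBit i then _ else _),
    mul_add, Finset.mul_sum]
  refine congrArg₂ (· + ·) ?_ ?_
  · refine Finset.sum_congr rfl fun i hi => ?_
    rw [testBit_rotN_succ _ _ (Finset.mem_range.mp hi), mul_ite, mul_zero, pow_succ']
  · rw [testBit_rotN_zero, mul_ite, mul_zero, h46, pow_zero]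

theorem toR_rotN_iter (n s : ℕ) : toR (rotN^[s] n) = xR ^ s * toR n := by
  induction s with
  | zero => simp
  | succ s ih => rw [Function.iterate_succ_apply', toR_rotN, ih, pow_succ' xR s, mul_assoc]

theorem toR_mulN (n : ℕ) (L : List ℕ) :
    toR (mulN n L) = toR n * (L.map (fun j => xR ^ j)).sum := by
  induction L with
  | nil => simp [mulN, toR_zero]
  | cons j L ih =>
    have : mulN n (j :: L) = mulN n L ^^^ (rotN^[j] n) := rfl
    rw [this, toR_xor, ih, toR_rotN_iter, List.map_cons, List.sum_cons]
    ring

/-- the word with bits given by `p` -/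
def ofBits (p : ℕ → Bool) : ℕ → ℕ
  | 0 => 0
  | k + 1 => ofBits p k ^^^ (if p k then 2 ^ k else 0)

theorem testBit_ofBits (p : ℕ → Bool) (k i : ℕ) :
    (ofBits p k).testBit i = (decide (i < k) && p i) := by
  induction k with
  | zero => simp [ofBits]
  | succ k ih =>
    rw [ofBits, Nat.testBit_xor, ih]
    by_cases h : i = k
    · subst h
      cases hp : p i <;> simp
    · have h2 : (if p k then 2 ^ k else 0 : ℕ).testBit i = false := by
        split_ifs
        · rw [Nat.testBit_two_pow]; simpa using Ne.symm h
        · simp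
      rw [h2, Bool.xor_false]
      have : (i < k) ↔ (i < k + 1) := by omega
      simp [this]

theorem zmod2 (a : ZMod 2) : a = 0 ∨ a = 1 := by revert a; decide

theorem toR_surj (r : RR) : ∃ n, toR n = r := by
  classical
  have h0 : (47 : ℕ) ≠ 0 := by norm_num
  set P := AdjoinRoot.modByMonicHom (monicXm (F := ZMod 2) h0) r with hP
  refine ⟨ofBits (fun i => decide (P.coeff i = 1)) 47, ?_⟩
  have hr : AdjoinRoot.mk _ P = r := AdjoinRoot.mk_leftInverse (monicXm h0) r
  have hdeg : P.degree < ((47 : ℕ) : WithBot ℕ) := by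
    obtain ⟨Q, rfl⟩ := AdjoinRoot.mk_surjective r
    rw [hP, AdjoinRoot.modByMonicHom_mk]
    have := degree_modByMonic_lt Q (monicXm (F := ZMod 2) h0)
    rwa [deg47] at this
  rw [← mk_toP, ← hr]
  congr 1
  ext j
  rw [coeff_toP, testBit_ofBits]
  by_cases hj : j < 47
  · rcases zmod2 (P.coeff j) with h | h <;> simp [hj, h]
  · rw [if_neg (by tauto)]
    rw [degree_lt_iff_coeff_zero] at hdeg
    exact (hdeg j (by omega)).symm

theorem wt_xR (h : (47 : ℕ) ≠ 0) (s : ℕ) (r : RR) : wt h (xR ^ s * r) = wt h r := by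
  induction s with
  | zero => simp
  | succ s ih =>
    rw [← ih]
    obtain ⟨n, hn⟩ := toR_surj (xR ^ s * r)
    rw [pow_succ' xR s, mul_assoc, ← hn, ← toR_rotN, wt_toR, wt_toR, pcN_rotN]

/-! ### The concrete elements -/

def FN : ℕ := 16215601
def GLs : List ℕ := [20, 19, 13, 12, 11, 9, 7, 4, 3, 2, 0]
def HL : List ℕ := [1, 6, 7, 9, 10, 13, 15, 18, 20, 22, 23]
def QL : List ℕ := [0, 4, 5, 8, 9, 11, 12, 15, 18, 20, 23, 24]
def KL : List ℕ := [0, 1, 2, 3, 5, 6, 7, 9, 10, 12, 13, 14, 18, 19, 23]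

noncomputable def hR : RR := (HL.map (fun j => xR ^ j)).sum

theorem toR_FN : toR FN = f₁ := by
  have h : FN = mulN 1 [23, 22, 21, 20, 18, 17, 16, 14, 13, 11, 10, 9, 5, 4, 0] := by
    decide +kernel
  have h1 : toR 1 = 1 := by
    rw [toR, Finset.sum_eq_single 0]
    · simp
    · intro i _ hi
      rw [if_neg]
      have := Nat.testBit_two_pow (n := 0) (m := i)
      rw [pow_zero] at this
      rw [this]; simpa using Ne.symm hi
    · simp
  rw [h, toR_mulN, h1, one_mul, f₁]
  simp only [List.map_cons, List.map_nil, List.sum_cons, List.sum_nil, map_add, map_pow,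
    AdjoinRoot.mk_X, map_one, xR, pow_zero]
  ring

theorem g_eq : g = (GLs.map (fun j => xR ^ j)).sum := by
  rw [g]
  simp only [GLs, List.map_cons, List.map_nil, List.sum_cons, List.sum_nil, map_add, map_pow,
    AdjoinRoot.mk_X, map_one, xR, pow_zero]
  ring

theorem f₁g : toR (mulN FN GLs) = f₁ * g := by rw [toR_mulN, toR_FN, g_eq]
theorem f₁h : toR (mulN FN HL) = f₁ * hR := by rw [toR_mulN, toR_FN, hR]
theorem f₁gh : f₁ * g * hR = f₁ := by
  rw [← f₁g, hR, ← toR_mulN, show mulN (mulN FN GLs) HL = FN by decide +kernel, toR_FN]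

def ON : ℕ := 2 ^ 47 - 1

theorem f₂_eq : f₂ = ∑ i ∈ Finset.range 47, xR ^ i := by
  have h2 : (X + 1 : (ZMod 2)[X]) = X - 1 := by
    rw [sub_eq_add_neg, CharTwo.neg_eq]
  have hm : (X + 1 : (ZMod 2)[X]).Monic := by simpa using monic_X_add_C (1 : ZMod 2)
  have h : (X ^ 47 - 1 : (ZMod 2)[X]) = (X + 1) * ∑ i ∈ Finset.range 47, X ^ i := by
    rw [h2, mul_geom_sum]
  have h3 : ((X ^ 47 - 1) /ₘ (X + 1) : (ZMod 2)[X]) = ∑ i ∈ Finset.range 47, X ^ i := by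
    rw [h, mul_divByMonic_cancel_left _ hm]
  rw [f₂, h3, map_sum]
  refine Finset.sum_congr rfl fun i _ => ?_
  rw [map_pow, AdjoinRoot.mk_X]; rfl

theorem toR_ON : toR ON = f₂ := by
  rw [toR, f₂_eq]
  refine Finset.sum_congr rfl fun i hi => ?_
  rw [if_pos]
  rw [ON, Nat.testBit_two_pow_sub_one]
  simpa using hi

theorem f₂_mem : f₂ = f₁ * (KL.map (fun j => xR ^ j)).sum := by
  rw [← toR_FN, ← toR_mulN, ← toR_ON]
  exact congrArg toR (by decide +kernel)

theorem xR_f₂ (s : ℕ) : xR ^ s * f₂ = f₂ := by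
  induction s with
  | zero => simp
  | succ s ih =>
    rw [pow_succ xR s, mul_assoc]
    have : xR * f₂ = f₂ := by
      rw [← toR_ON, ← toR_rotN, show rotN ON = ON by decide +kernel]
    rw [this, ih]

theorem mul_f₂ (r : RR) : r * f₂ = 0 ∨ r * f₂ = f₂ := by
  obtain ⟨n, rfl⟩ := toR_surj r
  rw [toR]
  generalize Finset.range 47 = s
  classical
  induction s using Finset.induction_on with
  | empty => simp
  | insert a s ha ih =>
    rw [Finset.sum_insert ha, add_mul, ite_mul, zero_mul, xR_f₂]
    split_ifs <;> rcases ih with h | h <;> rw [h] <;> simp [two_RR]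

theorem wt_add_f₂ (h : (47 : ℕ) ≠ 0) (r : RR) : wt h (r + f₂) + wt h r = 47 := by
  obtain ⟨n, rfl⟩ := toR_surj r
  rw [← toR_ON, ← toR_xor, wt_toR, wt_toR, pcN_eq_sum, pcN_eq_sum, ← Finset.sum_add_distrib]
  rw [Finset.sum_congr rfl (g := fun _ => 1)]
  · simp
  · intro i hi
    rw [bitN_eq, bitN_eq, Nat.testBit_xor, ON, Nat.testBit_two_pow_sub_one]
    have := Finset.mem_range.mp hi
    cases n.testBit i <;> simp [this]

theorem wt_zero (h : (47 : ℕ) ≠ 0) : wt h (0 : RR) = 0 := by simp [wt]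

theorem wt_f₂ (h : (47 : ℕ) ≠ 0) : wt h f₂ = 47 := by
  have := wt_add_f₂ h 0
  rwa [zero_add, wt_zero, add_zero] at this

theorem f₂_ne : f₂ ≠ 0 := by
  intro h
  have := wt_f₂ (by norm_num)
  rw [h, wt_zero] at this
  omega

theorem toR_inj (a b : ℕ) (h : toR a = toR b) : ∀ i < 47, a.testBit i = b.testBit i := by
  intro i hi
  have h0 : (47 : ℕ) ≠ 0 := by norm_num
  have h1 : toP a = toP b := by rw [← modBy_toR a h0, ← modBy_toR b h0, h]
  have h2 := congrArg (fun p => p.coeff i) h1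
  simp only [coeff_toP] at h2
  cases ha : a.testBit i <;> cases hb : b.testBit i <;> simp [ha, hb, hi] at h2 ⊢

noncomputable def qP : (ZMod 2)[X] :=
  X ^ 24 + X ^ 23 + X ^ 20 + X ^ 18 + X ^ 15 + X ^ 12 + X ^ 11 + X ^ 9 + X ^ 8 + X ^ 5 + X ^ 4 + 1

theorem qP_monic : qP.Monic := by
  unfold qP
  monicity!

theorem qP_degree : qP.degree = 24 := by
  unfold qP
  compute_degree!

noncomputable def fP : (ZMod 2)[X] :=
  X ^ 23 + X ^ 22 + X ^ 21 + X ^ 20 + X ^ 18 + X ^ 17 + X ^ 16 +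
    X ^ 14 + X ^ 13 + X ^ 11 + X ^ 10 + X ^ 9 + X ^ 5 + X ^ 4 + 1

theorem mk_fP : AdjoinRoot.mk _ fP = f₁ := rfl

theorem fP_degree : fP.degree = 23 := by
  unfold fP
  compute_degree!

theorem f₁q : f₁ * AdjoinRoot.mk _ qP = 0 := by
  have h : AdjoinRoot.mk _ qP = (QL.map (fun j => xR ^ j)).sum := by
    rw [qP]
    simp only [QL, List.map_cons, List.map_nil, List.sum_cons, List.sum_nil, map_add, map_pow,
      AdjoinRoot.mk_X, map_one, xR, pow_zero]
    ring
  rw [h, ← toR_FN, ← toR_mulN, show mulN FN QL = 0 by decide +kernel, toR_zero]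

theorem mem_f₁ (c : RR) (hc : c ∈ Ideal.span {f₁}) :
    ∃ p : (ZMod 2)[X], p.degree < ((24 : ℕ) : WithBot ℕ) ∧ c = AdjoinRoot.mk _ p * f₁ := by
  obtain ⟨r, rfl⟩ := Ideal.mem_span_singleton'.mp hc
  obtain ⟨P, rfl⟩ := AdjoinRoot.mk_surjective r
  refine ⟨P %ₘ qP, ?_, ?_⟩
  · have := degree_modByMonic_lt P qP_monic
    rwa [qP_degree] at this
  · conv_lhs => rw [← modByMonic_add_div P qP]
    rw [map_add, map_mul, add_mul, mul_right_comm, mul_comm _ f₁, mul_comm _ f₁, f₁q, zero_mul,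
      add_zero]

theorem mk_lt (p : (ZMod 2)[X]) (m : ℕ) (hp : p.degree < (m : WithBot ℕ)) (r : RR) :
    AdjoinRoot.mk _ p * r =
      ∑ k ∈ Finset.range m, if decide (p.coeff k = 1) = true then xR ^ k * r else 0 := by
  have h : p = ∑ k ∈ Finset.range m, if decide (p.coeff k = 1) = true then X ^ k else 0 := by
    ext j
    rw [finsetSum_coeff]
    have : ∀ i ∈ Finset.range m,
        (if decide (p.coeff i = 1) = true then (X ^ i : (ZMod 2)[X]) else 0).coeff j
        = if i = j then p.coeff j else 0 := by
      intro i _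
      by_cases hij : i = j
      · subst hij
        rw [if_pos rfl]
        rcases zmod2 (p.coeff i) with h | h <;> simp [h]
      · rw [if_neg hij]; split_ifs
        · rw [coeff_X_pow, if_neg (Ne.symm hij)]
        · simp
    rw [Finset.sum_congr rfl this, Finset.sum_ite_eq' (Finset.range m) j]
    split_ifs with hj
    · rfl
    · rw [Finset.mem_range] at hj
      rw [degree_lt_iff_coeff_zero] at hp
      exact hp j (by omega)
  conv_lhs => rw [h]
  rw [map_sum, Finset.sum_mul]
  refine Finset.sum_congr rfl fun i _ => ?_
  split_ifs
  · rw [map_pow, AdjoinRoot.mk_X]; rfl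
  · rw [map_zero, zero_mul]

theorem toR_selN (N : ℕ) (b : ℕ → Bool) (l : List ℕ) :
    toR (selN (l.map (fun j => rotN^[j] N)) (l.map b)) =
      (l.map (fun j => if b j = true then xR ^ j * toR N else 0)).sum := by
  induction l with
  | nil => exact toR_zero
  | cons a l ih =>
    rw [List.map_cons, List.map_cons, List.map_cons, List.sum_cons, selN, toR_xor, ih]
    refine congrArg (· + _) ?_
    split_ifs
    · exact toR_rotN_iter _ _
    · exact toR_zero

theorem list_sum_range (φ : ℕ → RR) (m : ℕ) :
    ((List.range m).map φ).sum = ∑ k ∈ Finset.range m, φ k := by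
  induction m with
  | zero => rfl
  | succ m ih => rw [List.range_succ, Finset.sum_range_succ, ← ih]; simp

theorem toR_sel (N : ℕ) (p : (ZMod 2)[X]) (hp : p.degree < ((24 : ℕ) : WithBot ℕ)) :
    toR (selN ((List.range 24).map (fun j => rotN^[j] N))
      ((List.range 24).map (fun j => decide (p.coeff j = 1)))) = AdjoinRoot.mk _ p * toR N := by
  rw [toR_selN, list_sum_range, mk_lt p 24 hp]

theorem tab1 : tab.map (·.1) = (List.range 24).map (fun j => rotN^[j] FN) := by
  decide +kernel
theorem tab2 : tab.map (·.2.1) = (List.range 24).map (fun j => rotN^[j] (mulN FN GLs)) := by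
  decide +kernel
theorem tab3 : tab.map (·.2.2) = (List.range 24).map (fun j => rotN^[j] (mulN FN HL)) := by
  decide +kernel
theorem tab_low : ∀ j (hj : j < tab.length), ∀ i < 0 + j, (tab[j].1).testBit i = false := by
  decide +kernel
theorem tab_len : tab.length = 24 := rfl

theorem core (h0 : (47 : ℕ) ≠ 0) (c : RR) (hc : c ∈ Ideal.span {f₁}) (hne : c ≠ 0)
    (hw : wt h0 c ≤ 13) :
    (27 ≤ wt h0 c + wt h0 (c * g) ∧ wt h0 (c * g) ≤ 20 + wt h0 c) ∧
    (27 ≤ wt h0 c + wt h0 (c * hR) ∧ wt h0 (c * hR) ≤ 20 + wt h0 c) := by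
  obtain ⟨n, rfl⟩ := toR_surj c
  rw [wt_toR] at hw
  obtain ⟨s, hs⟩ := exists_rot n hw
  obtain ⟨p, hp, hcp⟩ := mem_f₁ (xR ^ s * toR n) (Ideal.mul_mem_left _ _ hc)
  set bs := (List.range 24).map (fun j => decide (p.coeff j = 1)) with hbs
  have e1 : toR (selN (tab.map (·.1)) bs) = xR ^ s * toR n := by
    rw [tab1, hbs, toR_sel _ p hp, toR_FN, hcp]
  have e2 : toR (selN (tab.map (·.2.1)) bs) = xR ^ s * (toR n * g) := by
    rw [tab2, hbs, toR_sel _ p hp, f₁g, ← mul_assoc, ← hcp, mul_assoc]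
  have e3 : toR (selN (tab.map (·.2.2)) bs) = xR ^ s * (toR n * hR) := by
    rw [tab3, hbs, toR_sel _ p hp, f₁h, ← mul_assoc, ← hcp, mul_assoc]
  have hbit := toR_inj _ _ (e1.trans (toR_rotN_iter n s).symm)
  have hbl : bs.length = tab.length := by rw [hbs, List.length_map, List.length_range, tab_len]
  have := dfsN_sound tab bs 0 0 0 0 hbl dfs_tab tab_low (by
    intro j hj
    rw [tab_len] at hj
    rw [Nat.zero_xor, pcN_congr _ _ j fun i hi => hbit i (by omega)]
    exact hs j (by omega))
  rw [Nat.zero_xor, Nat.zero_xor, Nat.zero_xor, tab_len] at this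
  generalize selN (tab.map (·.1)) bs = a at *
  generalize selN (tab.map (·.2.1)) bs = b at *
  generalize selN (tab.map (·.2.2)) bs = d at *
  have ha : Nat.beq a 0 = false := by
    rw [Bool.eq_false_iff]
    intro h
    rw [Nat.eq_of_beq_eq_true h, toR_zero] at e1
    apply hne
    have : xR ^ (46 * s) * (xR ^ s * toR n) = toR n := by
      rw [← mul_assoc, ← pow_add, show 46 * s + s = 47 * s by ring, pow_mul, xR_pow, one_pow,
        one_mul]
    rw [← this, ← e1, mul_zero]
  rw [leafN, ha, Bool.false_or, Bool.and_eq_true, okN, okN, Bool.and_eq_true, Bool.and_eq_true,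
    Nat.ble_eq, Nat.ble_eq, Nat.ble_eq, Nat.ble_eq] at this
  rw [← wt_xR h0 s (toR n), ← wt_xR h0 s (toR n * g), ← wt_xR h0 s (toR n * hR), ← e1, ← e2, ← e3,
    wt_toR, wt_toR, wt_toR]
  exact this

theorem mem_f₂ (c : RR) (hc : c ∈ Ideal.span {f₂}) : c = 0 ∨ c = f₂ := by
  obtain ⟨r, rfl⟩ := Ideal.mem_span_singleton'.mp hc
  exact mul_f₂ r

theorem mul_gh (c : RR) (hc : c ∈ Ideal.span {f₁}) : c * g * hR = c := by
  obtain ⟨r, rfl⟩ := Ideal.mem_span_singleton'.mp hc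
  rw [mul_assoc, mul_assoc, ← mul_assoc f₁, f₁gh]

theorem minDist (h0 : (47 : ℕ) ≠ 0) (c₁ : RR) (h₁ : c₁ ∈ Ideal.span {f₁}) (c₂ : RR)
    (h₂ : c₂ ∈ Ideal.span {f₂}) (hne : ((c₁, c₁ * g + c₂) : RR × RR) ≠ 0) :
    27 ≤ wt h0 c₁ + wt h0 (c₁ * g + c₂) := by
  by_cases hz : c₁ = 0
  · subst hz
    rcases mem_f₂ c₂ h₂ with h | h
    · exact absurd (by simp [h]) hne
    · rw [h, zero_mul, zero_add, wt_f₂]; omega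
  by_cases hA : wt h0 c₁ ≤ 13
  · have h := (core h0 c₁ h₁ hz hA).1
    rcases mem_f₂ c₂ h₂ with e | e
    · rw [e, add_zero]; exact h.1
    · have := wt_add_f₂ h0 (c₁ * g)
      rw [e]; omega
  by_cases hB : wt h0 (c₁ * g + c₂) ≤ 13
  · have hd : (c₁ * g + c₂) * hR = c₁ ∨ (c₁ * g + c₂) * hR = c₁ + f₂ := by
      rw [add_mul, mul_gh c₁ h₁]
      rcases mem_f₂ c₂ h₂ with e | e
      · left; rw [e, zero_mul, add_zero]
      · rw [e, mul_comm]
        rcases mul_f₂ hR with e | e <;> rw [e]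
        · left; rw [add_zero]
        · right; rfl
    have hmem : c₁ * g + c₂ ∈ Ideal.span {f₁} := by
      refine Ideal.add_mem _ (Ideal.mul_mem_right _ _ h₁) ?_
      refine (Ideal.span_singleton_le_iff_mem _).mpr ?_ h₂
      rw [f₂_mem]
      exact Ideal.mul_mem_right _ _ (Ideal.mem_span_singleton_self _)
    generalize c₁ * g + c₂ = d at *
    by_cases hd0 : d = 0
    · rw [hd0, zero_mul] at hd
      rcases hd with e | e
      · exact absurd e.symm hz
      · have := wt_add_f₂ h0 c₁
        rw [← e, wt_zero] at this
        omega
    have h := (core h0 d hmem hd0 hB).2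
    rcases hd with e | e
    · rw [e] at h; omega
    · have := wt_add_f₂ h0 c₁
      rw [e] at h; omega
  omega

/-- the encoder -/
noncomputable def enc : (degreeLT (ZMod 2) 24 × ZMod 2) →ₗ[ZMod 2] (RR × RR) where
  toFun v := (AdjoinRoot.mk _ v.1.1 * f₁, AdjoinRoot.mk _ v.1.1 * f₁ * g + v.2 • f₂)
  map_add' u v := by
    ext
    · simp only [Prod.fst_add, Submodule.coe_add, map_add]; ring
    · simp only [Prod.fst_add, Prod.snd_add, Submodule.coe_add, map_add, add_smul]; ring
  map_smul' a v := by
    have : AdjoinRoot.mk (X ^ 47 - 1 : (ZMod 2)[X]) (a • v.1.1) = a • AdjoinRoot.mk _ v.1.1 :=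
      (AdjoinRoot.smul_mk _ _ _).symm
    ext
    · simp only [Prod.smul_fst, Submodule.coe_smul, this, smul_mul_assoc, RingHom.id_apply]
    · simp only [Prod.smul_fst, Prod.smul_snd, Submodule.coe_smul, this, smul_mul_assoc,
        RingHom.id_apply, smul_add, smul_smul, smul_eq_mul]

theorem enc_inj : Function.Injective enc := by
  rw [injective_iff_map_eq_zero]
  rintro ⟨⟨p, hp⟩, e⟩ h
  rw [mem_degreeLT] at hp
  have h1 : AdjoinRoot.mk (X ^ 47 - 1 : (ZMod 2)[X]) p * f₁ = 0 := congrArg Prod.fst h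
  have h2 : AdjoinRoot.mk (X ^ 47 - 1 : (ZMod 2)[X]) p * f₁ * g + e • f₂ = 0 :=
    congrArg Prod.snd h
  rw [h1, zero_mul, zero_add] at h2
  have he : e = 0 := by
    rcases zmod2 e with h | h
    · exact h
    · rw [h, one_smul] at h2; exact absurd h2 f₂_ne
  have hp0 : p = 0 := by
    rw [← mk_fP, ← map_mul, AdjoinRoot.mk_eq_zero] at h1
    by_contra hne
    have hf : fP ≠ 0 := by
      intro h
      have := fP_degree
      rw [h, degree_zero] at this
      exact absurd this (by decide)
    refine mul_ne_zero hne hf (eq_zero_of_dvd_of_degree_lt h1 ?_)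
    rw [deg47, degree_mul, fP_degree]
    rw [degree_eq_natDegree hne] at hp ⊢
    have : p.natDegree < 24 := by exact_mod_cast hp
    have h3 : p.natDegree + 23 < 47 := by omega
    exact_mod_cast h3
  subst hp0 he
  rfl

theorem enc_range (v : RR × RR) : v ∈ LinearMap.range enc ↔
    ∃ c₁ ∈ Ideal.span {f₁}, ∃ c₂ ∈ Ideal.span {f₂}, v = (c₁, c₁ * g + c₂) := by
  constructor
  · rintro ⟨⟨⟨p, hp⟩, e⟩, rfl⟩
    refine ⟨_, Ideal.mul_mem_left _ (AdjoinRoot.mk _ p) (Ideal.mem_span_singleton_self _),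
      e • f₂, ?_, rfl⟩
    rw [Algebra.smul_def]
    exact Ideal.mul_mem_left _ _ (Ideal.mem_span_singleton_self _)
  · rintro ⟨c₁, h₁, c₂, h₂, rfl⟩
    obtain ⟨p, hp, rfl⟩ := mem_f₁ c₁ h₁
    rcases mem_f₂ c₂ h₂ with e | e
    · refine ⟨(⟨p, mem_degreeLT.mpr hp⟩, 0), ?_⟩
      change (_, _ + (0 : ZMod 2) • f₂) = _
      rw [e, zero_smul]
    · refine ⟨(⟨p, mem_degreeLT.mpr hp⟩, 1), ?_⟩
      change (_, _ + (1 : ZMod 2) • f₂) = _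
      rw [e, one_smul]

theorem enc_finrank : Module.finrank (ZMod 2) (LinearMap.range enc) = 25 := by
  have : Module.Finite (ZMod 2) (degreeLT (ZMod 2) 24) :=
    Module.Finite.equiv (degreeLTEquiv (ZMod 2) 24).symm
  rw [LinearMap.finrank_range_of_inj enc_inj, Module.finrank_prod,
    (degreeLTEquiv (ZMod 2) 24).finrank_eq, Module.finrank_fin_fun, Module.finrank_self]

/-- the code `𝒞₁ = {(c₁, c₁·g + c₂) : c₁ ∈ (f₁), c₂ ∈ (f₂)}` in
`R² ≅ 𝔽₂⁹⁴` (with `R = 𝔽₂[x]/(x⁴⁷-1)`) is an `𝔽₂`-linear code of length 94 and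
dimension 25, and every nonzero codeword has Hamming weight at least 27. -/
theorem stmt6 :
    ∃ W : Submodule (ZMod 2) (Rng (ZMod 2) 47 × Rng (ZMod 2) 47),
      (W : Set (Rng (ZMod 2) 47 × Rng (ZMod 2) 47)) =
        {v | ∃ c₁ ∈ Ideal.span {f₁}, ∃ c₂ ∈ Ideal.span {f₂}, v = (c₁, c₁ * g + c₂)} ∧
      Module.finrank (ZMod 2) W = 25 ∧
      ∀ c₁ ∈ Ideal.span {f₁}, ∀ c₂ ∈ Ideal.span {f₂},
        ((c₁, c₁ * g + c₂) : Rng (ZMod 2) 47 × Rng (ZMod 2) 47) ≠ 0 →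
        27 ≤ wt (by norm_num) c₁ + wt (by norm_num) (c₁ * g + c₂) := by
  refine ⟨LinearMap.range enc, ?_, enc_finrank, ?_⟩
  · ext v
    exact enc_range v
  · intro c₁ h₁ c₂ h₂ hne
    exact minDist _ c₁ h₁ c₂ h₂ hne
end

section
/- There exists an 𝔽_2-linear subspace C of 𝔽_2^{94} of dimension 25 such that every nonzero element of C has Hamming weight at least 27. -/
/-!
A quasi-cyclic `[94, 25, 27]` code: all pairs `(c, f c)` with `c` in the even subcode of the
quadratic residue code of length 47 and `f = x^9 + x^6 + x^2 + 1`, together with `(1, 0)` and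
`(0, 1)`.  A word of weight at most 26 has a half of weight at most 13; after a simultaneous
cyclic shift of both halves the first 24 places of that half have weight at most 6, and those
are information places, so only few words have to be checked.

Words are encoded as natural numbers, coordinate `i` being bit `7 * i`, so that the weight is
the residue modulo 127.
-/

namespace QC94

/-! The generators get names because the kernel hashes large literals badly. -/

/-- The word `(0, 1)`, in the spread encoding. -/
def zA : ℕ :=
  9417452230440572782641506215785017079313468455150917279068912152851870782935051376442566992204574859290921631569719449793717057099760316078970316554260172466770296747551162955799711499966182588416

/-- The word `(1, 0)`, in the spread encoding. -/
def zB : ℕ :=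
  8611223325917369780994103256368588052571533192492962348132955143346271650391243792218555815051393

/-! Generators, systematic on the first 24 places of the left half. -/

def a0 : ℕ :=
  9343882875209472231397752184962416506294705841694005921635639828572166312876129348622239519100943871957473687417806427016230781488325668216586194456518911634555203918751913011861813318089042821121

def a1 : ℕ :=
  9416877469580870559200515945292873346401614522484653751458857507802172167542019561001916557264766378682387962008686103535184970766237275860874521765297722715003323680576543992391753067892685406336

def a2 : ℕ :=
  73569390041884600446754622994397812717303381281731534086994566361422770308072376403255672295485518026851855981124387260643691024049880806744069552484600734517076639637776863839260120613423955968

def a3 : ℕ :=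
  9416881925361228857184591743282920027814832804061636363135304494262114599433264179616726053822146307437037565583921569362392451078384743263240902718028894018185809873635438571425295438518266363904

def a4 : ℕ :=
  9416881925361245326595547473378801796669596622529307574123952005055340018595717432925636380988684974511158527615894678282690725101479933891136079078816498818453437014316350477550332818959793913856

def a5 : ℕ :=
  9416881925363353409155920165014304585447390783222340602344140966610833884569043548807072683619674645188938057218075732201281876150127212690881238112096471977400728225302823904191979483060563345408

def a6 : ℕ :=
  72999049884079806155014498651199214857942006857814620770711838852722990849001937343271498867227405188439732832740603511806646976780095843133510352844343107180537949343360484930410629533125312512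

def a7 : ℕ :=
  9343878385162215187841855827353499501816576877800271458651115373148542828672247979938751855005107864120285802590797249511250813027852267921089325164075917719108857515950142071092560580240040001536

def a8 : ℕ :=
  73569390041901197503879878446723627687586889531959678601546539428121738972936144250013299489574221070694905647970249400422297829064327299883239926833410013763228772717373287878322295105910734848

def a9 : ℕ :=
  72999050153914504568146359224396532777378252511560428327287184920568171838751824421937632546211297964323366373905319368908523363423548483342291583875659418682793087030094536156311847481418711040

def a10 : ℕ :=
  9343878419701056584722733980722756195504416321479734825892759669832725995360233526008016965915046139433390895859880879220290990518214205867813322736084405591397515139852100628007916477621595013120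

def a11 : ℕ :=
  73573810469714695622215496278914498553025227045900459289774475357501377024163434854245114753082835730713170054218771251019395514291590568332117003241396117034451222249809497278236220392703262720

def a12 : ℕ :=
  73573845548192292199715954662305200382094707650317766263033447188208814183727235233065920077300681302216102582127316827078926278121905226054098130835400432449406829614673199803862899353762922496

def a13 : ℕ :=
  9417452230168613401563642196775065648908122579240674081668281240090728215517086109832437769894487206683661130512296553866102563599603868934924560746931255353524074190678169574894451117281654079488

def a14 : ℕ :=
  34810800777966594433273783091884272116511129267280756833426248629499554126096540455691219550817248634518721292346091620074486177418537708852303193752912770764094256646320126164517406113792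

def a15 : ℕ :=
  9343878419970857958359994995672654483386660839898259679822113872567856917512588597019580757484834931971801863902491058327091017646002076236551831109289750259259143967921376762234270450789784748032

def a16 : ℕ :=
  9417447740123497508033436174382412278631374752340172703590179876353774774075235766142238044126710696980837599791519799374266349215783663715595697085153930601937425292407360971547525164977233068032

def a17 : ℕ :=
  574760585635149832965299533414487307993959775305661277731391756289134056398118442105353966612792779695381054123784394752898394318879923734988549904627883870842232131862966176922289569154465792

def a18 : ℕ :=
  9417452230166488850605502285443765480784877184675586820399050925727823439857808642085702265440819362352320946331447846305527203358265769969569450801696591650343419407193008115556944542454989717504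

def a19 : ℕ :=
  35082743300608503083680204611659682620842298709742237071878059913887069997678685025760703625228792146507304834218635650969018066298040289547062387628963640618344987096982620000272171139072

def a20 : ℕ :=
  9343878385162215058169556136196571704437273372360048324187953430304684320734187659955373546412079129205472928626220439700565817086923964776626119614008856490416454362730037821502152797079893704704

def a21 : ℕ :=
  9417452195629788732409610187321007984152970597231226224762716486039867161710555710360761061439453451071976129430167019574918709753565021493246696851791828442841281480622331025582398399525062443008

def a22 : ℕ :=
  4455780358429682691643393164180543725813720454951193045351936463516735445258471159137935540269246419814636308207405866938458540720500877849867741119165244350777234658011161283906714300579840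

def a23 : ℕ :=
  9344453145477998780833711276839998200358041065762682857806133716691150733615706615906455745961598743835202076225105665392476940961440265994778193212488683629873764495169935932222386975180754780160

def rowsA : List ℕ :=
  [a0, a1, a2, a3, a4, a5, a6, a7, a8, a9, a10, a11, a12, a13, a14, a15, a16, a17, a18, a19, a20, a21, a22, a23]

/-! Generators, systematic on the first 24 places of the right half. -/

def b0 : ℕ :=
  4490317075274608008695643389326418434406269855760279364831747936459622278907360354352657585550886673390657145559360259358194117746447708454329866152814677167106205460297485541312135885242368

def b1 : ℕ :=
  574760585635149825113042353833781559604002541537315758698463735866831651700142125357140170950513494194004114631598113197848847071545306682154222867560278677389594298918078149287953393311023104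

def b2 : ℕ :=
  73569354961299177614469421290724039629312325316776417113403358190954451417618192045713941881664625020246809750721165438345937543529491226209304617659933670281609969300121587933580015276881100928

def b3 : ℕ :=
  9416877435046294734652085925212677072551977640547381390515629848442169781455128581851384560853072002591591648092309176108280005571774876954790991060471509796046076070415563255498241955440780918784

def b4 : ℕ :=
  9343882840672738658753565881114677960987305585850463123651695532640206490499483248626389771956967095026854679459082434201545771520601883089903130086995040018823571487705725975258259216759080894464

def b5 : ℕ :=
  574760857561203071895119621342789414437928213565378028726379045405307701585235637271653377807873010987210966403326115381282165248876071752241029592154513704859602262895153304182572133524717568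

def b6 : ℕ :=
  73569389767833993202575311531877045048054811336368387676976517811879385802910161570771632359406660257681785448739609874594766497013156966103993964314655739982182903255677638808406792387002646656

def b7 : ℕ :=
  9416881890282751129929639876080261766151015851055153622652994279920561382772500681058768942004051427968078360788935234264391467670202956745139863241928303221609486483325431676640956992339497189504

def b8 : ℕ :=
  9344453180556476508088662660975008995002514422579103470635438454904805598689474687424320621621612850800752670315171913947128741224233835384631287532115867562305931857722106283090345135982195523712

def b9 : ℕ :=
  73569354959174626656206327766909533397798268959080118026122914317860849522181270017802340475660890505162864513912215318855597644320109872680493323030768773027407401956984721540606721414425214976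

def b10 : ℕ :=
  9416877434774352211994409954164420274918178426762255107343733032686188738839202562278699580884593984660846657780763560813516498472974063703103145347938402947508147450494044357197660341046427516928

def b11 : ℕ :=
  9343882875481414755060641223235216157156840954511655958344925063330375327974557333943096450427014819918288873188678097896098623145383917289545510875486286245988134530944541668004394185532695904384

def b12 : ℕ :=
  570305351269979708909130182706937633360739860029105832180271763940312225244577681585255326097689308353583866046073497220669108545463713411131561834479955397908801155416582421020071573235712128

def b13 : ℕ :=
  72999084962557402740368663386488017070174702083725546519074785784359964831305943242912681740504231469258734853897407644245645893819355316624839914813434290932326547893322549890569161374171152384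

def b14 : ℕ :=
  9343882875207347550767188913470466184982361866716869954441572580398075498407160735092823262784541628065118061298868178463442674408877480527979509096119589239337798130345286385992852655893907505152

def b15 : ℕ :=
  570339887986824626311605870796662858088910451219208762320708006234792435507978710385499695924589650596129623223266805109428143893289330944004718494780326451348814439579994054411597040215654528

def b16 : ℕ :=
  73003505662313552167885551461972845835380537756058721577050624798053431745021274929343961078346373040761900923827176556896428140739186575633536607559438017998458716391541037991537643419076657280

def b17 : ℕ :=
  9344448724776134677489350587132524266928708832775516361862479974150839263362723190956027018028335749217523318249878599282742802014615881681092685767608066303802715698117252862916818357641812131840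

def b18 : ℕ :=
  72999084692739302381598240809082975777741036434310171156688131965624298707082647762809857230994489242906358892605767907200266186242133603206835192671947189712174439650991305848474838528503595008

def b19 : ℕ :=
  9343882840670630704844574823562620899550852663591701908056080891599910234506578913639661725567293520989970373492469937307047470577686746821212018596457761389640634153095575848606734054533051203712

def b20 : ℕ :=
  574760587743102721038779275729750577970686857418483628277833995779493829285055061074201781894001934636330599416285257250168771688059041852634972814457064290165646640617853447997508093208428544

def b21 : ℕ :=
  73569355231117148292963747293408073980247917749565904419562751459775210148487047817497828082431162484769034813138544640110016745176325910979648725094793105078037311995432778097304920412519415936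

def b22 : ℕ :=
  9416877469582994981499359653556233469471733471944435765704032186851226899006342120639721994551187713035254428073257814644229627569776738869994228996133292011263717567934150832904867755797417820288

def b23 : ℕ :=
  9343878419970857958359994516408910612493976001644033985953368814405746296034170341527862205958114005319013442187589966274705668827059983503726083255632094188238319172228149653781632045373758390400

def rowsB : List ℕ :=
  [b0, b1, b2, b3, b4, b5, b6, b7, b8, b9, b10, b11, b12, b13, b14, b15, b16, b17, b18, b19, b20, b21, b22, b23]

/-- How the cyclic shifts of the generators are combined from the generators. -/
def maskT : List ℕ :=
  [1, 16777217, 3, 5, 8, 16777232, 16777248, 65, 128, 16777472, 16777729, 1024, 16779264, 16781313, 8192, 16385, 16809985, 65537, 131073, 17039361, 524289, 17825793, 2097153, 4194305, 25165825]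

/-- How the generators of the first kind are combined from those of the second. -/
def maskB : List ℕ :=
  [33554430, 1253, 33551924, 5012, 10024, 33535304, 37256, 33479916, 33405400, 297128, 595380, 1190760, 31174088, 28794740, 24035048, 19038764, 4522172, 24510084, 18088692, 2621708, 28311012, 23068460, 20971940, 25164980, 16776588]

/-- If `x` has weight at least 27 or is zero, continue with `k`. -/
noncomputable def chk (x : ℕ) (k : Bool) : Bool :=
  Bool.rec (motive := fun _ => Bool)
    (Bool.rec (motive := fun _ => Bool) false k (Nat.beq x 0)) k (Nat.ble 27 (Nat.mod x 127))

/-- Check all sums of `acc`, at most `b` members of `l` and possibly `z`. -/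
noncomputable def en (z : ℕ) (l : List ℕ) : ℕ → ℕ → Bool :=
  List.rec (motive := fun _ => ℕ → ℕ → Bool)
    (fun _ acc => chk acc (chk (Nat.xor acc z) true))
    (fun r _ ih b acc =>
      Nat.rec (motive := fun _ => Bool) (chk acc (chk (Nat.xor acc z) true))
        (fun b' _ => Bool.rec (motive := fun _ => Bool) false
          (ih b' (Nat.xor acc r)) (ih (Nat.succ b') acc)) b) l

theorem en_A : en zA rowsA 6 0 = true := by
  decide +kernel

theorem en_B : en zB rowsB 6 0 = true := by
  decide +kernel

/-! ### Words and their encoding -/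

/-- The word encoded by a number. -/
def vec (x : ℕ) : Fin 94 → ZMod 2 := fun i => if x.testBit (7 * i.val) then 1 else 0

/-- Only the bits used by the encoding are set. -/
def Spread (x : ℕ) : Prop := ∀ j, x.testBit j = true → 7 ∣ j ∧ j < 658

theorem vec_zero : vec 0 = 0 := by
  funext i; simp [vec]

theorem vec_xor (x y : ℕ) : vec (Nat.xor x y) = vec x + vec y := by
  funext i
  have h : Nat.xor x y = x ^^^ y := rfl
  simp only [vec, h, Nat.testBit_xor, Pi.add_apply]
  cases x.testBit (7 * i.val) <;> cases y.testBit (7 * i.val) <;> decide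

theorem Spread.xor {x y : ℕ} (hx : Spread x) (hy : Spread y) : Spread (Nat.xor x y) := by
  intro j hj
  have h : Nat.xor x y = x ^^^ y := rfl
  rw [h, Nat.testBit_xor] at hj
  by_cases h1 : x.testBit j = true
  · exact hx j h1
  · apply hy j
    simpa [h1] using hj

theorem spread_zero : Spread 0 := by
  intro j hj; simp at hj

theorem spread_mod (n : ℕ) : ∀ x : ℕ, (∀ j, x.testBit j = true → 7 ∣ j ∧ j < 7 * n) →
    x % 127 = (∑ i ∈ Finset.range n, if x.testBit (7 * i) then 1 else 0) % 127 := by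
  induction n with
  | zero =>
    intro x hx
    have : x = 0 := by
      apply Nat.eq_of_testBit_eq
      intro j
      rw [Nat.zero_testBit]
      by_contra h
      have := (hx j (by simpa using h)).2
      omega
    simp [this]
  | succ n ih =>
    intro x hx
    have hq : ∀ j, (x / 2 ^ 7).testBit j = x.testBit (7 + j) := by
      intro j; rw [Nat.testBit_div_two_pow, Nat.add_comm]
    have h1 := ih (x / 2 ^ 7) (by
      intro j hj
      rw [hq] at hj
      have := hx _ hj
      omega)
    have hr : x % 2 ^ 7 = if x.testBit 0 then 1 else 0 := by
      apply Nat.eq_of_testBit_eq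
      intro j
      rw [Nat.testBit_mod_two_pow]
      rcases Nat.eq_zero_or_pos j with rfl | hj
      · cases h : x.testBit 0 <;> simp
      · have h2 : (if x.testBit 0 = true then 1 else 0 : ℕ).testBit j = false := by
          split
          · rw [Nat.testBit_one_eq_true_iff_self_eq_zero.not.mpr (by omega) |> Bool.eq_false_of_not_eq_true]
          · simp
        rw [h2]
        by_cases h7 : j < 7
        · have : x.testBit j = false := by
            by_contra h
            have := (hx j (by simpa using h)).1
            omega
          simp [this]
        · simp [h7]
    rw [Finset.sum_range_succ']
    have h3 : ∀ i, x.testBit (7 * (i + 1)) = (x / 2 ^ 7).testBit (7 * i) := by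
      intro i; rw [hq]; congr 1; ring
    simp only [h3, Nat.mul_zero]
    rw [← hr]
    have := Nat.div_add_mod x (2 ^ 7)
    omega

theorem hammingNorm_eq_sum (v : Fin 94 → ZMod 2) :
    hammingNorm v = ∑ i, if v i ≠ 0 then 1 else 0 := by
  unfold hammingNorm
  rw [Finset.card_filter]

theorem weight {x : ℕ} (hx : Spread x) : hammingNorm (vec x) = x % 127 := by
  have h1 : hammingNorm (vec x) ≤ 94 := by
    simpa using (hammingNorm_le_card_fintype (x := vec x))
  have h2 := spread_mod 94 x hx
  have h3 : (∑ i ∈ Finset.range 94, if x.testBit (7 * i) then 1 else 0) = hammingNorm (vec x) := by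
    rw [hammingNorm_eq_sum, Finset.sum_range]
    apply Finset.sum_congr rfl
    intro i _
    have h4 : vec x i = if x.testBit (7 * i.val) then 1 else 0 := rfl
    rw [h4]
    cases x.testBit (7 * i.val)
    · rfl
    · rfl
  rw [h3] at h2
  rw [h2, Nat.mod_eq_of_lt (by omega)]

/-! ### The enumeration -/

theorem en_nil (z b acc : ℕ) : en z [] b acc = chk acc (chk (Nat.xor acc z) true) := rfl

theorem en_cons_zero (z r acc : ℕ) (l : List ℕ) :
    en z (r :: l) 0 acc = chk acc (chk (Nat.xor acc z) true) := rfl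

theorem en_cons_succ (z r b acc : ℕ) (l : List ℕ) :
    en z (r :: l) (b + 1) acc =
      Bool.rec (motive := fun _ => Bool) false (en z l b (Nat.xor acc r)) (en z l (b + 1) acc) := rfl

/-- What `chk` tests. -/
def Good (x : ℕ) : Prop := 27 ≤ x % 127 ∨ x = 0

theorem chk_spec {x : ℕ} {k : Bool} (h : chk x k = true) : Good x ∧ k = true := by
  have e : chk x k = ((Nat.ble 27 (x % 127) || Nat.beq x 0) && k) := by
    change Bool.rec (motive := fun _ => Bool)
      (Bool.rec (motive := fun _ => Bool) false k (Nat.beq x 0)) k (Nat.ble 27 (x % 127)) = _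
    cases Nat.ble 27 (x % 127) <;> cases Nat.beq x 0 <;> cases k <;> rfl
  rw [e, Bool.and_eq_true, Bool.or_eq_true] at h
  refine ⟨?_, h.2⟩
  rcases h.1 with h | h
  · exact Or.inl (Nat.le_of_ble_eq_true h)
  · exact Or.inr (Nat.eq_of_beq_eq_true h)

theorem zmod2_cases (a : ZMod 2) : a = 0 ∨ a = 1 := by
  revert a; decide

theorem en_sound (z : ℕ) : ∀ (l : List ℕ) (b acc : ℕ) (a : Fin l.length → ZMod 2),
    en z l b acc = true → Spread acc → (∀ r ∈ l, Spread r) →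
    (∑ i, if a i ≠ 0 then 1 else 0) ≤ b →
    ∃ x, Spread x ∧ Good x ∧ Good (Nat.xor x z) ∧ vec x = vec acc + ∑ i, a i • vec (l.get i) := by
  intro l
  induction l with
  | nil =>
    intro b acc a h hs _ _
    rw [en_nil] at h
    obtain ⟨h1, h2⟩ := chk_spec h
    obtain ⟨h2, -⟩ := chk_spec h2
    exact ⟨acc, hs, h1, h2, by simp⟩
  | cons r l ih =>
    intro b acc a h hs hl hb
    have hsum : ∑ i, a i • vec ((r :: l).get i) =
        a 0 • vec r + ∑ i : Fin l.length, a i.succ • vec (l.get i) :=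
      Fin.sum_univ_succ (n := l.length) (fun i => a i • vec ((r :: l).get i))
    have hcount : (∑ i, if a i ≠ 0 then 1 else 0) =
        (if a 0 ≠ 0 then 1 else 0) + ∑ i : Fin l.length, if a i.succ ≠ 0 then 1 else 0 :=
      Fin.sum_univ_succ (n := l.length) (fun i => if a i ≠ 0 then 1 else 0)
    rw [hcount] at hb
    rw [hsum]
    cases b with
    | zero =>
      rw [en_cons_zero] at h
      obtain ⟨h1, h2⟩ := chk_spec h
      obtain ⟨h2, -⟩ := chk_spec h2
      refine ⟨acc, hs, h1, h2, ?_⟩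
      have h0 : a 0 = 0 := by
        by_contra h0
        rw [if_pos h0] at hb
        omega
      have hr : ∀ i : Fin l.length, a i.succ = 0 := by
        have : (∑ i : Fin l.length, if a i.succ ≠ 0 then 1 else 0) = 0 := by omega
        intro i
        by_contra hi
        have := (Finset.sum_eq_zero_iff.mp this) i (Finset.mem_univ i)
        rw [if_pos hi] at this
        omega
      simp [h0, hr]
    | succ b =>
      rw [en_cons_succ] at h
      have hh : en z l (b + 1) acc = true ∧ en z l b (Nat.xor acc r) = true := by
        revert h
        cases en z l (b + 1) acc <;> simp
      have hl' : ∀ r ∈ l, Spread r := fun r hr => hl r (List.mem_cons_of_mem _ hr)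
      rcases zmod2_cases (a 0) with h0 | h0
      · obtain ⟨x, h1, h2, h3, h4⟩ := ih (b + 1) acc (fun i => a i.succ) hh.1 hs hl' (by omega)
        exact ⟨x, h1, h2, h3, by rw [h4, h0]; simp⟩
      · have hne : a 0 ≠ 0 := by rw [h0]; decide
        rw [if_pos hne] at hb
        obtain ⟨x, h1, h2, h3, h4⟩ := ih b (Nat.xor acc r) (fun i => a i.succ) hh.2
          (hs.xor (hl r List.mem_cons_self)) hl' (by omega)
        exact ⟨x, h1, h2, h3, by rw [h4, h0, vec_xor, one_smul, add_assoc]⟩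

/-! ### The code and its symmetry -/

/-- The code generated by the encoded words of a list. -/
def code (l : List ℕ) : Submodule (ZMod 2) (Fin 94 → ZMod 2) :=
  Submodule.span (ZMod 2) (Set.range fun i : Fin l.length => vec (l.get i))

/-- The sum of the members of a list selected by the bits of `m`. -/
def sel : List ℕ → ℕ → ℕ
  | [], _ => 0
  | r :: l, m => Nat.xor (if m % 2 = 1 then r else 0) (sel l (m / 2))

theorem sel_mem (S : Submodule (ZMod 2) (Fin 94 → ZMod 2)) :
    ∀ (l : List ℕ) (m : ℕ), (∀ r ∈ l, vec r ∈ S) → vec (sel l m) ∈ S := by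
  intro l
  induction l with
  | nil => intro m _; rw [sel, vec_zero]; exact S.zero_mem
  | cons r l ih =>
    intro m h
    rw [sel, vec_xor]
    apply S.add_mem
    · split
      · exact h r List.mem_cons_self
      · rw [vec_zero]; exact S.zero_mem
    · exact ih _ fun r hr => h r (List.mem_cons_of_mem _ hr)

theorem sel_mem_code (l : List ℕ) (m : ℕ) : vec (sel l m) ∈ code l := by
  apply sel_mem
  intro r hr
  obtain ⟨i, rfl⟩ := List.mem_iff_get.mp hr
  exact Submodule.subset_span ⟨i, rfl⟩

/-- Simultaneous cyclic shift of both halves. -/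
def sh (i : Fin 94) : Fin 94 :=
  if i.val = 46 then 0 else if i.val = 93 then 47 else i + 1

def eL (i : Fin 47) : Fin 94 := Fin.castAdd 47 i
def eR (i : Fin 47) : Fin 94 := Fin.natAdd 47 i

theorem sh_eL : ∀ i, sh (eL i) = eL (i + 1) := by decide +kernel
theorem sh_eR : ∀ i, sh (eR i) = eR (i + 1) := by decide +kernel

theorem sh_bij : Function.Bijective sh := by
  apply Finite.injective_iff_bijective.mp
  have : ∀ i j, sh i = sh j → i = j := by decide +kernel
  exact fun i j => this i j

theorem split_weight (v : Fin 94 → ZMod 2) : hammingNorm v =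
    (∑ i, if v (eL i) ≠ 0 then 1 else 0) + ∑ i, if v (eR i) ≠ 0 then 1 else 0 := by
  rw [hammingNorm_eq_sum]
  exact Fin.sum_univ_add (a := 47) (b := 47) (fun i : Fin 94 => if v i ≠ 0 then 1 else 0)

theorem weight_sh (v : Fin 94 → ZMod 2) (k : ℕ) : hammingNorm (v ∘ sh^[k]) = hammingNorm v := by
  rw [hammingNorm_eq_sum, hammingNorm_eq_sum]
  exact (sh_bij.iterate k).sum_comp (fun i => if v i ≠ 0 then 1 else 0)

theorem shift_rows : ∀ k : Fin 25, ∀ j : Fin 94,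
    ((zA :: rowsA).getD k.val 0).testBit (7 * (sh j).val) =
      (sel (zA :: rowsA) (maskT.getD k.val 0)).testBit (7 * j.val) := by
  decide +kernel

theorem shift_code {v : Fin 94 → ZMod 2} (hv : v ∈ code (zA :: rowsA)) :
    v ∘ sh ∈ code (zA :: rowsA) := by
  have h : code (zA :: rowsA) ≤
      (code (zA :: rowsA)).comap (LinearMap.funLeft (ZMod 2) (ZMod 2) sh) := by
    refine Submodule.span_le.mpr ?_
    rintro _ ⟨i, rfl⟩
    have e : LinearMap.funLeft (ZMod 2) (ZMod 2) sh (vec ((zA :: rowsA).get i)) =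
        vec (sel (zA :: rowsA) (maskT.getD i.val 0)) := by
      funext j
      have := shift_rows i j
      rw [List.getD_eq_getElem _ _ i.isLt] at this
      simp only [LinearMap.funLeft_apply, vec, List.get_eq_getElem, this]
    change LinearMap.funLeft (ZMod 2) (ZMod 2) sh (vec ((zA :: rowsA).get i)) ∈ code _
    rw [e]
    exact sel_mem_code _ _
  exact h hv

theorem shift_code_iter {v : Fin 94 → ZMod 2} (hv : v ∈ code (zA :: rowsA)) (k : ℕ) :
    v ∘ sh^[k] ∈ code (zA :: rowsA) := by
  induction k with
  | zero => exact hv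
  | succ k ih => rw [Function.iterate_succ, ← Function.comp_assoc]; exact shift_code ih

theorem rows_AB : ∀ k : Fin 25, (zA :: rowsA).getD k.val 0 =
    sel (zB :: rowsB) (maskB.getD k.val 0) := by
  decide +kernel

theorem code_AB : code (zA :: rowsA) ≤ code (zB :: rowsB) := by
  refine Submodule.span_le.mpr ?_
  rintro _ ⟨i, rfl⟩
  have := rows_AB i
  rw [List.getD_eq_getElem _ _ i.isLt] at this
  simp only [List.get_eq_getElem, this]
  exact sel_mem_code _ _

/-! ### Systematic generators -/

/-- Information places. -/
def pos (e e' : Fin 47 → Fin 94) (i : Fin 25) : Fin 94 :=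
  Fin.cases (e' 0) (fun i : Fin 24 => e (Fin.castLE (by omega) i)) i

/-- The generators in `l` are systematic. -/
def Sys (l : List ℕ) (e e' : Fin 47 → Fin 94) : Prop :=
  ∀ k i : Fin 25, (l.getD k.val 0).testBit (7 * (pos e e' i).val) = decide (k = i)

theorem sys_A : Sys (zA :: rowsA) eL eR := by unfold Sys; decide +kernel
theorem sys_B : Sys (zB :: rowsB) eR eL := by unfold Sys; decide +kernel

theorem sys_coeff {l : List ℕ} {e e' : Fin 47 → Fin 94} (hl : l.length = 25) (h : Sys l e e')
    (a : Fin l.length → ZMod 2) (i : Fin l.length) :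
    (∑ k, a k • vec (l.get k)) (pos e e' (i.cast hl)) = a i := by
  rw [Finset.sum_apply]
  rw [Finset.sum_eq_single i]
  · have := h (i.cast hl) (i.cast hl)
    rw [List.getD_eq_getElem _ _ (by simp)] at this
    simp at this
    simp [vec, this]
  · intro k _ hk
    have := h (k.cast hl) (i.cast hl)
    rw [List.getD_eq_getElem _ _ (by simp)] at this
    simp [hk] at this
    simp [vec, this]
  · simp

set_option exponentiation.threshold 1000

theorem spread_of_land {x : ℕ} (h : ∀ j : Fin 94, ∀ t : Fin 6, x.testBit (7 * j.val + t.val + 1) = false)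
    (hx : x < 2 ^ 658) : Spread x := by
  intro j hj
  have hlt : j < 658 := by
    by_contra hc
    rw [Nat.testBit_lt_two_pow (lt_of_lt_of_le hx (Nat.pow_le_pow_right (by norm_num) (by omega)))] at hj
    exact absurd hj (by simp)
  refine ⟨?_, hlt⟩
  by_contra hd
  have := h ⟨j / 7, by omega⟩ ⟨j % 7 - 1, by omega⟩
  have e : 7 * (j / 7) + (j % 7 - 1) + 1 = j := by omega
  simp only [e] at this
  rw [this] at hj
  exact absurd hj (by simp)



theorem spread_A : ∀ r ∈ rowsA, Spread r := by
  intro r hr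
  have h : ∀ r ∈ rowsA, (∀ j : Fin 94, ∀ t : Fin 6, r.testBit (7 * j.val + t.val + 1) = false) ∧
    r < 2 ^ 658 := by decide +kernel
  exact spread_of_land (h r hr).1 (h r hr).2

theorem spread_B : ∀ r ∈ rowsB, Spread r := by
  intro r hr
  have h : ∀ r ∈ rowsB, (∀ j : Fin 94, ∀ t : Fin 6, r.testBit (7 * j.val + t.val + 1) = false) ∧
    r < 2 ^ 658 := by decide +kernel
  exact spread_of_land (h r hr).1 (h r hr).2

theorem spread_zA : Spread zA := by
  have h : (∀ j : Fin 94, ∀ t : Fin 6, zA.testBit (7 * j.val + t.val + 1) = false) ∧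
    zA < 2 ^ 658 := by decide +kernel
  exact spread_of_land h.1 h.2

theorem spread_zB : Spread zB := by
  have h : (∀ j : Fin 94, ∀ t : Fin 6, zB.testBit (7 * j.val + t.val + 1) = false) ∧
    zB < 2 ^ 658 := by decide +kernel
  exact spread_of_land h.1 h.2

/-! ### Words of small weight -/

theorem good_weight {x : ℕ} (hs : Spread x) (hg : Good x) (h0 : vec x ≠ 0) :
    27 ≤ hammingNorm (vec x) := by
  rcases hg with h | h
  · rwa [weight hs]
  · exact absurd (by rw [h, vec_zero]) h0

/-- Words with at most six ones in the first 24 places of the half `e`. -/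
theorem window {z : ℕ} {l : List ℕ} {e e' : Fin 47 → Fin 94} (hlen : l.length = 24)
    (hen : en z l 6 0 = true) (hsys : Sys (z :: l) e e') (hl : ∀ r ∈ l, Spread r) (hz : Spread z)
    {v : Fin 94 → ZMod 2} (hv : v ∈ code (z :: l)) (hv0 : v ≠ 0)
    (hw : (∑ i : Fin 24, if v (e (Fin.castLE (by omega) i)) ≠ 0 then 1 else 0) ≤ 6) :
    27 ≤ hammingNorm v := by
  obtain ⟨a, rfl⟩ := (Submodule.mem_span_range_iff_exists_fun (ZMod 2)).mp hv
  have hlen' : (z :: l).length = 25 := by simp [hlen]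
  have hc := sys_coeff hlen' hsys a
  have hsum : ∑ i, a i • vec ((z :: l).get i) =
      a 0 • vec z + ∑ i : Fin l.length, a i.succ • vec (l.get i) :=
    Fin.sum_univ_succ (n := l.length) (fun i => a i • vec ((z :: l).get i))
  have hcount : (∑ i : Fin l.length, if a i.succ ≠ 0 then 1 else 0) ≤ 6 := by
    refine le_trans (le_of_eq ?_) hw
    apply Fintype.sum_equiv (finCongr hlen)
    intro i
    have := hc i.succ
    rw [← this]
    rfl
  obtain ⟨x, h1, h2, h3, h4⟩ := en_sound z l 6 0 (fun i => a i.succ) hen spread_zero hl hcount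
  rw [vec_zero, zero_add] at h4
  rw [hsum, ← h4] at hv0 ⊢
  rcases zmod2_cases (a 0) with h0 | h0
  · rw [h0, zero_smul, zero_add] at hv0 ⊢
    exact good_weight h1 h2 hv0
  · rw [h0, one_smul, add_comm, ← vec_xor] at hv0 ⊢
    exact good_weight (h1.xor hz) h3 hv0

theorem iter_e {e : Fin 47 → Fin 94} (he : ∀ i, sh (e i) = e (i + 1)) (k : ℕ) (i : Fin 47) :
    sh^[k] (e i) = e (i + Fin.ofNat 47 k) := by
  induction k with
  | zero =>
    have h : i + Fin.ofNat 47 0 = i := by revert i; decide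
    rw [h]; rfl
  | succ k ih =>
    have h : i + Fin.ofNat 47 k + 1 = i + Fin.ofNat 47 (k + 1) := by
      apply Fin.ext
      simp only [Fin.val_add, Fin.val_ofNat, Fin.val_one]
      omega
    rw [Function.iterate_succ_apply', ih, he, h]

/-- A half of weight at most 13 has a cyclic window with at most six ones. -/
theorem exists_window {e : Fin 47 → Fin 94} (he : ∀ i, sh (e i) = e (i + 1))
    {v : Fin 94 → ZMod 2} (h : (∑ i, if v (e i) ≠ 0 then 1 else 0) ≤ 13) :
    ∃ k : ℕ, (∑ i : Fin 24, if (v ∘ sh^[k]) (e (Fin.castLE (by omega) i)) ≠ 0 then 1 else 0) ≤ 6 := by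
  by_contra! hc
  have h1 : ∑ k : Fin 47, 7 ≤ ∑ k : Fin 47,
      ∑ i : Fin 24, if (v ∘ sh^[k.val]) (e (Fin.castLE (by omega) i)) ≠ 0 then 1 else 0 :=
    Finset.sum_le_sum fun k _ => hc k.val
  rw [Finset.sum_comm] at h1
  have h2 : ∀ i : Fin 24,
      (∑ k : Fin 47, if (v ∘ sh^[k.val]) (e (Fin.castLE (by omega) i)) ≠ 0 then 1 else 0) ≤ 13 := by
    intro i
    refine le_trans (le_of_eq ?_) h
    apply Fintype.sum_equiv (Equiv.addLeft (Fin.castLE (by omega) i : Fin 47))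
    intro k
    simp only [Function.comp_apply, iter_e he, Fin.ofNat_val_eq_self, Equiv.coe_addLeft]
    rfl
  have h3 := h1.trans (Finset.sum_le_sum fun i _ => h2 i)
  simp at h3

theorem min_dist {v : Fin 94 → ZMod 2} (hv : v ∈ code (zA :: rowsA)) (hv0 : v ≠ 0) :
    27 ≤ hammingNorm v := by
  by_contra hlt
  have hne : ∀ k : ℕ, v ∘ sh^[k] ≠ 0 := by
    intro k h
    apply hv0
    rw [← hammingNorm_eq_zero, ← weight_sh v k, h, hammingNorm_zero]
  have hs := split_weight v
  rcases (by omega : (∑ i, if v (eL i) ≠ 0 then 1 else 0) ≤ 13 ∨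
      (∑ i, if v (eR i) ≠ 0 then 1 else 0) ≤ 13) with h | h
  · obtain ⟨k, hk⟩ := exists_window sh_eL h
    apply hlt
    rw [← weight_sh v k]
    exact window rfl en_A sys_A spread_A spread_zA (shift_code_iter hv k) (hne k) hk
  · obtain ⟨k, hk⟩ := exists_window sh_eR h
    apply hlt
    rw [← weight_sh v k]
    exact window rfl en_B sys_B spread_B spread_zB (code_AB (shift_code_iter hv k)) (hne k) hk

theorem dim : Module.finrank (ZMod 2) (code (zA :: rowsA)) = 25 := by
  have hlen : (zA :: rowsA).length = 25 := rfl
  have h : LinearIndependent (ZMod 2) (fun i : Fin (zA :: rowsA).length => vec ((zA :: rowsA).get i)) := by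
    rw [Fintype.linearIndependent_iff]
    intro a ha i
    have := sys_coeff hlen sys_A a i
    rw [ha] at this
    exact this.symm
  have := finrank_span_eq_card h
  exact this.trans ((Fintype.card_fin _).trans hlen)

end QC94

/-- there exists an `𝔽₂`-linear code of length 94, dimension 25
and minimum distance at least 27. -/
theorem stmt9 :
    ∃ C : Submodule (ZMod 2) (Fin 94 → ZMod 2),
      Module.finrank (ZMod 2) C = 25 ∧
      ∀ v ∈ C, v ≠ 0 → 27 ≤ hammingNorm v :=
  ⟨QC94.code (QC94.zA :: QC94.rowsA), QC94.dim, fun _ hv hv0 => QC94.min_dist hv hv0⟩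
end

section
/- There exists an 𝔽_2-linear subspace C of 𝔽_2^{102} of dimension 29 such that every nonzero element of C has Hamming weight at least 28. -/
/-- The rows of a systematic generator matrix of a quasi-cyclic code of index 2;
bit `j` of row `i` is the entry at `(i, j)`. -/
def qcRows : List Nat :=
  [229258366682943180328528773121,
   458516733365886360657057546242,
   2959524277509701536870165381124,
   2638109352176909147130508083208,
   3448259156514682691519269306384,
   3257499955203267876116064370688,
   4576146001567482070343165673472,
   1940447267756652544087598039040,
   2284845617405133443877417517056,
   1853450917919482417669021368320,
   1444431481588122171075767304224,
   2888862963176244342151534608448,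
   1098122136074005671504286580864,
   2196244272148011343008573161728,
   2038036206110663846703078048256,
   4076072412221327693406156096512,
   1265345068507247404441936070656,
   2304386408647673013233728360448,
   4500987487001295096186048356352,
   4301487073988063177930413457408,
   3299529575890544845914451771392,
   4622227551468239438087050035200,
   4078504164776156324974899101696,
   1034296451433530012038680805376,
   2068592902867060024077361610752,
   2138641415671933848242403409920,
   4277282831343867696484806819840,
   3706901835838964835338042736640,
   4164051178058091615151531753472]

/-- The information set: row `i` restricted to it is the `i`-th unit vector. -/
def qcInfo : List Nat := [0, 1, 2, 3, 4, 51, 52, 53, 54, 55, 5, 6, 7, 8, 9, 10, 11, 12, 13, 14, 15, 16, 17, 18, 19, 20, 21, 24, 25]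

namespace QC

/-- Inner product of two bit lists. -/
def dot : List Bool → List Bool → Bool
  | g :: l, a :: u => xor (g && a) (dot l u)
  | _, _ => false

/-- All-ones truth table in `n` variables. -/
def ones (n : Nat) : Nat := Nat.sub (Nat.pow 2 (Nat.pow 2 n)) 1

/-- Truth table of the linear function `u ↦ dot l u`, packed in one number. -/
def tt : List Bool → Nat
  | [] => 0
  | g :: l =>
    let t := tt l
    Nat.add (Nat.mul (Nat.pow 2 (Nat.pow 2 l.length))
      (cond g (Nat.xor (ones l.length) t) t)) t

/-- Truth table in the last variables, the first ones being fixed to `o`. -/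
def tto : List Bool → List Bool → Bool → Nat
  | g :: l, a :: o, b => tto l o (xor b (g && a))
  | l, _, b => cond b (Nat.xor (ones l.length) (tt l)) (tt l)

/-- Position in the truth table. -/
def idx : List Bool → Nat
  | [] => 0
  | a :: u => idx u + 2 ^ u.length * a.toNat

/-- Bit-sliced saturating counter. -/
def run : List Nat → Nat → Nat → Nat → Nat → Nat → Nat → Nat
  | [], _, _, _, _, _, s => s
  | x :: r, c0, c1, c2, c3, c4, s =>
    let k1 := Nat.land c0 x
    let k2 := Nat.land c1 k1
    let k3 := Nat.land c2 k2
    let k4 := Nat.land c3 k3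
    let k5 := Nat.land c4 k4
    run r (Nat.xor c0 x) (Nat.xor c1 k1) (Nat.xor c2 k2) (Nat.xor c3 k3) (Nat.xor c4 k4)
      (Nat.lor s k5)

/-- Column `j` of the generator matrix. -/
def col (j : Nat) : List Bool := qcRows.map (fun r => Nat.testBit r j)

/-- All columns. -/
def cols : List (List Bool) := (List.range 102).map col

/-- All codewords whose first message bits are `o` have weight at least 28 (or are zero). -/
def check (o : List Bool) : Bool :=
  Nat.beq (Nat.lor (run (cols.map (fun l => tto l o false)) 0 0 (ones 19) 0 0 0)
    (cond (o.any id) 0 1)) (ones 19)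

/-- Bit lists of length `n` with at most `w` ones. -/
def low : Nat → Nat → List (List Bool)
  | 0, _ => [[]]
  | n + 1, 0 => (low n 0).map (false :: ·)
  | n + 1, w + 1 => (low n (w + 1)).map (false :: ·) ++ (low n w).map (true :: ·)

def chunk (i : Nat) : List (List Bool) := ((low 10 2).drop (7 * i)).take 7

theorem chunk0 : (chunk 0).all check = true := by decide +kernel

theorem chunk1 : (chunk 1).all check = true := by decide +kernel

theorem chunk2 : (chunk 2).all check = true := by decide +kernel

theorem chunk3 : (chunk 3).all check = true := by decide +kernel

theorem chunk4 : (chunk 4).all check = true := by decide +kernel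

theorem chunk5 : (chunk 5).all check = true := by decide +kernel

theorem chunk6 : (chunk 6).all check = true := by decide +kernel

theorem chunk7 : (chunk 7).all check = true := by decide +kernel

theorem idx_lt : ∀ u : List Bool, idx u < 2 ^ u.length
  | [] => by simp [idx]
  | a :: u => by
    have := idx_lt u
    cases a <;> simp [idx, pow_succ] <;> omega

theorem ones_eq (n : Nat) : ones n = 2 ^ (2 ^ n) - 1 := rfl

theorem testBit_ones (n p : Nat) (h : p < 2 ^ n) : (ones n).testBit p = true := by
  rw [ones_eq, Nat.testBit_two_pow_sub_one]; simpa using h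

theorem tt_cons (g : Bool) (l : List Bool) :
    tt (g :: l) = 2 ^ (2 ^ l.length) * (cond g ((ones l.length) ^^^ (tt l)) (tt l)) + tt l := rfl

theorem tt_lt : ∀ l : List Bool, tt l < 2 ^ (2 ^ l.length)
  | [] => by simp [tt]
  | g :: l => by
    have h := tt_lt l
    have h1 : (cond g ((ones l.length) ^^^ (tt l)) (tt l)) < 2 ^ (2 ^ l.length) := by
      cases g
      · exact h
      · refine Nat.xor_lt_two_pow ?_ h
        rw [ones_eq]
        have : 0 < 2 ^ (2 ^ l.length) := by positivity
        omega
    rw [tt_cons, List.length_cons, pow_succ, mul_comm _ 2, two_mul, pow_add]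
    generalize 2 ^ (2 ^ l.length) = N at *
    generalize (cond g ((ones l.length) ^^^ (tt l)) (tt l)) = y at *
    nlinarith

theorem testBit_tt : ∀ l u : List Bool, l.length = u.length →
    (tt l).testBit (idx u) = dot l u
  | [], [], _ => by simp [tt, dot]
  | g :: l, a :: u, h => by
    have h' : l.length = u.length := by simpa using h
    have ih := testBit_tt l u h'
    have hl := idx_lt u
    rw [tt_cons, Nat.testBit_two_pow_mul_add _ (tt_lt l)]
    cases a
    · have : idx (false :: u) = idx u := by simp [idx]
      rw [this, h', if_pos hl, ih]
      simp [dot]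
    · have : idx (true :: u) = idx u + 2 ^ l.length := by simp [idx, h']
      rw [this, if_neg (by omega), Nat.add_sub_cancel]
      cases g
      · simp [dot, ih]
      · have h2 := testBit_ones l.length (idx u) (by rw [h']; exact hl)
        simp [dot, ih, h2]

theorem testBit_tto : ∀ (o l u : List Bool) (b : Bool), l.length = o.length + u.length →
    (tto l o b).testBit (idx u) = xor b (dot l (o ++ u))
  | [], l, u, b, h => by
    have h' : l.length = u.length := by simpa using h
    have ih := testBit_tt l u h'
    have h2 := testBit_ones l.length (idx u) (by rw [h']; exact idx_lt u)
    have e : tto l [] b = cond b (ones l.length ^^^ tt l) (tt l) := by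
      cases l <;> rfl
    rw [e]
    cases b <;> simp [ih, h2]
  | a :: o, [], u, b, h => by simp at h; omega
  | a :: o, g :: l, u, b, h => by
    have ih := testBit_tto o l u (xor b (g && a)) (by simp at h; omega)
    have e : tto (g :: l) (a :: o) b = tto l o (xor b (g && a)) := rfl
    rw [e, ih, List.cons_append]
    simp [dot]

theorem run_bound (p : Nat) : ∀ (xs : List Nat) (c0 c1 c2 c3 c4 s : Nat),
    32 * ((run xs c0 c1 c2 c3 c4 s).testBit p).toNat ≤
      (c0.testBit p).toNat + 2 * (c1.testBit p).toNat + 4 * (c2.testBit p).toNat +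
      8 * (c3.testBit p).toNat + 16 * (c4.testBit p).toNat + 32 * (s.testBit p).toNat +
      xs.countP (fun x => x.testBit p)
  | [], c0, c1, c2, c3, c4, s => by
    show 32 * (s.testBit p).toNat ≤ _
    omega
  | x :: xs, c0, c1, c2, c3, c4, s => by
    have e : run (x :: xs) c0 c1 c2 c3 c4 s =
      run xs (c0 ^^^ x) (c1 ^^^ (c0 &&& x)) (c2 ^^^ (c1 &&& (c0 &&& x)))
        (c3 ^^^ (c2 &&& (c1 &&& (c0 &&& x)))) (c4 ^^^ (c3 &&& (c2 &&& (c1 &&& (c0 &&& x)))))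
        (s ||| (c4 &&& (c3 &&& (c2 &&& (c1 &&& (c0 &&& x)))))) := rfl
    rw [e]
    refine (run_bound p xs _ _ _ _ _ _).trans ?_
    rw [List.countP_cons]
    simp only [Nat.testBit_xor, Nat.testBit_and, Nat.testBit_or]
    generalize xs.countP (fun x => x.testBit p) = n
    generalize c0.testBit p = b0
    generalize c1.testBit p = b1
    generalize c2.testBit p = b2
    generalize c3.testBit p = b3
    generalize c4.testBit p = b4
    generalize s.testBit p = b5
    generalize x.testBit p = b6
    cases b0 <;> cases b1 <;> cases b2 <;> cases b3 <;> cases b4 <;> cases b5 <;> cases b6 <;>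
      simp <;> omega

theorem col_length (j : Nat) : (col j).length = 29 := by simp [col, qcRows]

theorem idx_pos : ∀ u : List Bool, idx u = 0 → u.any id = false
  | [], _ => rfl
  | a :: u, h => by
    have := idx_pos u (by simp [idx] at h; omega)
    cases a
    · simpa using this
    · simp [idx] at h

theorem check_spec (o u : List Bool) (ho : o.length = 10) (hu : u.length = 19)
    (hc : check o = true) :
    (o ++ u).any id = false ∨
      28 ≤ (List.range 102).countP (fun j => dot (col j) (o ++ u)) := by
  by_cases hz : (o ++ u).any id = false
  · exact Or.inl hz
  right
  have hc' : (run (cols.map (fun l => tto l o false)) 0 0 (ones 19) 0 0 0) |||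
      (cond (o.any id) 0 1) = ones 19 := Nat.eq_of_beq_eq_true hc
  have hp : idx u < 2 ^ 19 := by have := idx_lt u; rwa [hu] at this
  have h1 := testBit_ones 19 (idx u) hp
  have hk : (cond (o.any id) 0 1 : Nat).testBit (idx u) = false := by
    cases h : o.any id
    · have hne : idx u ≠ 0 := by
        intro h0
        apply hz
        rw [List.any_append, h, idx_pos u h0]; rfl
      rw [cond_false]
      refine Nat.testBit_lt_two_pow ?_
      exact Nat.one_lt_two_pow hne
    · simp
  have h2 : (run (cols.map (fun l => tto l o false)) 0 0 (ones 19) 0 0 0).testBit (idx u)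
      = true := by
    rw [← hc', Nat.testBit_or, hk] at h1
    simpa using h1
  have hb := run_bound (idx u) (cols.map (fun l => tto l o false)) 0 0 (ones 19) 0 0 0
  rw [h2, testBit_ones 19 (idx u) hp] at hb
  simp only [cols, List.map_map, List.countP_map, Nat.zero_testBit, Bool.toNat_true,
    Bool.toNat_false] at hb
  have he : (List.range 102).countP ((fun x => x.testBit (idx u)) ∘ (fun l => tto l o false) ∘ col)
      = (List.range 102).countP (fun j => dot (col j) (o ++ u)) := by
    refine List.countP_congr ?_
    intro j _
    have := testBit_tto o (col j) u false (by rw [col_length, ho, hu])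
    simp [this]
  rw [he] at hb
  omega

theorem mem_low : ∀ (n w : Nat) (o : List Bool), o.length = n → o.countP id ≤ w → o ∈ low n w
  | 0, w, o, h, _ => by
    have : o = [] := by simpa using h
    subst this; simp [low]
  | n + 1, w, [], h, _ => by simp at h
  | n + 1, 0, a :: o, h, hw => by
    cases a
    · have := mem_low n 0 o (by simpa using h) (by simpa using hw)
      simp [low, this]
    · simp at hw
  | n + 1, w + 1, a :: o, h, hw => by
    cases a
    · have := mem_low n (w + 1) o (by simpa using h) (by simpa using hw)
      simp [low, this]
    · have := mem_low n w o (by simpa using h) (by simpa using hw)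
      simp [low, this]

theorem low_eq : low 10 2 = chunk 0 ++ chunk 1 ++ chunk 2 ++ chunk 3 ++ chunk 4 ++ chunk 5 ++
    chunk 6 ++ chunk 7 := by decide +kernel

theorem check_low (o : List Bool) (h : o.length = 10) (hw : o.countP id ≤ 2) :
    check o = true := by
  have hm := mem_low 10 2 o h hw
  have ha : (low 10 2).all check = true := by
    rw [low_eq]
    simp only [List.all_append, chunk0, chunk1, chunk2, chunk3, chunk4, chunk5, chunk6, chunk7,
      Bool.and_self]
  exact List.all_eq_true.mp ha o hm

/-! ### The linear code -/

/-- Entries of the generator matrix. -/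
def gb (i : Fin 29) (j : Fin 102) : Bool := (qcRows.getD i 0).testBit j

/-- Information set. -/
def info (i : Fin 29) : Fin 102 := Fin.ofNat 102 (qcInfo.getD i 0)

/-- Simultaneous cyclic shift by `k` of both blocks of length 51. -/
def sh (k : Nat) (j : Fin 102) : Fin 102 :=
  if j.val < 51 then Fin.ofNat 102 ((j.val + k) % 51) else Fin.ofNat 102 (51 + (j.val + k - 51) % 51)

/-- Bits to `𝔽₂`. -/
def b2z (b : Bool) : ZMod 2 := cond b 1 0

/-- `𝔽₂` to bits. -/
def z2b (z : ZMod 2) : Bool := decide (z ≠ 0)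

theorem b2z_z2b : ∀ z : ZMod 2, b2z (z2b z) = z := by decide
theorem b2z_xor : ∀ a b : Bool, b2z (xor a b) = b2z a + b2z b := by decide
theorem b2z_and : ∀ a b : Bool, b2z (a && b) = b2z a * b2z b := by decide
theorem z2b_b2z : ∀ a : Bool, z2b (b2z a) = a := by decide

theorem sum_dot : ∀ (n : Nat) (u : Fin n → ZMod 2) (g : Fin n → Bool),
    ∑ i, u i * b2z (g i) = b2z (dot (List.ofFn g) (List.ofFn (fun i => z2b (u i))))
  | 0, u, g => by simp [dot, b2z]
  | n + 1, u, g => by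
    rw [Fin.sum_univ_succ, sum_dot n, List.ofFn_succ, List.ofFn_succ]
    simp only [dot, b2z_xor, b2z_and, b2z_z2b]
    ring

/-- The generator matrix. -/
def G : Matrix (Fin 29) (Fin 102) (ZMod 2) := fun i j => b2z (gb i j)

theorem col_eq (j : Fin 102) : List.ofFn (fun i => gb i j) = col j := by
  have : List.ofFn (fun i : Fin 29 => qcRows.getD i 0) = qcRows := by decide +kernel
  rw [col, ← this, List.map_ofFn]
  rfl

theorem sys : ∀ i k, gb i (info k) = decide (i = k) := by decide +kernel

theorem shift_rows : ∀ (i : Fin 29) (j : Fin 102),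
    gb i (sh 1 j) = dot (col j) (List.ofFn (fun k => gb i (sh 1 (info k)))) := by
  decide +kernel

theorem sh_succ : ∀ (k : Fin 51) (j : Fin 102), sh (k.val + 1) j = sh k (sh 1 j) := by
  decide +kernel

theorem sh_zero : ∀ (j : Fin 102), sh 0 j = j := by decide +kernel

theorem sh_inj : ∀ (k : Fin 51) (j : Fin 102), sh (51 - k.val) (sh k j) = j := by
  decide +kernel

theorem fibers : ∀ j : Fin 102,
    (Finset.univ.filter (fun p : Fin 51 × Fin 10 => sh p.1 (info (Fin.castLE (by omega) p.2)) = j)).card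
      = 5 := by
  decide +kernel

open Matrix in
theorem shift_mat : G.submatrix id (sh 1) = G.submatrix id (sh 1 ∘ info) * G := by
  ext i j
  rw [Matrix.mul_apply]
  simp only [Matrix.submatrix_apply, id, G, Function.comp]
  rw [sum_dot 29 (fun k => b2z (gb i (sh 1 (info k)))) (fun k => gb k j), col_eq, shift_rows]
  simp only [z2b_b2z]

/-- The code. -/
def C : Submodule (ZMod 2) (Fin 102 → ZMod 2) := LinearMap.range (Matrix.vecMulLinear G)

open Matrix in
theorem vecMul_info (u : Fin 29 → ZMod 2) (i : Fin 29) : (u ᵥ* G) (info i) = u i := by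
  simp only [Matrix.vecMul, dotProduct, G, sys]
  rw [Finset.sum_eq_single i]
  · simp [b2z]
  · intro b _ hb
    simp [b2z, hb]
  · simp

theorem finrank_C : Module.finrank (ZMod 2) C = 29 := by
  rw [C, LinearMap.finrank_range_of_inj]
  · simp
  · intro u v h
    funext i
    have := congrFun h (info i)
    simpa only [Matrix.vecMulLinear_apply, vecMul_info] using this

open Matrix in
theorem shift_one (v : Fin 102 → ZMod 2) (hv : v ∈ C) : v ∘ sh 1 ∈ C := by
  obtain ⟨u, rfl⟩ := hv
  refine ⟨u ᵥ* G.submatrix id (sh 1 ∘ info), ?_⟩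
  rw [Matrix.vecMulLinear_apply, Matrix.vecMul_vecMul, ← shift_mat]
  rfl

theorem shift_mem (v : Fin 102 → ZMod 2) (hv : v ∈ C) : ∀ k, k < 52 → v ∘ sh k ∈ C
  | 0, _ => by
    have : v ∘ sh 0 = v := by funext j; simp [sh_zero]
    rwa [this]
  | k + 1, h => by
    have := shift_one _ (shift_mem v hv k (by omega))
    have e : v ∘ sh (k + 1) = (v ∘ sh k) ∘ sh 1 := by
      funext j
      simp only [Function.comp]
      rw [sh_succ ⟨k, by omega⟩ j]
    rwa [e]

theorem norm_eq (w : Fin 102 → ZMod 2) :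
    hammingNorm w = (List.range 102).countP (fun j => if h : j < 102 then z2b (w ⟨j, h⟩) else false) := by
  have h1 : hammingNorm w = ((List.finRange 102).countP (fun j => z2b (w j))) := by
    rw [hammingNorm, List.countP_eq_length_filter]
    rfl
  rw [h1, ← List.map_coe_finRange_eq_range, List.countP_map]
  refine List.countP_congr ?_
  intro j _
  simp

/-- Words with few ones among the first ten message bits. -/
theorem weight_low (w : Fin 102 → ZMod 2) (hw : w ∈ C) (h0 : w ≠ 0)
    (hl : (Finset.univ.filter (fun a : Fin 10 => w (info (Fin.castLE (by omega) a)) ≠ 0)).card ≤ 2) :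
    28 ≤ hammingNorm w := by
  obtain ⟨u, rfl⟩ := hw
  simp only [Matrix.vecMulLinear_apply] at *
  simp only [vecMul_info] at hl
  set o : List Bool := List.ofFn (fun a : Fin 10 => z2b (u (Fin.castLE (by omega) a))) with ho
  set m : List Bool := List.ofFn (fun a : Fin 19 => z2b (u (Fin.natAdd 10 a))) with hm
  have hom : List.ofFn (fun i => z2b (u i)) = o ++ m := by
    rw [ho, hm]
    exact List.ofFn_add (m := 10) (n := 19) (f := fun i => z2b (u i))
  have hco : o.countP id ≤ 2 := by
    refine le_trans (le_of_eq ?_) hl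
    rw [ho, List.ofFn_eq_map, List.countP_map, List.countP_eq_length_filter]
    rfl
  have hent : ∀ j : Fin 102, Matrix.vecMul u G j = b2z (dot (col j) (o ++ m)) := by
    intro j
    rw [← hom, ← col_eq, ← sum_dot]
    rfl
  rcases check_spec o m (by simp [ho]) (by simp [hm]) (check_low o (by simp [ho]) hco) with h | h
  · exfalso
    apply h0
    have hu : u = 0 := by
      funext i
      rw [← hom] at h
      have : z2b (u i) = false := by
        rw [List.any_eq_false] at h
        simpa using h (z2b (u i)) (by rw [List.mem_ofFn]; exact ⟨i, rfl⟩)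
      rw [← b2z_z2b (u i), this]; rfl
    rw [hu]; simp
  · rw [norm_eq]
    refine h.trans (le_of_eq ?_)
    refine List.countP_congr ?_
    intro j hj
    have hj' : j < 102 := by simpa using hj
    simp [hj', hent, z2b_b2z]

theorem norm_shift (v : Fin 102 → ZMod 2) (k : Fin 51) :
    hammingNorm (v ∘ sh k) ≤ hammingNorm v := by
  unfold hammingNorm
  refine Finset.card_le_card_of_injOn (sh k) ?_ ?_
  · intro j hj
    simpa using hj
  · intro a _ b _ h
    rw [← sh_inj k a, ← sh_inj k b, h]

theorem card_fibers {P J : Type} [Fintype P] [Fintype J] [DecidableEq J] (f : P → J)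
    (q : J → Prop) [DecidablePred q] (n : Nat)
    (hf : ∀ j, (Finset.univ.filter (fun p => f p = j)).card = n) :
    (Finset.univ.filter (fun p => q (f p))).card = n * (Finset.univ.filter q).card := by
  rw [Finset.card_eq_sum_card_fiberwise (f := f) (t := Finset.univ.filter q)]
  · rw [mul_comm, ← smul_eq_mul, ← Finset.sum_const]
    refine Finset.sum_congr rfl ?_
    intro j hj
    refine Eq.trans ?_ (hf j)
    rw [Finset.filter_filter]
    congr 1
    ext p
    simp only [Finset.mem_filter, Finset.mem_univ, true_and] at *
    constructor
    · exact fun h => h.2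
    · exact fun h => ⟨by rw [h]; exact hj, h⟩
  · intro p hp
    simpa using hp

theorem exists_shift (v : Fin 102 → ZMod 2) (hv : hammingNorm v < 28) : ∃ k : Fin 51,
    (Finset.univ.filter (fun a : Fin 10 => v (sh k (info (Fin.castLE (by omega) a))) ≠ 0)).card ≤ 2 := by
  by_contra! hcon
  have h1 : ∑ k : Fin 51, 3 ≤ ∑ k : Fin 51, (Finset.univ.filter
      (fun a : Fin 10 => v (sh k (info (Fin.castLE (by omega) a))) ≠ 0)).card :=
    Finset.sum_le_sum (fun k _ => hcon k)
  have h2 : ∑ k : Fin 51, (Finset.univ.filter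
      (fun a : Fin 10 => v (sh k (info (Fin.castLE (by omega) a))) ≠ 0)).card
      = (Finset.univ.filter (fun p : Fin 51 × Fin 10 =>
          v (sh p.1 (info (Fin.castLE (by omega) p.2))) ≠ 0)).card := by
    simp only [Finset.card_filter]
    rw [Fintype.sum_prod_type]
  have h3 := card_fibers
    (fun p : Fin 51 × Fin 10 => sh p.1 (info (Fin.castLE (by omega) p.2)))
    (fun j => v j ≠ 0) 5 fibers
  have h4 : (Finset.univ.filter (fun j => v j ≠ 0)).card = hammingNorm v := rfl
  rw [h2, h3, Finset.sum_const, h4] at h1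
  simp at h1
  omega

theorem sh_surj : ∀ (k : Fin 51) (j : Fin 102), sh k (sh (51 - k.val) j) = j := by
  decide +kernel

theorem norm_zero_aux (v : Fin 102 → ZMod 2) (k : Fin 51) (h : v ∘ sh k = 0) : v = 0 := by
  funext j
  have := congrFun h (sh (51 - k.val) j)
  simpa [sh_surj] using this

theorem min_dist (v : Fin 102 → ZMod 2) (hv : v ∈ C) (h0 : v ≠ 0) : 28 ≤ hammingNorm v := by
  by_contra! hlt
  obtain ⟨k, hk⟩ := exists_shift v hlt
  have hm := shift_mem v hv k (by omega)
  have hne : v ∘ sh k ≠ 0 := by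
    intro h
    have hs := norm_zero_aux v k h
    exact h0 hs
  have := weight_low (v ∘ sh k) hm hne hk
  have := norm_shift v k
  omega

end QC

/-- there exists an `𝔽₂`-linear code of length 102, dimension 29
and minimum distance at least 28. -/
theorem stmt10 :
    ∃ C : Submodule (ZMod 2) (Fin 102 → ZMod 2),
      Module.finrank (ZMod 2) C = 29 ∧
      ∀ v ∈ C, v ≠ 0 → 28 ≤ hammingNorm v := by
  exact ⟨QC.C, QC.finrank_C, QC.min_dist⟩
end

section
/- There exists an 𝔽_2-linear subspace C of 𝔽_2^{101} of dimension 28 such that every nonzero element of C has Hamming weight at least 28. -/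
namespace Stmt12

/-! Bit-sliced exhaustive search: a family of binary words is stored column by column, lane `t` of
the family being bit `t` of every column.  `Lanes` is the number of lanes with the columns. -/

abbrev Lanes := ℕ × List ℕ

def merge (A B : Lanes) : Lanes :=
  (A.1 + B.1, ((2 ^ B.1 - 1) <<< A.1) ::
    List.zipWith (fun x y => x ||| (y <<< A.1)) A.2 B.2)

def pad (A : Lanes) : Lanes := (A.1, 0 :: A.2)

def stepAux (p : Lanes) : List Lanes → List Lanes
  | [] => []
  | q :: qs => merge q p :: stepAux q qs

def step : List Lanes → List Lanes
  | [] => []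
  | q :: qs => pad q :: stepAux q qs

def layers : ℕ → List Lanes
  | 0 => List.replicate 7 (1, [])
  | n + 1 => step (layers n)

def double (A : Lanes) : Lanes := merge A A

/-- Four free bits followed by 24 bits with at most six ones. -/
def patterns : Lanes :=
  double (double (double (double ((layers 24).getD 6 (0, [])))))

/-- xor of the selected rows. -/
def enc : List Bool → List ℕ → ℕ
  | b :: m, g :: G => bif b then g ^^^ enc m G else enc m G
  | _, _ => 0

def colOf (i : ℕ) : List ℕ → List ℕ → ℕ
  | s :: S, g :: G => bif g.testBit i then s ^^^ colOf i S G else colOf i S G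
  | _, _ => 0

/-- Ripple-carry addition of a column to bit-sliced counters (overflow is dropped). -/
def addCol : List ℕ → ℕ → List ℕ
  | [], _ => []
  | x :: xs, c => (x ^^^ c) :: addCol xs (x &&& c)

def atLeast28 : List ℕ → ℕ
  | [_, _, c2, c3, c4, c5, c6] => c5 ||| (c6 ||| (c4 &&& (c3 &&& c2)))
  | _ => 0

def checkCols (cols : List ℕ) : Bool :=
  (cols.foldl (· ||| ·) 0 &&&
    atLeast28 (cols.foldl addCol [0, 0, 0, 0, 0, 0, 0])) == cols.foldl (· ||| ·) 0

def check (S G : List ℕ) : Bool :=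
  checkCols ((List.range 101).map fun i => colOf i S G)

/-- Basis of the code, systematic on the positions `info0`. -/
def basis0 : List ℕ := [
  1185866677130658097579843125248,
  245351749793910079024252583936,
  695163247007324904768711688192,
  1226758619789978381009628954624,
  693322890200932910182321618945,
  732940034097926318901067513858,
  812316974969724658823376928772,
  970940292748870199283323764744,
  20642069065776214708162920464,
  530737608444689804136128970784,
  447497117651607573685138882624,
  1068462302836613686185993175168,
  176089539761628221372243116288,
  1005764570796982538114311389696,
  1214452141595508951089495933952,
  683251193431395284285625731072,
  792077358264213939573621788672,
  890873574457385947266264604672,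
  23095426660539694656601997312,
  660285538304536351870587797504,
  524108513160728006434991702016,
  875681078374474075279630401536,
  14070036916717198767508684800,
  681741852657679696961613594624,
  555261920417911837158596935680,
  649852549641996635687410991104,
  500147649136805964360169029632,
  346661445100466455091177586688]

def extra0 : List ℕ := [25, 26, 27, 28]

/-- Basis of the code, systematic on the positions `info1`. -/
def basis1 : List ℕ := [
  940514954147602126334939441482,
  981406908993674006192922262494,
  245351746137883870076874776311,
  1104082777187915200965867902117,
  673786724027584612245993324879,
  753637074010491318253093618640,
  913402294193676537145067407087,
  1232879542082238348277242760336,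
  970744392021195751430377746724,
  104841717239582770515927815,
  673964218594630303520408291136,
  753435351660807916308928139215,
  28200423514159571065576601499,
  310052350868963216529055860530,
  1214019963484046881612175183658,
  1107496192810681736182807770705,
  273615701605777525049027325420,
  1141743874349602728799936535190,
  1232272782666446697596496190761,
  971948118002658989441860604503,
  2492955400195465652688496096,
  262429817301736045778928198596,
  1118777309299153646970050660038,
  1218758164546879372562960295305,
  496748944618207460617314421341,
  320381520552731844733043938804,
  46874376903245485161795857062,
  767508876333092281130000569346]

def extra1 : List ℕ := [50, 51, 52, 53]

/-- Basis of the code, systematic on the positions `info2`. -/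
def basis2 : List ℕ := [
  695163211665744646802240607397,
  736055165293141377913200295407,
  817839072547934113748095987579,
  981406887057521655620844472914,
  335050183018203623468627304358,
  975396429003320374300846039274,
  347842431578458903175183944406,
  1029185165495441357092201957898,
  398111985009687861552895237911,
  1125952423800701595431356244360,
  44844517705233746021912234003,
  404600894346595206070905081729,
  1112974605127390197462048604324,
  70800155052864243903594826315,
  471367449513280797088321145648,
  1256740063597979497132292803014,
  259295868851212636895481895055,
  213295636956577045477714341560,
  106771138370457817973372469974,
  518509511884894149049443228170,
  726768745015161007108800687026,
  1159960111716908596969719815271,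
  135162157057898419283149894604,
  580569719388213244032558823486,
  840951789784566419692254228443,
  774385313022627756098493273269,
  1223379155862865140690195685992,
  167525110398567743212877729747]

def extra2 : List ℕ := [75, 76, 77, 78]

/-- Basis of the code, systematic on the positions `info3`. -/
def basis3 : List ℕ := [
  12186752395453910271537,
  36560256169419874060882,
  28029529692358581047956,
  6093376760676908557080,
  633825355518288771064656155936,
  633825405652318652125841635664,
  633825484453491841763229869952,
  633825629082601373022697069088,
  633825916328159500116032759632,
  633826536596917457226075299248,
  633827718275651965882768256576,
  633830152842458616283884358048,
  633835000335498931726876082256,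
  633844678629406872769403278720,
  633864014978787591769626949648,
  633902696414623575404367602480,
  633980047945557566756579775296,
  634134794475835332351301252000,
  634444283604289574773556704336,
  635063268765238281782997040512,
  636301216300841238500918799904,
  638777090469212155629414010704,
  643728848278644545777800678832,
  653632354399455816187042990192,
  673439404530689348257832829936,
  713053466781335953177595286768,
  792281636823246563358876105920,
  950737977873259086280662903440]

def extra3 : List ℕ := [0, 1, 2, 3]

theorem check0 : check patterns.2 basis0 = true := by decide +kernel
theorem check1 : check patterns.2 basis1 = true := by decide +kernel
theorem check2 : check patterns.2 basis2 = true := by decide +kernel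
theorem check3 : check patterns.2 basis3 = true := by decide +kernel

/-! Correctness of the enumeration. -/

def ones (m : List Bool) : ℕ := m.count true

structure Cov (n : ℕ) (A : Lanes) (P : List Bool → Prop) : Prop where
  len : A.2.length = n
  high : ∀ s ∈ A.2, ∀ t, A.1 ≤ t → s.testBit t = false
  cov : ∀ m : List Bool, m.length = n → P m → ∃ t < A.1, A.2.map (·.testBit t) = m

theorem zip_low (k t : ℕ) (ht : t < k) : ∀ (a b : List ℕ), a.length = b.length →
    (List.zipWith (fun x y => x ||| (y <<< k)) a b).map (·.testBit t) = a.map (·.testBit t)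
  | [], _, _ => by simp
  | x :: a, [], h => by simp at h
  | x :: a, y :: b, h => by
    have ih := zip_low k t ht a b (by simpa using h)
    simp only [List.zipWith_cons_cons, List.map_cons, ih]
    simp [Nat.not_le.2 ht]

theorem zip_high (k t : ℕ) : ∀ (a b : List ℕ), a.length = b.length →
    (∀ s ∈ a, ∀ u, k ≤ u → s.testBit u = false) →
    (List.zipWith (fun x y => x ||| (y <<< k)) a b).map (·.testBit (k + t)) = b.map (·.testBit t)
  | [], [], _, _ => by simp
  | [], y :: b, h, _ => by simp at h
  | x :: a, [], h, _ => by simp at h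
  | x :: a, y :: b, h, hh => by
    have ih := zip_high k t a b (by simpa using h)
      (fun s hs => hh s (List.mem_cons_of_mem _ hs))
    have hx := hh x List.mem_cons_self (k + t) (by omega)
    simp only [List.zipWith_cons_cons, List.map_cons, ih]
    simp [hx]

theorem zip_zero (k l : ℕ) : ∀ (a b : List ℕ),
    (∀ s ∈ a, ∀ u, k ≤ u → s.testBit u = false) →
    (∀ s ∈ b, ∀ u, l ≤ u → s.testBit u = false) →
    ∀ s ∈ List.zipWith (fun x y => x ||| (y <<< k)) a b, ∀ u, k + l ≤ u → s.testBit u = false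
  | [], _, _, _ => by simp
  | x :: a, [], _, _ => by simp
  | x :: a, y :: b, ha, hb => by
    intro s hs u hu
    simp only [List.zipWith_cons_cons, List.mem_cons] at hs
    rcases hs with rfl | hs
    · have h1 := ha x List.mem_cons_self u (by omega)
      have h2 := hb y List.mem_cons_self (u - k) (by omega)
      simp [h1, h2]
    · exact zip_zero k l a b (fun s hs => ha s (List.mem_cons_of_mem _ hs))
        (fun s hs => hb s (List.mem_cons_of_mem _ hs)) s hs u hu

theorem Cov.merge {n : ℕ} {A B : Lanes} {P Q R : List Bool → Prop}
    (hA : Cov n A P) (hB : Cov n B Q)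
    (h0 : ∀ m, R (false :: m) → P m) (h1 : ∀ m, R (true :: m) → Q m) :
    Cov (n + 1) (merge A B) R where
  len := by simp [Stmt12.merge, hA.len, hB.len]
  high := by
    intro s hs t ht
    simp only [Stmt12.merge, List.mem_cons] at hs ht
    rcases hs with rfl | hs
    · have : ¬ (t - A.1 < B.1) := by omega
      simp [this]
    · exact zip_zero _ _ _ _ hA.high hB.high s hs t ht
  cov := by
    intro m hm hR
    match m, hm, hR with
    | false :: m, hm, hR =>
      obtain ⟨t, ht, h⟩ := hA.cov m (by simpa using hm) (h0 m hR)
      refine ⟨t, by simp only [Stmt12.merge]; omega, ?_⟩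
      simp only [Stmt12.merge, List.map_cons]
      rw [zip_low _ _ ht _ _ (by rw [hA.len, hB.len]), h]
      simp [Nat.not_le.2 ht]
    | true :: m, hm, hR =>
      obtain ⟨t, ht, h⟩ := hB.cov m (by simpa using hm) (h1 m hR)
      refine ⟨A.1 + t, by simp only [Stmt12.merge]; omega, ?_⟩
      simp only [Stmt12.merge, List.map_cons]
      rw [zip_high _ _ _ _ (by rw [hA.len, hB.len]) hA.high, h]
      simp [ht]

theorem Cov.pad {n : ℕ} {A : Lanes} {P R : List Bool → Prop} (hA : Cov n A P)
    (h0 : ∀ m, R (false :: m) → P m) (h1 : ∀ m, ¬ R (true :: m)) :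
    Cov (n + 1) (pad A) R where
  len := by simp [Stmt12.pad, hA.len]
  high := by
    intro s hs t ht
    simp only [Stmt12.pad, List.mem_cons] at hs ht
    rcases hs with rfl | hs
    · simp
    · exact hA.high s hs t ht
  cov := by
    intro m hm hR
    match m, hm, hR with
    | false :: m, hm, hR =>
      obtain ⟨t, ht, h⟩ := hA.cov m (by simpa using hm) (h0 m hR)
      exact ⟨t, ht, by simp [Stmt12.pad, h]⟩
    | true :: m, hm, hR => exact absurd hR (h1 m)

def LInv (n : ℕ) : ℕ → List Lanes → Prop
  | _, [] => True
  | b, q :: qs => Cov n q (fun m => ones m ≤ b) ∧ LInv n (b + 1) qs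

theorem LInv.stepAux {n : ℕ} : ∀ (qs : List Lanes) (b : ℕ) (p : Lanes),
    Cov n p (fun m => ones m ≤ b) → LInv n (b + 1) qs → LInv (n + 1) (b + 1) (stepAux p qs)
  | [], _, _, _, _ => trivial
  | q :: qs, b, p, hp, h =>
    ⟨Cov.merge h.1 hp (fun m hm => by simpa [ones] using hm)
      (fun m hm => by simpa [ones] using hm), LInv.stepAux qs (b + 1) q h.1 h.2⟩

theorem LInv.step {n : ℕ} : ∀ (qs : List Lanes), LInv n 0 qs → LInv (n + 1) 0 (step qs)
  | [], _ => trivial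
  | q :: qs, h => ⟨Cov.pad h.1 (fun m hm => by simpa [ones] using hm)
      (fun m hm => by simp [ones] at hm), LInv.stepAux qs 0 q h.1 h.2⟩

theorem cov_nil (b : ℕ) : Cov 0 (1, []) (fun m => ones m ≤ b) where
  len := rfl
  high := by simp
  cov := by
    intro m hm _
    exact ⟨0, by simp, by simpa using (List.length_eq_zero_iff.1 hm).symm⟩

theorem layers_inv : ∀ n, LInv n 0 (layers n)
  | 0 => ⟨cov_nil _, cov_nil _, cov_nil _, cov_nil _, cov_nil _, cov_nil _, cov_nil _, trivial⟩
  | n + 1 => LInv.step _ (layers_inv n)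

theorem stepAux_length : ∀ (qs : List Lanes) (p : Lanes), (stepAux p qs).length = qs.length
  | [], _ => rfl
  | q :: qs, p => by simp [stepAux, stepAux_length qs q]

theorem layers_length : ∀ n, (layers n).length = 7
  | 0 => rfl
  | n + 1 => by
    have h := layers_length n
    rw [layers]
    cases hl : layers n with
    | nil => simp [hl] at h
    | cons q qs => simpa [step, stepAux_length, hl] using h

theorem LInv.getD {n : ℕ} : ∀ (qs : List Lanes) (b i : ℕ) (d : Lanes), LInv n b qs →
    i < qs.length → Cov n (qs.getD i d) (fun m => ones m ≤ b + i)
  | [], _, _, _, _, hi => by simp at hi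
  | q :: qs, b, 0, d, h, _ => by simpa using h.1
  | q :: qs, b, i + 1, d, h, hi => by
    have := LInv.getD qs (b + 1) i d h.2 (by simpa using hi)
    simpa [Nat.add_assoc, Nat.add_comm 1 i] using this

theorem patterns_cov : Cov 28 patterns (fun m => ones (m.drop 4) ≤ 6) := by
  have h := LInv.getD (layers 24) 0 6 (0, []) (layers_inv 24) (by rw [layers_length]; omega)
  have h1 : Cov 25 _ (fun m => ones (m.drop 1) ≤ 6) :=
    h.merge h (fun m hm => by simpa using hm) (fun m hm => by simpa using hm)
  have h2 : Cov 26 _ (fun m => ones (m.drop 2) ≤ 6) :=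
    h1.merge h1 (fun m hm => by simpa using hm) (fun m hm => by simpa using hm)
  have h3 : Cov 27 _ (fun m => ones (m.drop 3) ≤ 6) :=
    h2.merge h2 (fun m hm => by simpa using hm) (fun m hm => by simpa using hm)
  have h4 : Cov 28 _ (fun m => ones (m.drop 4) ≤ 6) :=
    h3.merge h3 (fun m hm => by simpa using hm) (fun m hm => by simpa using hm)
  exact h4

/-! Correctness of the weight computation. -/

theorem colOf_testBit (i t : ℕ) : ∀ (S G : List ℕ),
    (colOf i S G).testBit t = (enc (S.map (·.testBit t)) G).testBit i
  | [], _ => by simp [colOf, enc]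
  | s :: S, [] => by simp [colOf, enc]
  | s :: S, g :: G => by
    have ih := colOf_testBit i t S G
    simp only [colOf, enc, List.map_cons]
    cases h1 : g.testBit i <;> cases h2 : s.testBit t <;> simp [h1, h2, ih]

def val (t : ℕ) : List ℕ → ℕ
  | [] => 0
  | x :: xs => (x.testBit t).toNat + 2 * val t xs

theorem val_addCol (t : ℕ) : ∀ (xs : List ℕ) (c : ℕ),
    val t (addCol xs c) ≤ val t xs + (c.testBit t).toNat
  | [], c => by simp [addCol, val]
  | x :: xs, c => by
    have ih := val_addCol t xs (x &&& c)
    simp only [addCol, val, Nat.testBit_xor]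
    rw [Nat.testBit_and] at ih
    cases h1 : x.testBit t <;> cases h2 : c.testBit t <;> simp [h1, h2] at ih ⊢ <;> omega

theorem val_foldl (t : ℕ) : ∀ (cols : List ℕ) (xs : List ℕ),
    val t (cols.foldl addCol xs) ≤ val t xs + cols.countP (·.testBit t)
  | [], xs => by simp
  | c :: cols, xs => by
    have h1 := val_foldl t cols (addCol xs c)
    have h2 := val_addCol t xs c
    simp only [List.foldl_cons, List.countP_cons]
    cases h : c.testBit t <;> simp [h] at h2 ⊢ <;> omega

theorem atLeast28_val (t : ℕ) (xs : List ℕ) (h : (atLeast28 xs).testBit t = true) :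
    28 ≤ val t xs := by
  unfold atLeast28 at h
  split at h
  · rename_i c0 c1 c2 c3 c4 c5 c6
    simp only [Nat.testBit_or, Nat.testBit_and, Bool.or_eq_true, Bool.and_eq_true] at h
    simp only [val]
    rcases h with h | h | ⟨h4, h3, h2⟩
    · simp [h]; omega
    · simp [h]; omega
    · simp [h4, h3, h2]; omega
  · simp at h

theorem foldl_or_testBit (t : ℕ) : ∀ (cols : List ℕ) (a : ℕ),
    (a.testBit t = true ∨ ∃ c ∈ cols, c.testBit t = true) →
    (cols.foldl (· ||| ·) a).testBit t = true
  | [], a, h => by simpa using h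
  | c :: cols, a, h => by
    simp only [List.foldl_cons]
    apply foldl_or_testBit t cols
    simp only [List.mem_cons, exists_eq_or_imp] at h
    simp only [Nat.testBit_or, Bool.or_eq_true]
    tauto

theorem checkCols_spec (cols : List ℕ) (h : checkCols cols = true) (t : ℕ)
    (hne : ∃ c ∈ cols, c.testBit t = true) : 28 ≤ cols.countP (·.testBit t) := by
  have h0 := foldl_or_testBit t cols 0 (Or.inr hne)
  rw [checkCols, beq_iff_eq] at h
  rw [← h, Nat.testBit_and, Bool.and_eq_true] at h0
  have h1 := atLeast28_val t _ h0.2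
  have h2 := val_foldl t cols [0, 0, 0, 0, 0, 0, 0]
  have h3 : val t [0, 0, 0, 0, 0, 0, 0] = 0 := by simp [val]
  omega

/-- Weight of a word on the first 101 positions. -/
def wt (w : ℕ) : ℕ := (List.range 101).countP (w.testBit ·)

theorem check_spec (G : List ℕ) (h : check patterns.2 G = true) (m : List Bool)
    (hl : m.length = 28) (hm : ones (m.drop 4) ≤ 6) (hne : wt (enc m G) ≠ 0) :
    28 ≤ wt (enc m G) := by
  obtain ⟨t, -, ht⟩ := patterns_cov.cov m hl hm
  have key : ((List.range 101).map fun i => colOf i patterns.2 G).countP (·.testBit t)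
      = wt (enc m G) := by
    rw [List.countP_map, wt]
    congr 1
    funext i
    simp only [Function.comp]
    rw [colOf_testBit, ht]
  rw [← key] at hne ⊢
  apply checkCols_spec _ h
  exact List.countP_pos_iff.1 (Nat.pos_of_ne_zero hne)

/-! The four systematic encodings describe the same code. -/

def info (extra : List ℕ) (j : ℕ) : List ℕ := extra ++ List.range' (25 * j) 24

def reenc (pos G : List ℕ) (w : ℕ) : ℕ := enc (pos.map (w.testBit ·)) G

theorem reenc_cons (p g w : ℕ) (pos G : List ℕ) : reenc (p :: pos) (g :: G) w =
    bif w.testBit p then g ^^^ reenc pos G w else reenc pos G w := rfl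

theorem reenc_xor (a b : ℕ) : ∀ (pos G : List ℕ),
    reenc pos G (a ^^^ b) = reenc pos G a ^^^ reenc pos G b
  | [], _ => by simp [reenc, enc]
  | p :: pos, [] => by simp [reenc, enc]
  | p :: pos, g :: G => by
    rw [reenc_cons, reenc_cons, reenc_cons, reenc_xor a b pos G, Nat.testBit_xor]
    generalize reenc pos G a = x
    generalize reenc pos G b = y
    apply Nat.eq_of_testBit_eq
    intro i
    cases a.testBit p <;> cases b.testBit p <;> simp [Nat.testBit_xor] <;>
      cases g.testBit i <;> cases x.testBit i <;> cases y.testBit i <;> rfl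

theorem reenc_zero : ∀ (pos G : List ℕ), reenc pos G 0 = 0
  | [], _ => by simp [reenc, enc]
  | p :: pos, [] => by simp [reenc, enc]
  | p :: pos, g :: G => by
    rw [reenc_cons, reenc_zero pos G]
    simp

def Fixed (w : ℕ) : Prop :=
  reenc (info extra0 0) basis0 w = w ∧ reenc (info extra1 1) basis1 w = w ∧
  reenc (info extra2 2) basis2 w = w ∧ reenc (info extra3 3) basis3 w = w

instance (w : ℕ) : Decidable (Fixed w) := by unfold Fixed; infer_instance

theorem fixed_basis : ∀ g ∈ basis0, Fixed g := by decide +kernel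

theorem fixed_zero : Fixed 0 := by
  simp [Fixed, reenc_zero]

theorem Fixed.xor {a b : ℕ} (ha : Fixed a) (hb : Fixed b) : Fixed (a ^^^ b) := by
  obtain ⟨a0, a1, a2, a3⟩ := ha
  obtain ⟨b0, b1, b2, b3⟩ := hb
  refine ⟨?_, ?_, ?_, ?_⟩ <;> rw [reenc_xor] <;> simp only [a0, a1, a2, a3, b0, b1, b2, b3]

theorem ones_info (w j : ℕ) (extra : List ℕ) (he : extra.length = 4) :
    ones (((info extra j).map (w.testBit ·)).drop 4)
      = (List.range' (25 * j) 24).countP (w.testBit ·) := by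
  rw [info, List.map_append, List.drop_left' (by simpa using he), ones, List.count,
    List.countP_map]
  congr 1
  funext i
  simp

theorem block_le (w : ℕ) :
    (List.range' 0 24).countP (w.testBit ·) + (List.range' 25 24).countP (w.testBit ·) +
    (List.range' 50 24).countP (w.testBit ·) + (List.range' 75 24).countP (w.testBit ·) ≤ wt w := by
  have h : (List.range' 0 24 ++ List.range' 25 24 ++ List.range' 50 24 ++ List.range' 75 24).Sublist
    (List.range 101) := by decide +kernel
  have := h.countP_le (p := fun i => w.testBit i)
  simpa only [List.countP_append, wt] using this

theorem block_case (w j : ℕ) (extra G : List ℕ) (he : extra.length = 4)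
    (hc : check patterns.2 G = true) (hf : reenc (info extra j) G w = w) (h0 : wt w ≠ 0)
    (hb : (List.range' (25 * j) 24).countP (w.testBit ·) ≤ 6) : 28 ≤ wt w := by
  have := check_spec G hc ((info extra j).map (w.testBit ·)) (by simp [info, he])
    (by rw [ones_info w j extra he]; exact hb)
  have e : enc ((info extra j).map (w.testBit ·)) G = w := hf
  rw [e] at this
  exact this h0

theorem fixed_weight (w : ℕ) (hw : Fixed w) (h0 : wt w ≠ 0) : 28 ≤ wt w := by
  by_contra hlt
  have hb := block_le w
  obtain ⟨f0, f1, f2, f3⟩ := hw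
  have c0 := block_case w 0 extra0 basis0 rfl check0 f0 h0
  have c1 := block_case w 1 extra1 basis1 rfl check1 f1 h0
  have c2 := block_case w 2 extra2 basis2 rfl check2 f2 h0
  have c3 := block_case w 3 extra3 basis3 rfl check3 f3 h0
  simp only [Nat.mul_zero, Nat.reduceMul] at c0 c1 c2 c3
  omega

/-! Passage to vectors over `ZMod 2`. -/

def toVec (w : ℕ) : Fin 101 → ZMod 2 := fun i => if w.testBit i then 1 else 0

theorem toVec_xor (a b : ℕ) : toVec (a ^^^ b) = toVec a + toVec b := by
  funext i
  simp only [toVec, Nat.testBit_xor, Pi.add_apply]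
  cases a.testBit i <;> cases b.testBit i <;> simp <;> decide

theorem toVec_zero : toVec 0 = 0 := by
  funext i
  simp [toVec]

theorem hammingNorm_toVec (w : ℕ) : hammingNorm (toVec w) = wt w := by
  have h1 : hammingNorm (toVec w) =
      (Finset.univ.filter fun i : Fin 101 => w.testBit i = true).card := by
    unfold hammingNorm
    congr 1
    ext i
    simp [toVec]
  have h2 := Nat.count_eq_card_filter_range (fun i => w.testBit i = true) 101
  have h3 : Nat.count (fun i => w.testBit i = true) 101 = wt w := by
    simp [Nat.count, wt]
  rw [h1, ← h3, h2, Finset.card_filter, Finset.card_filter]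
  exact Fin.sum_univ_eq_sum_range (fun i => if w.testBit i = true then 1 else 0) 101

def gen (r : Fin 28) : ℕ := basis0.getD r 0

def pivot (r : Fin 28) : Fin 101 := Fin.ofNat 101 ((info extra0 0).getD r 0)

theorem gen_mem : ∀ r, gen r ∈ basis0 := by decide +kernel

theorem gen_pivot : ∀ r s, (gen r).testBit (pivot s) = decide (r = s) := by decide +kernel

theorem gen_indep : LinearIndependent (ZMod 2) fun r => toVec (gen r) := by
  rw [Fintype.linearIndependent_iff]
  intro c hc s
  have h := congrFun hc (pivot s)
  simpa [Finset.sum_apply, toVec, gen_pivot] using h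

theorem span_fixed (v : Fin 101 → ZMod 2)
    (hv : v ∈ Submodule.span (ZMod 2) (Set.range fun r => toVec (gen r))) :
    ∃ w, v = toVec w ∧ Fixed w := by
  induction hv using Submodule.span_induction with
  | mem x hx =>
    obtain ⟨r, rfl⟩ := hx
    exact ⟨gen r, rfl, fixed_basis _ (gen_mem r)⟩
  | zero => exact ⟨0, toVec_zero.symm, fixed_zero⟩
  | add x y _ _ hx hy =>
    obtain ⟨a, rfl, ha⟩ := hx
    obtain ⟨b, rfl, hb⟩ := hy
    exact ⟨a ^^^ b, (toVec_xor a b).symm, ha.xor hb⟩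
  | smul c x _ hx =>
    have hc : c = 0 ∨ c = 1 := by revert c; decide
    rcases hc with rfl | rfl
    · exact ⟨0, by rw [zero_smul, toVec_zero], fixed_zero⟩
    · simpa using hx

end Stmt12

/-- there exists an `𝔽₂`-linear code of length 101, dimension 28
and minimum distance at least 28. -/
theorem stmt12 :
    ∃ C : Submodule (ZMod 2) (Fin 101 → ZMod 2),
      Module.finrank (ZMod 2) C = 28 ∧
      ∀ v ∈ C, v ≠ 0 → 28 ≤ hammingNorm v := by
  refine ⟨Submodule.span (ZMod 2) (Set.range fun r => Stmt12.toVec (Stmt12.gen r)), ?_, ?_⟩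
  · rw [finrank_span_eq_card Stmt12.gen_indep, Fintype.card_fin]
  · intro v hv hne
    obtain ⟨w, rfl, hw⟩ := Stmt12.span_fixed v hv
    rw [Stmt12.hammingNorm_toVec]
    apply Stmt12.fixed_weight w hw
    rw [← Stmt12.hammingNorm_toVec]
    exact hammingNorm_ne_zero_iff.2 hne
end

section
/- There exists an 𝔽_2-linear subspace C of 𝔽_2^{100} of dimension 28 such that every nonzero element of C has Hamming weight at least 27. -/
namespace CodeSearch

/-- Columns of the generator matrix of a quasi-cyclic `[100,28,28]` code, as 28-bit numbers. -/
def cols : List Nat :=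
  [1, 2, 4, 8, 16, 32, 64, 128,
   256, 512, 1024, 2048, 4096, 8192, 16384, 32768,
   65536, 131072, 262144, 524288, 1048576, 2097152, 4194304, 8388608,
   16777215, 16777216, 33554432, 67108864, 134217728, 262971586, 17440441, 34880882,
   69761764, 139523528, 252529490, 28718694, 43225907, 81320345, 139349197, 254818648,
   30200434, 40262427, 80524854, 140940179, 258050020, 24096522, 48193044, 71386071,
   142772142, 257314913, 57958882, 115917764, 204372087, 133189676, 236937127, 59907980,
   115065063, 206077489, 121396384, 242792768, 56480322, 112960644, 210286327, 121778899,
   243557798, 56333425, 112666850, 210873915, 124781387, 249562774, 59986449, 114908125,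
   206391365, 120991816, 241983632, 160045902, 222783905, 86143872, 172287744, 187002562,
   166100294, 228566449, 90969183, 181938366, 199429697, 160777151, 226089027, 90116164,
   180232328, 187637293, 166894744, 230057485, 88052519, 176105038, 189983838, 151615614,
   230576190, 87031617, 174063234, 185818566]

/-- The first `k` binary digits of `c`. -/
def bits : Nat → Nat → List Bool
  | 0, _ => []
  | k + 1, c => Nat.beq (Nat.mod c 2) 1 :: bits k (Nat.div c 2)

/-- Sparse binary trees, with pairs of packed weight vectors at the leaves. -/
inductive T : Type
  | nil : T
  | leaf (p n : Nat) : T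
  | node (a b : T) : T

def add : T → T → T
  | .nil, t => t
  | .leaf p n, t => match t with
    | .nil => .leaf p n
    | .leaf p' n' => .leaf (Nat.add p p') (Nat.add n n')
    | .node _ _ => .leaf p n
  | .node a b, t => match t with
    | .nil => .node a b
    | .leaf _ _ => .node a b
    | .node a' b' => .node (add a a') (add b b')

def swap : T → T
  | .nil => .nil
  | .leaf p n => .leaf n p
  | .node a b => .node (swap a) (swap b)

/-- Packed truth table of a linear form and of its complement, one byte per value. -/
def pn : List Bool → Nat × Nat
  | [] => (0, 1)
  | l :: ls =>
    match pn ls with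
    | (p, n) =>
      bif l then (Nat.add p (Nat.mul n (Nat.pow 256 (Nat.pow 2 ls.length))), Nat.add n (Nat.mul p (Nat.pow 256 (Nat.pow 2 ls.length))))
      else (Nat.add p (Nat.mul p (Nat.pow 256 (Nat.pow 2 ls.length))), Nat.add n (Nat.mul n (Nat.pow 256 (Nat.pow 2 ls.length))))

def single (q : Nat × Nat) : List Bool → T
  | [] => .leaf q.1 q.2
  | h :: hs => bif h then .node .nil (single q hs) else .node (single q hs) .nil

def build : List Nat → T
  | [] => .nil
  | c :: cs => add (single (pn ((bits 28 c).drop 13)) ((bits 28 c).take 13)) (build cs)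

def ones : Nat → Nat
  | 0 => 1
  | k + 1 => Nat.add (ones k) (Nat.mul (ones k) (Nat.pow 256 (Nat.pow 2 k)))

/-- The byte `c`, repeated `2 ^ k` times. -/
def rep (k c : Nat) : Nat := Nat.mul c (ones k)
/-- `101` in every byte. -/
def base : Nat := rep 15 101
/-- `128` in every byte. -/
def mask : Nat := rep 15 128

def step (x : Bool) : T → T
  | .nil => .nil
  | .leaf p n => .leaf p n
  | .node a b => bif x then add a (swap b) else add a b

def chk : Nat → Nat → T → Bool
  | 0, c, t => match t with
    | .nil => false
    | .leaf p _ => Nat.beq (Nat.land (Nat.add p c) mask) mask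
    | .node _ _ => false
  | d + 1, c, t => chk d c (step false t) && chk d base (step true t)

def tree : T := build cols

theorem chk_000 : chk 10 (Nat.add base 27) (step false (step false (step false tree))) = true := by decide +kernel

theorem chk_001 : chk 10 base (step true (step false (step false tree))) = true := by decide +kernel

theorem chk_010 : chk 10 base (step false (step true (step false tree))) = true := by decide +kernel

theorem chk_011 : chk 10 base (step true (step true (step false tree))) = true := by decide +kernel

theorem chk_100 : chk 10 base (step false (step false (step true tree))) = true := by decide +kernel

theorem chk_101 : chk 10 base (step true (step false (step true tree))) = true := by decide +kernel

theorem chk_110 : chk 10 base (step false (step true (step true tree))) = true := by decide +kernel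

theorem chk_111 : chk 10 base (step true (step true (step true tree))) = true := by decide +kernel

/-! ### Correctness of the computation -/

/-- Inner product of bit lists. -/
def dot : List Bool → List Bool → Bool
  | a :: as, b :: bs => (a && b) ^^ dot as bs
  | _, _ => false

/-- Packing of a function on bit lists of length `k`, one byte per value. -/
def enc : Nat → (List Bool → Nat) → Nat
  | 0, g => g []
  | k + 1, g => enc k (fun ys => g (false :: ys)) + enc k (fun ys => g (true :: ys)) * 256 ^ (2 ^ k)

theorem enc_add (k : Nat) (f g : List Bool → Nat) :
    enc k f + enc k g = enc k (fun ys => f ys + g ys) := by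
  induction k generalizing f g with
  | zero => rfl
  | succ k ih => simp only [enc, ← ih]; ring

theorem enc_mul (k c : Nat) (g : List Bool → Nat) :
    c * enc k g = enc k (fun ys => c * g ys) := by
  induction k generalizing g with
  | zero => rfl
  | succ k ih => simp only [enc, ← ih]; ring

theorem enc_zero (k : Nat) : enc k (fun _ => 0) = 0 := by
  induction k with
  | zero => rfl
  | succ k ih => simp only [enc, ih]; simp

theorem ones_eq (k : Nat) : ones k = enc k (fun _ => 1) := by
  induction k with
  | zero => rfl
  | succ k ih => simp only [ones, enc, ih]; rfl

/-- Value `c` at the zero list only. -/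
theorem enc_delta (k c : Nat) :
    enc k (fun ys => if true ∈ ys then 0 else c) = c := by
  induction k with
  | zero => simp [enc]
  | succ k ih => simp [enc, ih, enc_zero]

theorem enc_lt (k : Nat) (g : List Bool → Nat) (hg : ∀ ys, g ys < 256) :
    enc k g < 256 ^ (2 ^ k) := by
  induction k generalizing g with
  | zero => simpa [enc] using hg []
  | succ k ih =>
    have h0 := ih _ (fun ys => hg (false :: ys))
    have h1 := ih _ (fun ys => hg (true :: ys))
    have : (256 : Nat) ^ (2 ^ (k + 1)) = 256 ^ (2 ^ k) * 256 ^ (2 ^ k) := by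
      rw [← pow_add]; congr 1; ring
    rw [this, enc]
    nlinarith

theorem land_split (e a b c d : Nat) (ha : a < 2 ^ e) (hc : c < 2 ^ e) :
    Nat.land (a + b * 2 ^ e) (c + d * 2 ^ e) = Nat.land a c + Nat.land b d * 2 ^ e := by
  change (a + b * 2 ^ e) &&& (c + d * 2 ^ e) = (a &&& c) + (b &&& d) * 2 ^ e
  have hac : a &&& c < 2 ^ e := lt_of_le_of_lt Nat.and_le_left ha
  apply Nat.eq_of_testBit_eq
  intro i
  rw [add_comm a, add_comm c, add_comm (a &&& c), mul_comm b, mul_comm d, mul_comm (b &&& d)]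
  rw [Nat.testBit_and, Nat.testBit_two_pow_mul_add _ ha, Nat.testBit_two_pow_mul_add _ hc,
    Nat.testBit_two_pow_mul_add _ hac]
  split_ifs <;> simp

theorem enc_land (k : Nat) (f g : List Bool → Nat) (hf : ∀ ys, f ys < 256) (hg : ∀ ys, g ys < 256) :
    Nat.land (enc k f) (enc k g) = enc k (fun ys => Nat.land (f ys) (g ys)) := by
  induction k generalizing f g with
  | zero => rfl
  | succ k ih =>
    have e : (256 : Nat) ^ (2 ^ k) = 2 ^ (8 * 2 ^ k) := by
      rw [pow_mul]; norm_num
    have h0 := enc_lt k _ (fun ys => hf (false :: ys))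
    have h1 := enc_lt k _ (fun ys => hg (false :: ys))
    simp only [enc]
    rw [e] at h0 h1 ⊢
    rw [land_split _ _ _ _ _ h0 h1, ih _ _ (fun ys => hf _) (fun ys => hg _),
      ih _ _ (fun ys => hf _) (fun ys => hg _)]

theorem enc_inj (k : Nat) (f g : List Bool → Nat) (hf : ∀ ys, f ys < 256) (hg : ∀ ys, g ys < 256)
    (h : enc k f = enc k g) : ∀ ys, ys.length = k → f ys = g ys := by
  induction k generalizing f g with
  | zero => intro ys hy; rw [List.length_eq_zero_iff.1 hy]; exact h
  | succ k ih =>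
    have h0 := enc_lt k _ (fun ys => hf (false :: ys))
    have h1 := enc_lt k _ (fun ys => hg (false :: ys))
    simp only [enc] at h
    have hm := congrArg (· % 256 ^ (2 ^ k)) h
    simp only [Nat.add_mul_mod_self_right, Nat.mod_eq_of_lt h0, Nat.mod_eq_of_lt h1] at hm
    have hp : 0 < (256 : Nat) ^ (2 ^ k) := by positivity
    have hd : enc k (fun ys => f (true :: ys)) = enc k (fun ys => g (true :: ys)) := by
      rw [hm] at h
      exact Nat.eq_of_mul_eq_mul_right hp (Nat.add_left_cancel h)
    intro ys hy
    match ys, hy with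
    | false :: ys, hy =>
      exact ih _ _ (fun ys => hf (false :: ys)) (fun ys => hg (false :: ys)) hm ys (by simpa using hy)
    | true :: ys, hy =>
      exact ih _ _ (fun ys => hf (true :: ys)) (fun ys => hg (true :: ys)) hd ys (by simpa using hy)

theorem good_of (k : Nat) (g : List Bool → Nat) (hg : ∀ ys, g ys < 256)
    (h : Nat.land (enc k g) (Nat.mul 128 (ones k)) = Nat.mul 128 (ones k)) :
    ∀ ys, ys.length = k → 128 ≤ g ys := by
  intro ys hy
  have e : Nat.mul 128 (ones k) = enc k (fun _ => 128) := by
    rw [ones_eq]; exact (enc_mul k 128 _).trans (by simp)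
  rw [e, enc_land k _ _ hg (by simp)] at h
  have hb : ∀ ys, Nat.land (g ys) 128 ≤ 128 := fun ys => Nat.and_le_right
  have := enc_inj k _ _ (fun ys => lt_of_le_of_lt (hb ys) (by norm_num)) (by simp) h ys hy
  calc 128 = Nat.land (g ys) 128 := this.symm
    _ ≤ g ys := Nat.and_le_left

theorem pn_eq (ls : List Bool) :
    pn ls = (enc ls.length (fun ys => bif dot ls ys then 1 else 0),
      enc ls.length (fun ys => bif dot ls ys then 0 else 1)) := by
  induction ls with
  | nil => rfl
  | cons l ls ih =>
    simp only [pn, ih]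
    cases l
    · simp [enc, dot]
    · simp [enc, dot, Bool.cond_not]

theorem rep_eq (k c : Nat) : rep k c = enc k (fun _ => c) := by
  rw [rep, ones_eq]
  exact (enc_mul k c _).trans (by simp)

/-- Trees of depth `d`. -/
def Shape : Nat → T → Prop
  | _, .nil => True
  | 0, .leaf _ _ => True
  | _ + 1, .leaf _ _ => False
  | 0, .node _ _ => False
  | d + 1, .node a b => Shape d a ∧ Shape d b

/-- Value of a tree at a bit list. -/
def val : T → List Bool → Bool → Nat
  | .nil, _, _ => 0
  | .leaf p n, _, f => bif f then n else p
  | .node _ _, [], _ => 0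
  | .node a b, x :: xs, f => val a xs f + val b xs (f ^^ x)

theorem shape_add (d : Nat) (s t : T) (hs : Shape d s) (ht : Shape d t) : Shape d (add s t) := by
  induction d generalizing s t with
  | zero => cases s <;> cases t <;> simp_all [Shape, add]
  | succ d ih => cases s <;> cases t <;> simp_all [Shape, add]

theorem val_add (d : Nat) (s t : T) (hs : Shape d s) (ht : Shape d t) (xs : List Bool)
    (hx : xs.length = d) (f : Bool) : val (add s t) xs f = val s xs f + val t xs f := by
  induction d generalizing s t xs f with
  | zero => cases s <;> cases t <;> cases f <;> simp_all [Shape, add, val]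
  | succ d ih =>
    match xs, hx with
    | x :: xs, hx =>
      have hx' : xs.length = d := by simpa using hx
      cases s with
      | nil => simp [add, val]
      | leaf p n => exact hs.elim
      | node a b =>
        cases t with
        | nil => simp [add, val]
        | leaf p n => exact ht.elim
        | node a' b' =>
          simp only [add, val, ih a a' hs.1 ht.1 xs hx', ih b b' hs.2 ht.2 xs hx']
          ring

theorem shape_swap (d : Nat) (s : T) (hs : Shape d s) : Shape d (swap s) := by
  induction d generalizing s with
  | zero => cases s <;> simp_all [Shape, swap]
  | succ d ih => cases s <;> simp_all [Shape, swap]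

theorem val_swap (s : T) (xs : List Bool) (f : Bool) : val (swap s) xs f = val s xs (!f) := by
  induction s generalizing xs f with
  | nil => rfl
  | leaf p n => cases f <;> rfl
  | node a b iha ihb =>
    cases xs with
    | nil => rfl
    | cons x xs => simp [swap, val, iha, ihb]

theorem shape_step (d : Nat) (x : Bool) (t : T) (h : Shape (d + 1) t) : Shape d (step x t) := by
  cases t with
  | nil => cases d <;> trivial
  | leaf p n => exact h.elim
  | node a b =>
    cases x
    · exact shape_add d _ _ h.1 h.2
    · exact shape_add d _ _ h.1 (shape_swap d _ h.2)

theorem val_step (d : Nat) (x : Bool) (t : T) (h : Shape (d + 1) t) (xs : List Bool)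
    (hx : xs.length = d) : val (step x t) xs false = val t (x :: xs) false := by
  cases t with
  | nil => rfl
  | leaf p n => exact h.elim
  | node a b =>
    cases x
    · simp [step, val, val_add d _ _ h.1 h.2 xs hx]
    · simp [step, val, val_add d _ _ h.1 (shape_swap d _ h.2) xs hx, val_swap]

theorem chk_sound (d : Nat) (c : Nat) (t : T) (ht : Shape d t) (h : chk d c t = true)
    (xs : List Bool) (hx : xs.length = d) :
    Nat.land (val t xs false + (if true ∈ xs then base else c)) mask = mask := by
  induction d generalizing c t xs with
  | zero =>
    have hx' : xs = [] := List.length_eq_zero_iff.1 hx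
    subst hx'
    cases t with
    | nil => simp [chk] at h
    | leaf p n =>
      have := Nat.eq_of_beq_eq_true h
      simpa [val] using this
    | node a b => simp [chk] at h
  | succ d ih =>
    match xs, hx with
    | x :: xs, hx =>
      have hx' : xs.length = d := by simpa using hx
      rw [chk, Bool.and_eq_true] at h
      rw [← val_step d x t ht xs hx']
      cases x
      · simpa using ih c _ (shape_step d _ t ht) h.1 xs hx'
      · simpa using ih base _ (shape_step d _ t ht) h.2 xs hx'

theorem shape_single (q : Nat × Nat) (hs : List Bool) : Shape hs.length (single q hs) := by
  induction hs with
  | nil => trivial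
  | cons h hs ih => cases h <;> simp [single, Shape, ih]

theorem val_single (q : Nat × Nat) (hs xs : List Bool) (hx : xs.length = hs.length) (f : Bool) :
    val (single q hs) xs f = bif (f ^^ dot hs xs) then q.2 else q.1 := by
  induction hs generalizing xs f with
  | nil => simp [single, val, dot]
  | cons h hs ih =>
    match xs, hx with
    | x :: xs, hx =>
      have hx' : xs.length = hs.length := by simpa using hx
      cases h <;> simp [single, val, dot, ih xs hx']

theorem length_bits (k c : Nat) : (bits k c).length = k := by
  induction k generalizing c with
  | zero => rfl
  | succ k ih => simp [bits, ih]

theorem dot_append (a b c d : List Bool) (h : a.length = c.length) :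
    dot (a ++ b) (c ++ d) = (dot a c ^^ dot b d) := by
  induction a generalizing c with
  | nil =>
    have : c = [] := List.length_eq_zero_iff.1 h.symm
    subst this
    simp [dot]
  | cons x a ih =>
    match c, h with
    | y :: c, h => simp [dot, ih c (by simpa using h)]

/-- Weight of the codeword with message `xs`. -/
def wt (cs : List Nat) (xs : List Bool) : Nat :=
  (cs.map (fun c => bif dot (bits 28 c) xs then 1 else 0)).sum

theorem shape_build (cs : List Nat) : Shape 13 (build cs) := by
  induction cs with
  | nil => trivial
  | cons c cs ih =>
    refine shape_add 13 _ _ ?_ ih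
    have := shape_single (pn ((bits 28 c).drop 13)) ((bits 28 c).take 13)
    rwa [List.length_take, length_bits] at this

theorem val_build (k : Nat) (hk : k = 15) (cs : List Nat) (xs : List Bool) (hx : xs.length = 13) :
    val (build cs) xs false = enc k (fun ys => wt cs (xs ++ ys)) := by
  induction cs with
  | nil => simp [build, val, wt, enc_zero]
  | cons c cs ih =>
    have hs := shape_single (pn ((bits 28 c).drop 13)) ((bits 28 c).take 13)
    have hl : ((bits 28 c).take 13).length = 13 := by rw [List.length_take, length_bits]; rfl
    have hl' : ((bits 28 c).drop 13).length = k := by rw [List.length_drop, length_bits, hk]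
    rw [hl] at hs
    rw [build, val_add 13 _ _ hs (shape_build cs) xs hx, ih,
      val_single _ _ _ (by rw [hx, hl]), pn_eq, hl']
    have hw : ∀ ys, wt (c :: cs) (xs ++ ys) =
        (bif (dot ((bits 28 c).take 13) xs ^^ dot ((bits 28 c).drop 13) ys) then 1 else 0)
          + wt cs (xs ++ ys) := by
      intro ys
      rw [← dot_append _ _ _ _ (by rw [hx, hl]), List.take_append_drop]
      simp [wt]
    simp only [hw]
    rw [← enc_add]
    refine congrArg (fun z => z + enc k (fun ys => wt cs (xs ++ ys))) ?_
    cases dot ((bits 28 c).take 13) xs <;> simp [Bool.cond_not]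

theorem wt_le (cs : List Nat) (xs : List Bool) : wt cs xs ≤ cs.length := by
  induction cs with
  | nil => simp [wt]
  | cons c cs ih =>
    have : wt (c :: cs) xs = (bif dot (bits 28 c) xs then 1 else 0) + wt cs xs := by simp [wt]
    rw [this, List.length_cons]
    cases dot (bits 28 c) xs <;> simp <;> omega

theorem chk_succ (d c : Nat) (t : T) (h0 : chk d c (step false t) = true)
    (h1 : chk d base (step true t) = true) : chk (d + 1) c t = true := by
  rw [chk, h0, h1]; rfl

attribute [irreducible] base mask tree chk cols

theorem chk_all : chk 13 (Nat.add base 27) tree = true :=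
  chk_succ 12 _ _
    (chk_succ 11 _ _ (chk_succ 10 _ _ chk_000 chk_001) (chk_succ 10 _ _ chk_010 chk_011))
    (chk_succ 11 _ _ (chk_succ 10 _ _ chk_100 chk_101) (chk_succ 10 _ _ chk_110 chk_111))

theorem base_eq (k : Nat) (hk : k = 15) : base = enc k (fun _ => 101) := by
  have h : base = rep k 101 := by rw [hk, base]
  rw [h, rep_eq]

theorem mask_eq (k : Nat) (hk : k = 15) : mask = Nat.mul 128 (ones k) := by
  have h : mask = rep k 128 := by rw [hk, mask]
  rw [h, rep]

theorem tree_eq : tree = build cols := tree.eq_1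

theorem cols_length : cols.length = 100 := by rw [cols]; rfl

theorem good_of' (k : Nat) (hk : k = 15) (g : List Bool → Nat) (hg : ∀ ys, g ys < 256)
    (h : Nat.land (enc k g) mask = mask) : ∀ ys, ys.length = k → 128 ≤ g ys := by
  rw [mask_eq k hk] at h
  exact good_of k g hg h

theorem wt_ge (xs ys : List Bool) (hx : xs.length = 13) (hy : ys.length = 15)
    (h : true ∈ xs ++ ys) : 27 ≤ wt cols (xs ++ ys) := by
  obtain ⟨k, hk⟩ : ∃ k : Nat, k = 15 := ⟨15, rfl⟩
  have h1 := chk_sound 13 _ tree (tree_eq ▸ shape_build cols) chk_all xs hx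
  rw [tree_eq, val_build k hk cols xs hx] at h1
  have hb := base_eq k hk
  have hw : ∀ zs, wt cols zs ≤ 100 := fun zs => cols_length ▸ wt_le cols zs
  by_cases hm : true ∈ xs
  · rw [if_pos hm, hb, enc_add] at h1
    have := good_of' k hk _ (fun zs => by have := hw (xs ++ zs); omega) h1 ys (hy.trans hk.symm)
    omega
  · have hm' : true ∈ ys := by
      rcases List.mem_append.1 h with h | h
      · exact absurd h hm
      · exact h
    have hc : Nat.add base 27 = enc k (fun zs => 101 + if true ∈ zs then 0 else 27) := by
      change base + 27 = _
      rw [← enc_add, enc_delta, ← hb]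
    rw [if_neg hm, hc, enc_add] at h1
    have := good_of' k hk _ (fun zs => by have := hw (xs ++ zs); split_ifs <;> omega) h1 ys (hy.trans hk.symm)
    simp only [hm', if_true] at this
    omega

theorem wt_ge' (zs : List Bool) (hz : zs.length = 28) (h : true ∈ zs) : 27 ≤ wt cols zs := by
  have := wt_ge (zs.take 13) (zs.drop 13) (by simp [hz])
    (by simp [hz])
    (by rwa [List.take_append_drop])
  rwa [List.take_append_drop] at this

/-- Bits as elements of the field with two elements. -/
def toZ (b : Bool) : ZMod 2 := bif b then 1 else 0

theorem dot_ofFn (n : Nat) (l : List Bool) (hl : l.length = n) (m : Fin n → ZMod 2) :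
    ∑ j : Fin n, toZ (l.getD j false) * m j
      = toZ (dot l (List.ofFn (fun j => decide (m j = 1)))) := by
  induction n generalizing l with
  | zero =>
    rw [List.length_eq_zero_iff.1 hl]
    simp [dot, toZ]
  | succ n ih =>
    match l, hl with
    | a :: l, hl =>
      rw [Fin.sum_univ_succ, List.ofFn_succ, dot]
      have := ih l (by simpa using hl) (fun j => m j.succ)
      simp only [Fin.val_succ, List.getD_cons_succ, Fin.val_zero, List.getD_cons_zero]
      rw [this]
      generalize dot l _ = b
      generalize m 0 = z
      clear this ih hl
      revert a b z
      decide

/-- The encoding map. -/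
def phi : (Fin 28 → ZMod 2) →ₗ[ZMod 2] (Fin 100 → ZMod 2) where
  toFun m i := ∑ j : Fin 28, toZ ((bits 28 (cols.get (i.cast cols_length.symm))).getD j false) * m j
  map_add' m m' := by
    funext i
    simp [mul_add, Finset.sum_add_distrib]
  map_smul' c m := by
    funext i
    simp [Finset.mul_sum, mul_left_comm]

theorem norm_phi (m : Fin 28 → ZMod 2) :
    hammingNorm (phi m) = wt cols (List.ofFn (fun j => decide (m j = 1))) := by
  have h : ∀ i : Fin 100, phi m i
      = toZ (dot (bits 28 (cols.get (i.cast cols_length.symm))) (List.ofFn (fun j => decide (m j = 1)))) := fun i =>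
    dot_ofFn 28 _ (length_bits _ _) m
  have h2 : ∀ b : Bool, (if toZ b ≠ 0 then 1 else 0) = (bif b then 1 else 0 : Nat) := by decide
  rw [hammingNorm, Finset.card_filter]
  simp only [h, h2]
  rw [wt]
  generalize List.ofFn (fun j => decide (m j = 1)) = zs
  rw [← Fin.sum_univ_fun_getElem cols (fun c => bif dot (bits 28 c) zs then 1 else 0)]
  exact Fintype.sum_equiv (finCongr cols_length.symm) _ _ (fun i => rfl)

theorem norm_ge (m : Fin 28 → ZMod 2) (hm : m ≠ 0) : 27 ≤ hammingNorm (phi m) := by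
  rw [norm_phi]
  apply wt_ge' _ (by simp)
  obtain ⟨j, hj⟩ := Function.ne_iff.1 hm
  rw [List.mem_ofFn]
  refine ⟨j, ?_⟩
  have : ∀ z : ZMod 2, z ≠ 0 → decide (z = 1) = true := by decide
  exact this _ hj

theorem phi_inj : Function.Injective phi := by
  rw [← LinearMap.ker_eq_bot, LinearMap.ker_eq_bot']
  intro m hm
  by_contra h
  have := norm_ge m h
  rw [hm, hammingNorm_zero] at this
  omega

end CodeSearch

/-- there exists an `𝔽₂`-linear code of length 100, dimension 28
and minimum distance at least 27. -/
theorem stmt13 :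
    ∃ C : Submodule (ZMod 2) (Fin 100 → ZMod 2),
      Module.finrank (ZMod 2) C = 28 ∧
      ∀ v ∈ C, v ≠ 0 → 27 ≤ hammingNorm v := by
  refine ⟨LinearMap.range CodeSearch.phi, ?_, ?_⟩
  · rw [LinearMap.finrank_range_of_inj CodeSearch.phi_inj]
    simp
  · rintro v ⟨m, rfl⟩ hv
    apply CodeSearch.norm_ge
    rintro rfl
    exact hv (map_zero _)
end

section
/- There exists an 𝔽_2-linear subspace C of 𝔽_2^{103} of dimension 29 such that every nonzero element of C has Hamming weight at least 28. -/
namespace Code103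

/-- The rows of a systematic generator matrix, as bit masks. -/
def rowN : List ℕ := [
  2162811069991055360167530889217,
  4325622139982110720335061778434,
  434614754663111994295830216708,
  869229509326223988591660433416,
  1738459018652447977183320866832,
  3857087893758037130370950529056,
  1454674642188181390949242437696,
  2909349284376362781898484875392,
  2633339992019038258164503838976,
  3919349129709305831497600139776,
  851023739349994349974475277312,
  1126515536156916037902712932352,
  2253031072313832075805425864704,
  2818698025658918867950020632576,
  4131932809772981387537782489088,
  3193263218633047420888565841920,
  2820777962830446887695363932160,
  3761215768468247703930708459520,
  4337651124548819067588417650688,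
  2416149294475855208619568201728,
  3144857117767550128814330249216,
  4784250956211313438426220789760,
  932450886095074929136906403840,
  1011931308351343314233779716096,
  2023862616702686628467559432192,
  4047725233405373256935118864384,
  1138966197618009810680965660672,
  2277932395236019621361931321344,
  4555864790472039242723862642688]

/-- The binary expansion of a bit mask, as a list of 103 bits. -/
def toBits (r : ℕ) : List Bool := (List.range 103).map (fun j => Nat.testBit r j)

/-- The rows of the generator matrix. -/
def rows : List (List Bool) := rowN.map toBits

/-- Sum of two words. -/
def bx (a b : List Bool) : List Bool := List.zipWith xor a b

/-- The zero word. -/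
def zw : List Bool := List.replicate 103 false

/-- A table of words in bit-sliced form: `len` words, `full = 2 ^ len - 1`, and one natural number
per coordinate, whose `i`-th bit is that coordinate of the `i`-th word. -/
structure Tab where
  len : ℕ
  full : ℕ
  cols : List ℕ

/-- The table holding just the zero word. -/
def tab0 : Tab := ⟨1, 1, List.replicate 103 0⟩

/-- Complement a column if the bit is set. -/
def flipCol (full : ℕ) (b : Bool) (c : ℕ) : ℕ := cond b (Nat.xor full c) c

/-- Add the word `x` to all words of a table. -/
def flipCols (full : ℕ) (x : List Bool) (cols : List ℕ) : List ℕ :=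
  List.zipWith (flipCol full) x cols

/-- Concatenate `T` with the translate of `P` by `r`. -/
def comb (r : List Bool) (T P : Tab) : Tab :=
  ⟨Nat.add T.len P.len, Nat.lor T.full (Nat.shiftLeft P.full T.len),
    List.zipWith (fun c d => Nat.lor c (Nat.shiftLeft d T.len)) T.cols (flipCols P.full r P.cols)⟩

/-- Bit-sliced addition with carry. -/
def addS : List ℕ → List ℕ → ℕ → List ℕ
  | a :: as, b :: bs, c =>
      Nat.xor (Nat.xor a b) c :: addS as bs (Nat.lor (Nat.land a b) (Nat.land c (Nat.xor a b)))
  | _, _, c => [c]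

/-- Sum up to `2 ^ k - 1` columns. -/
def build : ℕ → List ℕ → List ℕ × List ℕ
  | 0, l => ([], l)
  | k + 1, l =>
    match build k l with
    | (a, l1) =>
      match build k l1 with
      | (b, []) => (addS a b 0, [])
      | (b, c :: l3) => (addS a b c, l3)

/-- All lanes have weight at least 28. -/
def ge28 (full : ℕ) : List ℕ × List ℕ → Bool
  | ([_, _, c2, c3, c4, c5, c6], []) =>
      Nat.beq (Nat.land full (Nat.lor (Nat.lor c6 c5) (Nat.land c4 (Nat.land c3 c2)))) full
  | _ => false

/-- All words of the table translated by `x` have weight at least 28. -/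
def leaf (T : Tab) (x : List Bool) : Bool := ge28 T.full (build 7 (flipCols T.full x T.cols))

/-- The complete check: `tk` holds the sums of at most `k` of the rows processed so far. -/
def go : Tab → Tab → Tab → Tab → Tab → Tab → List (List Bool) → Bool
  | _, _, _, _, _, _, [] => true
  | t1, t2, t3, t4, t5, t6, r :: rs =>
      and (leaf t6 r)
        (go (comb r t1 tab0) (comb r t2 t1) (comb r t3 t2) (comb r t4 t3) (comb r t5 t4)
          (comb r t6 t5) rs)

theorem go_true : go tab0 tab0 tab0 tab0 tab0 tab0 rows = true := by decide +kernel

/-! ### Words as vectors -/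

/-- The vector of a word. -/
def phi (w : List Bool) : Fin 103 → ZMod 2 := fun j => if w.getD j false then 1 else 0

/-- The weight of a word. -/
def wt (w : List Bool) : ℕ := (w.map Bool.toNat).sum

theorem phi_bx {a b : List Bool} (ha : a.length = 103) (hb : b.length = 103) :
    phi (bx a b) = phi a + phi b := by
  funext j
  have h1 : (j : ℕ) < a.length := by omega
  have h2 : (j : ℕ) < b.length := by omega
  simp only [phi, bx, Pi.add_apply, List.getD_eq_getElem?_getD, List.getElem?_zipWith,
    List.getElem?_eq_getElem h1, List.getElem?_eq_getElem h2, Option.getD_some]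
  cases a[(j : ℕ)] <;> cases b[(j : ℕ)] <;> decide

theorem wt_eq_sum (n : ℕ) (w : List Bool) (hw : w.length = n) :
    wt w = ∑ j : Fin n, (w.getD j false).toNat := by
  have h : w = List.ofFn (fun j : Fin n => w.getD j false) := by
    apply List.ext_getElem
    · simp [hw]
    · intro i h1 h2
      simp [List.getElem?_eq_getElem h1]
  conv_lhs => rw [h]
  simp only [wt, List.map_ofFn, List.sum_ofFn, Function.comp]

theorem hammingNorm_phi {w : List Bool} (hw : w.length = 103) : hammingNorm (phi w) = wt w := by
  rw [wt_eq_sum 103 w hw, hammingNorm, Finset.card_filter]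
  apply Finset.sum_congr rfl
  intro j _
  have h : phi w j = if w.getD j false then 1 else 0 := rfl
  rw [h]
  generalize w.getD j false = b
  cases b <;> simp

/-! ### Bit-sliced tables -/

/-- The `i`-th word of a table. -/
def lane (cols : List ℕ) (i : ℕ) : List Bool := cols.map (fun c => c.testBit i)

theorem tb_xor (a b i : ℕ) : (Nat.xor a b).testBit i = (a.testBit i ^^ b.testBit i) :=
  Nat.testBit_xor a b i

theorem tb_and (a b i : ℕ) : (Nat.land a b).testBit i = (a.testBit i && b.testBit i) :=
  Nat.testBit_and a b i

theorem tb_or (a b i : ℕ) : (Nat.lor a b).testBit i = (a.testBit i || b.testBit i) :=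
  Nat.testBit_or a b i

theorem tb_shl (a k i : ℕ) :
    (Nat.shiftLeft a k).testBit i = (decide (k ≤ i) && a.testBit (i - k)) :=
  Nat.testBit_shiftLeft a

theorem lane_flip (full : ℕ) (i : ℕ) (hf : full.testBit i = true) :
    ∀ (x : List Bool) (cols : List ℕ), lane (flipCols full x cols) i = bx x (lane cols i)
  | [], _ => by simp [lane, flipCols, bx]
  | _ :: _, [] => by simp [lane, flipCols, bx]
  | b :: x, c :: cols => by
    have ih := lane_flip full i hf x cols
    simp only [lane, flipCols, bx, List.zipWith_cons_cons, List.map_cons, List.cons.injEq] at ih ⊢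
    refine ⟨?_, ih⟩
    cases b
    · simp [flipCol]
    · simp [flipCol, tb_xor, hf]

theorem lane_flip_zero (full : ℕ) (i : ℕ) (hf : full.testBit i = false) :
    ∀ (x : List Bool) (cols : List ℕ), (∀ c ∈ cols, c.testBit i = false) →
      ∀ c ∈ flipCols full x cols, c.testBit i = false
  | [], _, _ => by simp [flipCols]
  | _ :: _, [], _ => by simp [flipCols]
  | b :: x, c :: cols, h => by
    have ih := lane_flip_zero full i hf x cols (fun d hd => h d (List.mem_cons_of_mem _ hd))
    have hc := h c (List.mem_cons_self)
    intro d hd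
    simp only [flipCols, List.zipWith_cons_cons, List.mem_cons] at hd
    rcases hd with rfl | hd
    · cases b <;> simp [flipCol, tb_xor, hf, hc]
    · exact ih d hd

/-- `T` is well formed. -/
structure WF (T : Tab) : Prop where
  hfull : ∀ i, T.full.testBit i = decide (i < T.len)
  hlen : T.cols.length = 103
  hzero : ∀ i, T.len ≤ i → ∀ c ∈ T.cols, c.testBit i = false

/-- `T` contains all sums of at most `t` rows of `D`. -/
structure Good (D : List (List Bool)) (t : ℕ) (T : Tab) : Prop extends WF T where
  hmem : ∀ l : List (List Bool), l.Sublist D → l.length ≤ t → ∃ i < T.len, phi (lane T.cols i) = (l.map phi).sum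

theorem getD_replicate (n j : ℕ) : (List.replicate n false).getD j false = false := by
  simp only [List.getD_eq_getElem?_getD, List.getElem?_replicate]
  split <;> rfl

theorem phi_zw : phi zw = 0 := by
  funext j
  have h : phi zw j = if (List.replicate 103 false).getD j false then 1 else 0 := rfl
  rw [h, getD_replicate]
  rfl

theorem wf_tab0 : WF tab0 where
  hfull i := by
    cases i with
    | zero => rfl
    | succ n =>
      have h : Nat.testBit 1 (n + 1) = false := by simp [Nat.testBit_succ]
      simpa [tab0] using h
  hlen := by simp [tab0]
  hzero i _ c hc := by
    simp only [tab0, List.mem_replicate] at hc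
    simp [hc.2]

theorem tab0_mem : ∃ i < tab0.len, phi (lane tab0.cols i) = 0 := by
  refine ⟨0, by simp [tab0], ?_⟩
  rw [← phi_zw]
  simp only [tab0, lane, zw, List.map_replicate, Nat.zero_testBit]

theorem good_tab0_nil (t : ℕ) : Good [] t tab0 where
  toWF := wf_tab0
  hmem l hl _ := by
    rw [List.sublist_nil] at hl
    subst hl
    simpa using tab0_mem

theorem good_tab0_zero (D : List (List Bool)) : Good D 0 tab0 where
  toWF := wf_tab0
  hmem l _ h := by
    have : l = [] := List.length_eq_zero_iff.mp (by omega)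
    subst this
    simpa using tab0_mem

theorem lane_zip (i k : ℕ) : ∀ (a b : List ℕ), a.length = b.length →
    (i < k → lane (List.zipWith (fun c d => Nat.lor c (Nat.shiftLeft d k)) a b) i = lane a i) ∧
    (k ≤ i → (∀ c ∈ a, c.testBit i = false) →
      lane (List.zipWith (fun c d => Nat.lor c (Nat.shiftLeft d k)) a b) i = lane b (i - k))
  | [], [], _ => by simp [lane]
  | [], _ :: _, h => by simp at h
  | _ :: _, [], h => by simp at h
  | c :: a, d :: b, h => by
    have ih := lane_zip i k a b (by simpa using h)
    simp only [lane, List.zipWith_cons_cons, List.map_cons, List.cons.injEq] at ih ⊢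
    constructor
    · intro hi
      refine ⟨?_, ih.1 hi⟩
      simp [tb_or, tb_shl, hi]
    · intro hi hz
      refine ⟨?_, ih.2 hi (fun e he => hz e (List.mem_cons_of_mem _ he))⟩
      simp [tb_or, tb_shl, hi, hz c List.mem_cons_self]

theorem lane_length (cols : List ℕ) (i : ℕ) : (lane cols i).length = cols.length := by
  simp [lane]

theorem good_comb {D : List (List Bool)} {t : ℕ} {r : List Bool} {T P : Tab}
    (hr : r.length = 103) (hT : Good D (t + 1) T) (hP : Good D t P) :
    Good (r :: D) (t + 1) (comb r T P) := by
  have hfl : (flipCols P.full r P.cols).length = 103 := by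
    simp only [flipCols, List.length_zipWith, hr, hP.hlen, Nat.min_self]
  have hlen : T.cols.length = (flipCols P.full r P.cols).length := by rw [hfl, hT.hlen]
  have hL : (comb r T P).len = T.len + P.len := rfl
  refine ⟨⟨?_, ?_, ?_⟩, ?_⟩
  · intro i
    have : (comb r T P).full = Nat.lor T.full (Nat.shiftLeft P.full T.len) := rfl
    rw [this, hL, tb_or, tb_shl, hT.hfull, hP.hfull]
    by_cases h1 : i < T.len
    · simp [h1]; omega
    · by_cases h2 : i < T.len + P.len
      · have : i - T.len < P.len := by omega
        simp [this, h2]; omega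
      · have : ¬ (i - T.len < P.len) := by omega
        simp [h1, this, h2]
  · simp only [comb, List.length_zipWith, hfl, hT.hlen, Nat.min_self]
  · intro i hi
    rw [hL] at hi
    have h1 := (lane_zip i T.len T.cols _ hlen).2 (by omega) (hT.hzero i (by omega))
    have hf : P.full.testBit (i - T.len) = false := by
      rw [hP.hfull]; simp; omega
    have h2 := lane_flip_zero P.full (i - T.len) hf r P.cols (hP.hzero _ (by omega))
    intro c hc
    have h3 : c.testBit i ∈ lane (comb r T P).cols i := List.mem_map_of_mem hc
    have h4 : lane (comb r T P).cols i = lane (flipCols P.full r P.cols) (i - T.len) := h1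
    rw [h4, lane, List.mem_map] at h3
    obtain ⟨d, hd, hd2⟩ := h3
    rw [← hd2, h2 d hd]
  · intro l hl hlt
    rw [List.sublist_cons_iff] at hl
    rcases hl with hl | ⟨l', rfl, hl'⟩
    · obtain ⟨i, hi, h⟩ := hT.hmem l hl hlt
      refine ⟨i, by rw [hL]; omega, ?_⟩
      rw [← h]
      congr 1
      exact (lane_zip i T.len T.cols _ hlen).1 hi
    · obtain ⟨i, hi, h⟩ := hP.hmem l' hl' (by simpa using hlt)
      refine ⟨T.len + i, by rw [hL]; omega, ?_⟩
      have h1 := (lane_zip (T.len + i) T.len T.cols _ hlen).2 (by omega)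
        (hT.hzero _ (by omega))
      have h4 : lane (comb r T P).cols (T.len + i) =
        lane (flipCols P.full r P.cols) (T.len + i - T.len) := h1
      have hf : P.full.testBit i = true := by
        rw [hP.hfull]; simpa using hi
      rw [h4, Nat.add_sub_cancel_left, lane_flip _ _ hf, phi_bx hr (by rw [lane_length, hP.hlen]),
        h, List.map_cons, List.sum_cons]

/-! ### Bit-sliced counting -/

/-- The value of lane `i` of a bit-sliced number. -/
def val (i : ℕ) : List ℕ → ℕ
  | [] => 0
  | c :: cs => (c.testBit i).toNat + 2 * val i cs

theorem val_addS (i : ℕ) : ∀ (a b : List ℕ) (c : ℕ), a.length = b.length →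
    val i (addS a b c) = val i a + val i b + (c.testBit i).toNat
  | [], [], c, _ => by simp [addS, val]
  | [], _ :: _, _, h => by simp at h
  | _ :: _, [], _, h => by simp at h
  | x :: a, y :: b, c, h => by
    have ih := val_addS i a b (Nat.lor (Nat.land x y) (Nat.land c (Nat.xor x y))) (by simpa using h)
    simp only [addS, val, ih, tb_or, tb_and, tb_xor]
    cases x.testBit i <;> cases y.testBit i <;> cases c.testBit i <;> simp <;> omega

theorem length_addS : ∀ (a b : List ℕ) (c : ℕ), a.length = b.length →
    (addS a b c).length = a.length + 1
  | [], [], c, _ => by simp [addS]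
  | [], _ :: _, _, h => by simp at h
  | _ :: _, [], _, h => by simp at h
  | x :: a, y :: b, c, h => by
    have ih := length_addS a b (Nat.lor (Nat.land x y) (Nat.land c (Nat.xor x y))) (by simpa using h)
    simp only [addS, List.length_cons, ih]

theorem build_spec (i : ℕ) : ∀ (k : ℕ) (l : List ℕ),
    (build k l).1.length = k ∧ val i (build k l).1 + wt (lane (build k l).2 i) = wt (lane l i)
  | 0, l => by simp [build, val]
  | k + 1, l => by
    have h1 := build_spec i k l
    have h2 := build_spec i k (build k l).2
    rw [build]
    rcases hb : build k l with ⟨a, l1⟩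
    rw [hb] at h1 h2
    simp only at h1 h2 ⊢
    rcases hb2 : build k l1 with ⟨b, l2⟩
    rw [hb2] at h2
    have hab : a.length = b.length := by rw [h1.1, h2.1]
    cases l2 with
    | nil =>
      simp only [length_addS _ _ _ hab, val_addS _ _ _ _ hab, h1.1, true_and]
      simp [lane, wt] at h1 h2 ⊢
      omega
    | cons c l3 =>
      simp only [length_addS _ _ _ hab, val_addS _ _ _ _ hab, h1.1, true_and]
      simp [lane, wt] at h1 h2 ⊢
      omega

theorem ge28_spec (full i : ℕ) (hf : full.testBit i = true) (p : List ℕ × List ℕ)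
    (h : ge28 full p = true) : 28 ≤ val i p.1 ∧ p.2 = [] := by
  unfold ge28 at h
  split at h
  · rename_i c0 c1 c2 c3 c4 c5 c6
    refine ⟨?_, rfl⟩
    have h' := Nat.eq_of_beq_eq_true h
    have h2 := congrArg (fun n => n.testBit i) h'
    simp only [tb_and, tb_or, hf, Bool.true_and] at h2
    simp only [val]
    revert h2
    cases c2.testBit i <;> cases c3.testBit i <;> cases c4.testBit i <;>
      cases c5.testBit i <;> cases c6.testBit i <;> simp <;> omega
  · simp at h

theorem leaf_spec {T : Tab} (hT : WF T) {x : List Bool} (hx : x.length = 103)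
    (h : leaf T x = true) {i : ℕ} (hi : i < T.len) :
    28 ≤ hammingNorm (phi x + phi (lane T.cols i)) := by
  have hf : T.full.testBit i = true := by rw [hT.hfull]; simpa using hi
  have h1 := ge28_spec _ i hf _ h
  have h2 := (build_spec i 7 (flipCols T.full x T.cols)).2
  rw [h1.2, lane_flip _ _ hf] at h2
  have hl : (lane T.cols i).length = 103 := by rw [lane_length, hT.hlen]
  rw [← phi_bx hx hl, hammingNorm_phi (by simp [bx, hx, hl]), ← h2]
  exact le_trans h1.1 (Nat.le_add_right _ _)

theorem go_spec (rs : List (List Bool)) : ∀ (D : List (List Bool)) (t1 t2 t3 t4 t5 t6 : Tab),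
    (∀ r ∈ rs, r.length = 103) →
    Good D 1 t1 → Good D 2 t2 → Good D 3 t3 → Good D 4 t4 → Good D 5 t5 → Good D 6 t6 →
    go t1 t2 t3 t4 t5 t6 rs = true →
    ∀ l m : List (List Bool), l.Sublist D → m.Sublist rs → m ≠ [] → l.length + m.length ≤ 7 →
      28 ≤ hammingNorm ((l.map phi).sum + (m.map phi).sum) := by
  induction rs with
  | nil =>
    intro _ _ _ _ _ _ _ _ _ _ _ _ _ _ _ l m _ hm hm0
    exact absurd (List.sublist_nil.mp hm) hm0
  | cons r rs ihrs =>
    intro D t1 t2 t3 t4 t5 t6 hlen h1 h2 h3 h4 h5 h6 h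
    intro l m hl hm hm0 hlm
    have hr : r.length = 103 := hlen r List.mem_cons_self
    have h' : leaf t6 r = true ∧ go (comb r t1 tab0) (comb r t2 t1) (comb r t3 t2) (comb r t4 t3)
        (comb r t5 t4) (comb r t6 t5) rs = true := (Bool.and_eq_true_iff).mp h
    have ih := ihrs (r :: D) _ _ _ _ _ _ (fun s hs => hlen s (List.mem_cons_of_mem _ hs))
      (good_comb hr h1 (good_tab0_zero D)) (good_comb hr h2 h1) (good_comb hr h3 h2)
      (good_comb hr h4 h3) (good_comb hr h5 h4) (good_comb hr h6 h5) h'.2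
    rw [List.sublist_cons_iff] at hm
    rcases hm with hm | ⟨m', rfl, hm'⟩
    · exact ih l m (hl.trans (List.sublist_cons_self _ _)) hm hm0 hlm
    · by_cases hm'0 : m' = []
      · subst hm'0
        obtain ⟨i, hi, hi2⟩ := h6.hmem l hl (by simp at hlm; omega)
        have := leaf_spec h6.toWF hr h'.1 hi
        rw [hi2] at this
        simpa [add_comm] using this
      · have := ih (r :: l) m' (List.cons_sublist_cons.mpr hl) hm' hm'0
          (by simp at hlm ⊢; omega)
        simp only [List.map_cons, List.sum_cons] at this ⊢
        rw [add_left_comm, ← add_assoc]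
        exact this

theorem rows_length : ∀ r ∈ rows, r.length = 103 := by
  intro r hr
  simp only [rows, List.mem_map] at hr
  obtain ⟨a, _, rfl⟩ := hr
  simp [toBits]

theorem low_spec (m : List (List Bool)) (hm : m.Sublist rows) (h0 : m ≠ []) (h7 : m.length ≤ 7) :
    28 ≤ hammingNorm ((m.map phi).sum) := by
  have := go_spec rows [] tab0 tab0 tab0 tab0 tab0 tab0 rows_length (good_tab0_nil _)
    (good_tab0_nil _) (good_tab0_nil _) (good_tab0_nil _) (good_tab0_nil _) (good_tab0_nil _)
    go_true [] m (List.Sublist.refl _) hm h0 (by simpa using h7)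
  simpa using this

/-! ### The code -/

/-- The `i`-th row. -/
def rowF (i : Fin 29) : List Bool := rows.getD i []

/-- The generators. -/
def gen (i : Fin 29) : Fin 103 → ZMod 2 := phi (rowF i)

/-- The code. -/
def code : Submodule (ZMod 2) (Fin 103 → ZMod 2) := Submodule.span (ZMod 2) (Set.range gen)

/-- Positions of the information set. -/
def posN (k : ℕ) : ℕ := if k < 15 then k else k + 36

/-- Positions of the information set. -/
def pos (k : Fin 29) : Fin 103 := ⟨posN k, by unfold posN; split <;> omega⟩

theorem rows_eq : rows = (List.finRange 29).map rowF := by decide +kernel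

theorem sys_bool : ∀ i k : Fin 29, (rowF i).getD (posN k) false = decide (i = k) := by
  decide +kernel

theorem gen_pos (i k : Fin 29) : gen i (pos k) = if i = k then 1 else 0 := by
  have h : gen i (pos k) = if (rowF i).getD (posN k) false then 1 else 0 := rfl
  rw [h, sys_bool]
  by_cases hik : i = k <;> simp [hik]

theorem sum_gen_pos (c : Fin 29 → ZMod 2) (k : Fin 29) : (∑ i, c i • gen i) (pos k) = c k := by
  rw [Finset.sum_apply]
  simp [gen_pos]

theorem gen_li : LinearIndependent (ZMod 2) gen := by
  rw [Fintype.linearIndependent_iff]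
  intro c hc k
  rw [← sum_gen_pos c k, hc]
  rfl

theorem finrank_code : Module.finrank (ZMod 2) code = 29 := by
  rw [code, finrank_span_eq_card gen_li, Fintype.card_fin]

theorem row_mem {r : List Bool} (hr : r ∈ rows) : phi r ∈ code := by
  rw [rows_eq, List.mem_map] at hr
  obtain ⟨i, _, rfl⟩ := hr
  exact Submodule.subset_span ⟨i, rfl⟩

/-! ### Cyclic shifts -/

/-- Shift both circulant blocks by `g`. -/
def shN (g i : ℕ) : ℕ :=
  if i < 51 then (i + g) % 51 else if i < 102 then 51 + (i - 51 + g) % 51 else i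

theorem shN_lt (g : ℕ) {i : ℕ} (hi : i < 103) : shN g i < 103 := by
  unfold shN; split_ifs <;> omega

/-- Shift both circulant blocks by `g`. -/
def sh (g : ℕ) (i : Fin 103) : Fin 103 := ⟨shN g i, shN_lt g i.2⟩

/-- The shift of a word by one place. -/
def shiftB (w : List Bool) : List Bool := (List.range 103).map (fun j => w.getD (shN 1 j) false)

/-- The linear combination of words with given coefficients. -/
def selS : List Bool → List (List Bool) → List Bool
  | b :: bs, r :: rs => cond b (bx r (selS bs rs)) (selS bs rs)
  | _, _ => zw

/-- The coefficients of a code word. -/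
def coeffs (w : List Bool) : List Bool := (List.range 29).map (fun k => w.getD (posN k) false)

theorem shift_check : ∀ r ∈ rows, shiftB r = selS (coeffs (shiftB r)) rows := by decide +kernel

theorem selS_length (rs : List (List Bool)) : ∀ (bs : List Bool),
    (∀ r ∈ rs, r.length = 103) → (selS bs rs).length = 103 := by
  induction rs with
  | nil =>
    intro bs _
    cases bs <;> exact List.length_replicate
  | cons r rs ih =>
    intro bs h
    cases bs with
    | nil => exact List.length_replicate
    | cons b bs =>
      have h1 := ih bs (fun s hs => h s (List.mem_cons_of_mem _ hs))
      cases b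
      · exact h1
      · have : selS (true :: bs) (r :: rs) = List.zipWith xor r (selS bs rs) := rfl
        rw [this, List.length_zipWith, h1, h r List.mem_cons_self, Nat.min_self]

theorem selS_mem (rs : List (List Bool)) : ∀ (bs : List Bool),
    (∀ r ∈ rs, r.length = 103) → (∀ r ∈ rs, phi r ∈ code) → phi (selS bs rs) ∈ code := by
  have hz : phi zw ∈ code := by rw [phi_zw]; exact code.zero_mem
  induction rs with
  | nil =>
    intro bs _ _
    cases bs <;> exact hz
  | cons r rs ih =>
    intro bs h hc
    cases bs with
    | nil => exact hz
    | cons b bs =>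
      have h0 : ∀ s ∈ rs, s.length = 103 := fun s hs => h s (List.mem_cons_of_mem _ hs)
      have h1 := ih bs h0 (fun s hs => hc s (List.mem_cons_of_mem _ hs))
      cases b
      · exact h1
      · have : selS (true :: bs) (r :: rs) = bx r (selS bs rs) := rfl
        rw [this, phi_bx (h r List.mem_cons_self) (selS_length rs bs h0)]
        exact code.add_mem (hc r List.mem_cons_self) h1

theorem getD_map_range (f : ℕ → Bool) (n j : ℕ) (hj : j < n) :
    ((List.range n).map f).getD j false = f j := by
  rw [List.getD_eq_getElem?_getD, List.getElem?_map, List.getElem?_range hj]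
  rfl

theorem phi_shiftB (w : List Bool) : phi (shiftB w) = phi w ∘ sh 1 := by
  funext j
  have h : phi (shiftB w) j =
    if ((List.range 103).map (fun j => w.getD (shN 1 j) false)).getD j false then 1 else 0 := rfl
  rw [h, getD_map_range _ _ _ j.2]
  rfl

theorem shift_gen (i : Fin 29) : gen i ∘ sh 1 ∈ code := by
  have hr : rowF i ∈ rows := by
    rw [rows_eq]; exact List.mem_map_of_mem (List.mem_finRange i)
  rw [gen, ← phi_shiftB, shift_check _ hr]
  exact selS_mem rows _ rows_length (fun r => row_mem)

theorem shift_mem {v : Fin 103 → ZMod 2} (hv : v ∈ code) : v ∘ sh 1 ∈ code := by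
  have h : code ≤ code.comap (LinearMap.funLeft (ZMod 2) (ZMod 2) (sh 1)) := by
    conv_lhs => rw [code]
    rw [Submodule.span_le]
    rintro _ ⟨i, rfl⟩
    exact shift_gen i
  exact h hv

theorem sh_succ (g : ℕ) (i : Fin 103) : sh (g + 1) i = sh g (sh 1 i) := by
  apply Fin.ext
  simp only [sh, shN]
  have := i.2
  split_ifs <;> omega

theorem shift_mem' (g : ℕ) {v : Fin 103 → ZMod 2} (hv : v ∈ code) : v ∘ sh g ∈ code := by
  induction g with
  | zero =>
    have : sh 0 = id := by
      funext i
      apply Fin.ext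
      simp only [sh, shN, id]
      have := i.2
      split_ifs <;> omega
    rw [this]; exact hv
  | succ g ih =>
    have : v ∘ sh (g + 1) = (v ∘ sh g) ∘ sh 1 := by
      funext i
      exact congrArg v (sh_succ g i)
    rw [this]
    exact shift_mem ih

theorem sh_inj (g : ℕ) : Function.Injective (sh g) := by
  intro i j h
  have h' := congrArg Fin.val h
  simp only [sh, shN] at h'
  apply Fin.ext
  have := i.2
  have := j.2
  split_ifs at h' <;> omega

theorem hammingNorm_shift (g : ℕ) (v : Fin 103 → ZMod 2) :
    hammingNorm (v ∘ sh g) = hammingNorm v := by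
  have hb : Function.Bijective (sh g) := Finite.injective_iff_bijective.mp (sh_inj g)
  simp only [hammingNorm, Finset.card_filter, Function.comp]
  exact hb.sum_comp (fun i => if v i ≠ 0 then 1 else 0)

/-! ### Averaging -/

theorem sum_rot (f : ℕ → ℕ) (k : ℕ) :
    ∑ g ∈ Finset.range 51, f ((k + g) % 51) = ∑ g ∈ Finset.range 51, f g := by
  apply Finset.sum_bij (fun g _ => (k + g) % 51)
  · intro g _
    exact Finset.mem_range.mpr (Nat.mod_lt _ (by norm_num))
  · intro a ha b hb h
    rw [Finset.mem_range] at ha hb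
    omega
  · intro b hb
    rw [Finset.mem_range] at hb
    refine ⟨(b + 51 - k % 51) % 51, Finset.mem_range.mpr (Nat.mod_lt _ (by norm_num)), ?_⟩
    omega
  · intro _ _
    rfl

/-- The indicator of the support. -/
def ind (v : Fin 103 → ZMod 2) (j : ℕ) : ℕ :=
  if h : j < 103 then (if v ⟨j, h⟩ ≠ 0 then 1 else 0) else 0

theorem hammingNorm_ind (v : Fin 103 → ZMod 2) :
    hammingNorm v = ∑ j ∈ Finset.range 103, ind v j := by
  rw [hammingNorm, Finset.card_filter, ← Fin.sum_univ_eq_sum_range]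
  apply Finset.sum_congr rfl
  intro j _
  simp only [ind, j.2, dite_true]

theorem shN_posN_low (g : ℕ) {k : ℕ} (h : k < 15) : shN g (posN k) = (k + g) % 51 := by
  rw [posN, if_pos h, shN, if_pos (by omega)]

theorem shN_posN_high (g : ℕ) {k : ℕ} (h : ¬ k < 15) (hk : k < 29) :
    shN g (posN k) = 51 + (k - 15 + g) % 51 := by
  have h' : k + 36 - 51 = k - 15 := by omega
  rw [posN, if_neg h, shN, if_neg (by omega), if_pos (by omega), h']

theorem orbit_sum (v : Fin 103 → ZMod 2) {k : ℕ} (hk : k < 29) :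
    ∑ g ∈ Finset.range 51, ind v (shN g (posN k)) =
      if k < 15 then (∑ g ∈ Finset.range 51, ind v g)
      else ∑ g ∈ Finset.range 51, ind v (51 + g) := by
  by_cases h : k < 15
  · rw [if_pos h, ← sum_rot (ind v) k]
    exact Finset.sum_congr rfl (fun g _ => by rw [shN_posN_low g h])
  · rw [if_neg h, ← sum_rot (fun g => ind v (51 + g)) (k - 15)]
    exact Finset.sum_congr rfl (fun g _ => by rw [shN_posN_high g h hk])

theorem exists_shift (v : Fin 103 → ZMod 2) (hv : hammingNorm v ≤ 27) :
    ∃ g, ∑ k : Fin 29, (if v (sh g (pos k)) ≠ 0 then 1 else 0) ≤ 7 := by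
  by_contra! hcon
  have hN : ∀ g, ∑ k : Fin 29, (if v (sh g (pos k)) ≠ 0 then 1 else 0) =
      ∑ k ∈ Finset.range 29, ind v (shN g (posN k)) := by
    intro g
    rw [← Fin.sum_univ_eq_sum_range (fun k => ind v (shN g (posN k)))]
    apply Finset.sum_congr rfl
    intro k _
    have : shN g (posN k) < 103 := (sh g (pos k)).2
    simp only [ind, this, dite_true]
    rfl
  have h1 : ∑ g ∈ Finset.range 51, 8 ≤
      ∑ g ∈ Finset.range 51, ∑ k ∈ Finset.range 29, ind v (shN g (posN k)) := by
    apply Finset.sum_le_sum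
    intro g _
    rw [← hN]
    exact hcon g
  rw [Finset.sum_comm] at h1
  have h2 : ∀ k ∈ Finset.range 29, ∑ g ∈ Finset.range 51, ind v (shN g (posN k)) =
      if k < 15 then (∑ g ∈ Finset.range 51, ind v g)
      else ∑ g ∈ Finset.range 51, ind v (51 + g) :=
    fun k hk => orbit_sum v (Finset.mem_range.mp hk)
  rw [Finset.sum_congr rfl h2] at h1
  have h4 : hammingNorm v = (∑ g ∈ Finset.range 51, ind v g) +
      (∑ g ∈ Finset.range 51, ind v (51 + g)) + ind v 102 := by
    rw [hammingNorm_ind, Finset.sum_range_succ, Finset.sum_range_add _ 51 51]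
  generalize (∑ g ∈ Finset.range 51, ind v g) = W1 at h1 h4
  generalize (∑ g ∈ Finset.range 51, ind v (51 + g)) = W2 at h1 h4
  have h3 : ∑ k ∈ Finset.range 29, (if k < 15 then W1 else W2) = 15 * W1 + 14 * W2 := by
    simp [Finset.sum_range_succ]
    ring
  rw [h3] at h1
  simp only [Finset.sum_const, Finset.card_range, smul_eq_mul] at h1
  omega

/-! ### Conclusion -/

theorem sum_filter_list {ι V : Type*} [AddCommGroup V] [Module (ZMod 2) V]
    (c : ι → ZMod 2) (f : ι → V) (l : List ι) :
    (l.map (fun i => c i • f i)).sum = ((l.filter (fun i => c i ≠ 0)).map f).sum := by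
  induction l with
  | nil => rfl
  | cons a l ih =>
    by_cases h : c a = 0
    · simp [h, ih]
    · have h1 : c a = 1 := by
        revert h; generalize c a = x; revert x; decide
      simp [h1, ih]

theorem length_filter_list {ι : Type*} (c : ι → ZMod 2) (l : List ι) :
    (l.filter (fun i => c i ≠ 0)).length = (l.map (fun i => if c i ≠ 0 then 1 else 0)).sum := by
  induction l with
  | nil => rfl
  | cons a l ih =>
    by_cases h : c a = 0
    · simp [h] at ih ⊢
      exact ih
    · simp [h] at ih ⊢
      omega

theorem low_code {v : Fin 103 → ZMod 2} (hv : v ∈ code) (h0 : v ≠ 0)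
    (h7 : ∑ k : Fin 29, (if v (pos k) ≠ 0 then 1 else 0) ≤ 7) : 28 ≤ hammingNorm v := by
  rw [code, Submodule.mem_span_range_iff_exists_fun] at hv
  obtain ⟨c, rfl⟩ := hv
  simp only [sum_gen_pos] at h7
  rw [Fin.sum_univ_def, ← length_filter_list c] at h7
  have h1 : (∑ i, c i • gen i) =
      ((((List.finRange 29).filter (fun i => c i ≠ 0)).map rowF).map phi).sum := by
    rw [Fin.sum_univ_def, sum_filter_list c gen, List.map_map]
    rfl
  rw [h1] at h0 ⊢
  apply low_spec
  · rw [rows_eq]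
    exact List.Sublist.map _ List.filter_sublist
  · intro h
    rw [h] at h0
    exact h0 rfl
  · rw [List.length_map]
    exact h7

theorem code_dist {v : Fin 103 → ZMod 2} (hv : v ∈ code) (h0 : v ≠ 0) : 28 ≤ hammingNorm v := by
  by_contra! h
  obtain ⟨g, hg⟩ := exists_shift v (by omega)
  have h1 : 28 ≤ hammingNorm (v ∘ sh g) := by
    apply low_code (shift_mem' g hv) _ hg
    intro hz
    have := hammingNorm_shift g v
    rw [hz, hammingNorm_zero] at this
    exact h0 (hammingNorm_eq_zero.mp this.symm)
  rw [hammingNorm_shift] at h1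
  omega

end Code103

/-- there exists an `𝔽₂`-linear code of length 103, dimension 29
and minimum distance at least 28. -/
theorem stmt14 :
    ∃ C : Submodule (ZMod 2) (Fin 103 → ZMod 2),
      Module.finrank (ZMod 2) C = 29 ∧
      ∀ v ∈ C, v ≠ 0 → 28 ≤ hammingNorm v := by
  exact ⟨Code103.code, Code103.finrank_code, fun _ hv h0 => Code103.code_dist hv h0⟩
end
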